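/- arXiv:1312.2487 — 9 statements merged into one kernel-verified Lean document; each statement's English description precedes it below -/
import Mathlib

section
/- Let μ and ν be Borel probability measures on [0,∞) such that ψ_μ(z) = ψ_ν(z) for every z ∈ Ω = ℂ∖[0,∞). Then μ = ν. -/
open MeasureTheory Complex Set Filter

/-- The ψ-transform of a measure on `[0,∞)`: `ψ_μ(z) = ∫ xz/(1-xz) dμ(x)`. -/
noncomputable def psiT (μ : Measure ℝ) (z : ℂ) : ℂ :=
  ∫ x, ((x : ℂ) * z) / (1 - (x : ℂ) * z) ∂μ

/-- The domain `Ω = ℂ ∖ [0,∞)`. -/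
def OmegaDom : Set ℂ := {z : ℂ | ¬ (z.im = 0 ∧ 0 ≤ z.re)}

noncomputable def vv (x : ℝ) : ℝ := 1 - (1 + x)⁻¹

lemma vv_meas : Measurable vv := by unfold vv; fun_prop

lemma vv_bd {x : ℝ} (hx : 0 ≤ x) : ‖(vv x : ℂ)‖ ≤ 1 := by
  have h1 : (1 + x)⁻¹ ≤ 1 := inv_le_one_of_one_le₀ (by linarith)
  have h2 : 0 ≤ (1 + x)⁻¹ := by positivity
  rw [Complex.norm_real, Real.norm_eq_abs, abs_le]
  unfold vv
  constructor <;> linarith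

lemma ae_nonneg (μ : Measure ℝ) (hμ : μ (Set.Iio (0 : ℝ)) = 0) : ∀ᵐ x ∂μ, 0 ≤ x := by
  rw [ae_iff]; simpa [Set.Iio] using hμ

lemma moment_hasSum (μ : Measure ℝ) [IsProbabilityMeasure μ] (hμ : μ (Set.Iio (0 : ℝ)) = 0)
    (c : ℕ → ℂ) (hc : Summable (fun n => ‖c n‖)) (k : ℕ) (F : ℝ → ℂ)
    (hF : ∀ x, 0 ≤ x → HasSum (fun n => c n * (vv x : ℂ) ^ (n + k)) (F x)) :
    HasSum (fun n => c n * ∫ x, (vv x : ℂ) ^ (n + k) ∂μ) (∫ x, F x ∂μ) := by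
  have hm := vv_meas
  have := hasSum_integral_of_dominated_convergence (μ := μ)
    (F := fun n x => c n * (vv x : ℂ) ^ (n + k)) (f := F) (fun n _ => ‖c n‖)
    (fun n => by
      apply Measurable.aestronglyMeasurable
      fun_prop)
    (fun n => by
      filter_upwards [ae_nonneg μ hμ] with x hx
      rw [norm_mul, norm_pow]
      exact mul_le_of_le_one_right (norm_nonneg _) (pow_le_one₀ (norm_nonneg _) (vv_bd hx)))
    (Eventually.of_forall fun _ => hc)
    (integrable_const _)
    (by filter_upwards [ae_nonneg μ hμ] with x hx using hF x hx)
  simpa only [integral_const_mul] using this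

lemma psi_hasSum (μ : Measure ℝ) [IsProbabilityMeasure μ] (hμ : μ (Set.Iio (0 : ℝ)) = 0)
    (s : ℂ) (hs : ‖s‖ < 1) :
    HasSum (fun n => (-(1 + s) * (-s) ^ n) * ∫ x, (vv x : ℂ) ^ (n + 1) ∂μ)
      (psiT μ (-(1 + s))) := by
  apply moment_hasSum μ hμ
  · simp only [norm_mul, norm_pow]
    exact (summable_geometric_of_lt_one (norm_nonneg _) (by simpa using hs)).mul_left _
  · intro x hx
    have hv : ‖-s * (vv x : ℂ)‖ < 1 := by
      rw [norm_mul, norm_neg]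
      exact (mul_le_of_le_one_right (norm_nonneg _) (vv_bd hx)).trans_lt hs
    have h := (hasSum_geometric_of_norm_lt_one hv).mul_left (-(1 + s) * (vv x : ℂ))
    convert h using 1
    · rfl
    · funext n
      ring
    · have h0 : (1 + (x : ℂ)) ≠ 0 := by
        norm_cast
        positivity
      have h1 : 1 - -s * (vv x : ℂ) ≠ 0 := by
        intro h1
        rw [← sub_eq_zero.mp h1] at hv
        simp at hv
      have e : (vv x : ℂ) = x / (1 + x) := by
        unfold vv
        push_cast
        field_simp
        ring
      have h2 : 1 - (x : ℂ) * -(1 + s) = (1 + x) * (1 - -s * (vv x : ℂ)) := by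
        rw [e]; field_simp; ring
      rw [h2]
      rw [mul_comm (1 + (x : ℂ)), div_eq_iff (mul_ne_zero h1 h0)]
      have e' : (vv x : ℂ) * (1 + x) = x := by rw [e]; field_simp
      calc (x : ℂ) * -(1 + s) = -(1 + s) * ((vv x : ℂ) * (1 + x)) := by rw [e']; ring
        _ = -(1 + s) * (vv x : ℂ) * ((1 - -s * (vv x : ℂ))⁻¹ * (1 - -s * (vv x : ℂ))) * (1 + x) := by
          rw [inv_mul_cancel₀ h1]; ring
        _ = _ := by ring

lemma moments_eq (μ ν : Measure ℝ)
    [IsProbabilityMeasure μ] [IsProbabilityMeasure ν]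
    (hμ : μ (Set.Iio (0 : ℝ)) = 0) (hν : ν (Set.Iio (0 : ℝ)) = 0)
    (h : ∀ z ∈ OmegaDom, psiT μ z = psiT ν z) (n : ℕ) :
    ∫ x, (vv x : ℂ) ^ n ∂μ = ∫ x, (vv x : ℂ) ^ n ∂ν := by
  rcases n with _ | n
  · simp
  let d : ℕ → ℂ := fun n =>
    (-1) ^ n * (∫ x, (vv x : ℂ) ^ (n + 1) ∂μ - ∫ x, (vv x : ℂ) ^ (n + 1) ∂ν)
  have key : HasFPowerSeriesAt (0 : ℂ → ℂ) (FormalMultilinearSeries.ofScalars ℂ d) 0 := by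
    rw [hasFPowerSeriesAt_iff]
    filter_upwards [Metric.ball_mem_nhds (0 : ℂ) one_pos] with s hs
    have hs : ‖s‖ < 1 := by simpa using hs
    have hre : 0 < (1 + s).re := by
      have := (abs_le.mp (Complex.abs_re_le_norm s)).1
      simp only [Complex.add_re, Complex.one_re]
      linarith
    have hne : -(1 + s) ≠ 0 := by
      intro h0
      have := congrArg Complex.re h0
      rw [Complex.neg_re, Complex.zero_re] at this
      linarith
    have hO : -(1 + s) ∈ OmegaDom := by
      rintro ⟨-, h2⟩
      rw [Complex.neg_re] at h2
      linarith
    have hh := ((psi_hasSum μ hμ s hs).sub (psi_hasSum ν hν s hs)).mul_left (-(1 + s))⁻¹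
    rw [h _ hO, sub_self, mul_zero] at hh
    simp only [FormalMultilinearSeries.coeff_ofScalars, Pi.zero_apply]
    convert hh using 1
    · rfl
    funext n
    rw [← mul_sub, mul_assoc, inv_mul_cancel_left₀ hne, neg_pow s, smul_eq_mul]
    simp only [d]
    ring
  have h0 := key.eq_zero
  have h1 : d n = 0 := by
    rw [← FormalMultilinearSeries.coeff_ofScalars (𝕜 := ℂ) (p := d) (n := n), h0]
    rfl
  simp only [d, mul_eq_zero, pow_eq_zero_iff', neg_eq_zero, one_ne_zero, false_and, false_or] at h1
  exact sub_eq_zero.mp h1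

lemma charFun_hasSum (μ : Measure ℝ) [IsProbabilityMeasure μ] (hμ : μ (Set.Iio (0 : ℝ)) = 0)
    (t : ℝ) :
    HasSum (fun n => ((t * I) ^ n / (n.factorial : ℂ)) * ∫ x, (vv x : ℂ) ^ (n + 0) ∂μ)
      (charFun (μ.map vv) t) := by
  rw [charFun_apply_real, integral_map vv_meas.aemeasurable
    (Measurable.aestronglyMeasurable (by fun_prop))]
  apply moment_hasSum μ hμ
  · exact NormedSpace.norm_expSeries_div_summable (t * I : ℂ)
  · intro x _
    have := NormedSpace.expSeries_div_hasSum_exp (t * vv x * I : ℂ)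
    rw [← Complex.exp_eq_exp_ℂ] at this
    convert this using 1
    · rfl
    funext n
    rw [add_zero, mul_right_comm (t : ℂ), mul_pow _ (vv x : ℂ)]
    ring

/-- If two Borel probability measures on `[0,∞)` have the same `ψ`-transform on
`Ω = ℂ ∖ [0,∞)`, then they are equal. -/
theorem psi_transform_injective (μ ν : Measure ℝ)
    [IsProbabilityMeasure μ] [IsProbabilityMeasure ν]
    (hμ : μ (Set.Iio (0 : ℝ)) = 0) (hν : ν (Set.Iio (0 : ℝ)) = 0)
    (h : ∀ z ∈ OmegaDom, psiT μ z = psiT ν z) : μ = ν := by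
  have hm := vv_meas
  have hmap : μ.map vv = ν.map vv := by
    apply Measure.ext_of_charFun
    funext t
    have h1 := charFun_hasSum μ hμ t
    have h2 := charFun_hasSum ν hν t
    simp only [moments_eq μ ν hμ hν h] at h1
    exact h1.unique h2
  have hg : Measurable (fun y : ℝ => (1 - y)⁻¹ - 1) := by fun_prop
  have hc : (fun y : ℝ => (1 - y)⁻¹ - 1) ∘ vv = id := by
    funext x
    simp [vv]
  have := congrArg (Measure.map (fun y : ℝ => (1 - y)⁻¹ - 1)) hmap
  rwa [Measure.map_map hg hm, Measure.map_map hg hm, hc, Measure.map_id, Measure.map_id] at this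
end

section
/- Let ν, μ₁, μ₂, … be measures in M₊. Then μ_n converges weakly to ν if and only if the sequence of functions B_{μ_n} converges to B_ν uniformly on every compact subset of the domain Ω = ℂ∖[0,∞). -/
open MeasureTheory Complex Set Filter

/-- The η-transform: `η_μ(z) = ψ_μ(z)/(1+ψ_μ(z))`. -/
noncomputable def etaT (μ : Measure ℝ) (z : ℂ) : ℂ :=
  psiT μ z / (1 + psiT μ z)

/-- The B-transform: `B_μ(z) = z/η_μ(z)`. -/
noncomputable def BT (μ : Measure ℝ) (z : ℂ) : ℂ :=
  z / etaT μ z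

namespace BTransformAux

open unitInterval Topology

/-- The compactified parameter: `u(x) = 1/(1+x)`. -/
noncomputable def uI : C(ℝ, I) where
  toFun x := ⟨(1 + max x 0)⁻¹, by
    have : (0:ℝ) ≤ max x 0 := le_max_right _ _
    exact ⟨by positivity, inv_le_one_of_one_le₀ (by linarith)⟩⟩
  continuous_toFun := by
    refine Continuous.subtype_mk (Continuous.inv₀ (by fun_prop) ?_) _
    intro x
    have : (0:ℝ) ≤ max x 0 := le_max_right _ _
    positivity

lemma uI_coe {x : ℝ} (hx : 0 ≤ x) : ((uI x : I) : ℝ) = (1 + x)⁻¹ := by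
  simp [uI, max_eq_left hx]

lemma denomC_ne (z : ℂ) (hz : z ∈ OmegaDom) (u : I) :
    ((u : ℝ) : ℂ) - (1 - ((u : ℝ) : ℂ)) * z ≠ 0 := by
  intro h
  have hre := congrArg Complex.re h
  have him := congrArg Complex.im h
  simp at hre him
  have h0 := u.2.1
  have h1 := u.2.2
  rcases him with him | him
  · have : (u : ℝ) = 1 := by linarith
    rw [this] at hre
    simp at hre
  · apply hz
    refine ⟨him, ?_⟩
    by_contra hneg
    push Not at hneg
    have h3 := mul_nonneg (sub_nonneg.2 h1) (neg_pos.2 hneg).le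
    have h4 : (u : ℝ) = 0 := by linarith
    rw [h4] at hre
    linarith

noncomputable def HC : C(OmegaDom, C(I, ℂ)) :=
  ContinuousMap.curry
    ⟨fun p : OmegaDom × I =>
      ((1 - ((p.2 : ℝ) : ℂ)) * (p.1 : ℂ)) / (((p.2 : ℝ) : ℂ) - (1 - ((p.2 : ℝ) : ℂ)) * (p.1 : ℂ)), by
      refine Continuous.div (by fun_prop) (by fun_prop) ?_
      intro p
      exact denomC_ne _ p.1.2 _⟩

lemma HC_apply (z : OmegaDom) (u : I) : HC z u =
    ((1 - ((u : ℝ) : ℂ)) * (z : ℂ)) / (((u : ℝ) : ℂ) - (1 - ((u : ℝ) : ℂ)) * (z : ℂ)) := rfl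

lemma HC_uI (z : OmegaDom) {x : ℝ} (hx : 0 ≤ x) :
    HC z (uI x) = ((x : ℂ) * z) / (1 - (x : ℂ) * z) := by
  have hd := denomC_ne z z.2 (uI x)
  rw [HC_apply]
  rw [uI_coe hx] at *
  have h1 : (1 + (x : ℂ)) ≠ 0 := by
    have : (1 + x) ≠ 0 := by positivity
    exact_mod_cast this
  push_cast at *
  have e1 : ((1:ℂ) + x)⁻¹ - (1 - (1 + (x:ℂ))⁻¹) * z = (1 - x * z) / (1 + x) := by
    field_simp; ring
  have e2 : (1 - (1 + (x:ℂ))⁻¹) * z = (x * z) / (1 + x) := by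
    field_simp; ring
  rw [e1, e2, div_div_div_cancel_right₀ h1]

lemma ae_nonneg {μ : Measure ℝ} (h : μ (Set.Iio (0 : ℝ)) = 0) : ∀ᵐ x ∂μ, 0 ≤ x := by
  rw [ae_iff]
  convert h using 2
  ext x; simp

lemma psiT_eq {μ : Measure ℝ} (h : μ (Set.Iio (0 : ℝ)) = 0) (z : OmegaDom) :
    psiT μ z = ∫ x, HC z (uI x) ∂μ := by
  unfold psiT
  refine integral_congr_ae ?_
  filter_upwards [ae_nonneg h] with x hx
  rw [HC_uI z hx]

lemma integrable_comp {E : Type*} [NormedAddCommGroup E] [NormedSpace ℝ E]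
    [SecondCountableTopology E]
    (μ : Measure ℝ) [IsProbabilityMeasure μ] (f : C(I, E)) :
    Integrable (fun x => f (uI x)) μ := by
  refine Integrable.of_bound (C := ‖f‖)
    ((f.continuous.comp uI.continuous).aestronglyMeasurable) ?_
  exact Eventually.of_forall fun x => f.norm_coe_le_norm _

lemma lip {E : Type*} [NormedAddCommGroup E] [NormedSpace ℝ E]
    [SecondCountableTopology E]
    (μ : Measure ℝ) [IsProbabilityMeasure μ] (f g : C(I, E)) :
    ‖(∫ x, f (uI x) ∂μ) - ∫ x, g (uI x) ∂μ‖ ≤ ‖f - g‖ := by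
  rw [← integral_sub (integrable_comp μ f) (integrable_comp μ g)]
  have := norm_integral_le_of_norm_le_const (μ := μ) (f := fun x => f (uI x) - g (uI x))
    (C := ‖f - g‖) (Eventually.of_forall fun x => (f - g).norm_coe_le_norm (uI x))
  simpa using this

lemma eq_dirac {μ : Measure ℝ} [IsProbabilityMeasure μ] (h : ∀ᵐ x ∂μ, x = 0) :
    μ = Measure.dirac 0 := by
  have h1 : μ.map (fun x => x) = μ.map (fun _ => (0:ℝ)) := Measure.map_congr h
  simpa using h1

lemma psiT_ne {μ : Measure ℝ} [IsProbabilityMeasure μ] (h : μ (Set.Iio (0 : ℝ)) = 0)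
    (h0 : μ ≠ Measure.dirac 0) (z : OmegaDom) : psiT μ z ≠ 0 := by
  intro hpsi
  apply h0
  apply eq_dirac
  have hz : (z : ℂ) ≠ 0 := by
    intro hz
    have := z.2
    rw [hz] at this
    exact this (by simp)
  set c : ℝ := -(z : ℂ).re / (z : ℂ).im with hc
  have hcz : (z : ℂ).re + c * (z : ℂ).im ≤ 0 := by
    by_cases him : (z : ℂ).im = 0
    · have := z.2
      rw [hc, him]
      simp only [OmegaDom, Set.mem_ofPred_eq, not_and, not_le] at this
      have := this him
      simpa using this.le
    · rw [hc, div_mul_cancel₀ _ him]; simp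
  let w : ℂ := (1 + c * Complex.I) / z
  have hint := integrable_comp μ (HC z)
  have hI2 : Integrable (fun x => (w * HC z (uI x)).re) μ := (hint.const_mul w).re
  have hzero : ∫ x, (w * HC z (uI x)).re ∂μ = 0 := by
    have e : ∫ x, (w * HC z (uI x)).re ∂μ = (∫ x, w * HC z (uI x) ∂μ).re :=
      integral_re (hint.const_mul w)
    rw [e, integral_const_mul, ← psiT_eq h, hpsi]
    simp
  have key : ∀ x : ℝ, 0 ≤ x → (w * HC z (uI x)).re =
      x * (1 - x * ((z : ℂ).re + c * (z : ℂ).im)) / Complex.normSq (1 - (x : ℂ) * z) := by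
    intro x hx
    rw [HC_uI z hx]
    have : w * ((x : ℂ) * z / (1 - (x : ℂ) * z)) =
        (x * (1 + c * Complex.I)) / (1 - (x : ℂ) * z) := by
      simp only [w]; field_simp
    rw [this, Complex.div_re]
    simp
    ring
  have hns : ∀ x : ℝ, 0 < x → 0 < Complex.normSq (1 - (x : ℂ) * z) := by
    intro x hx
    rw [Complex.normSq_pos]
    intro hh
    apply z.2
    have hre := congrArg Complex.re hh
    have him := congrArg Complex.im hh
    simp at hre him
    refine ⟨by rcases him with him | him <;> [linarith; exact him], ?_⟩
    by_contra hneg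
    push Not at hneg
    nlinarith
  have hnn : 0 ≤ᵐ[μ] fun x => (w * HC z (uI x)).re := by
    filter_upwards [ae_nonneg h] with x hx
    rw [key x hx]
    have : 0 ≤ x * (1 - x * ((z : ℂ).re + c * (z : ℂ).im)) :=
      mul_nonneg hx (by nlinarith)
    exact div_nonneg this (Complex.normSq_nonneg _)
  have := (integral_eq_zero_iff_of_nonneg_ae hnn hI2).1 hzero
  filter_upwards [this, ae_nonneg h] with x hx hx0
  by_contra hne
  have hpos : 0 < x := lt_of_le_of_ne hx0 (Ne.symm hne)
  rw [key x hx0] at hx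
  have h2 : 0 < x * (1 - x * ((z : ℂ).re + c * (z : ℂ).im)) :=
    mul_pos hpos (by nlinarith)
  have := div_pos h2 (hns x hpos)
  exact this.ne' hx

lemma BT_eq {μ : Measure ℝ} [IsProbabilityMeasure μ] (h : μ (Set.Iio (0 : ℝ)) = 0)
    (h0 : μ ≠ Measure.dirac 0) (z : OmegaDom) : BT μ z = z * (1 + (psiT μ z)⁻¹) := by
  have := psiT_ne h h0 z
  unfold BT etaT
  rw [div_div_eq_mul_div]
  field_simp
  ring

lemma forward (ν : Measure ℝ) (μ : ℕ → Measure ℝ)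
    [IsProbabilityMeasure ν] [∀ n, IsProbabilityMeasure (μ n)]
    (hνs : ν (Set.Iio (0 : ℝ)) = 0) (hν0 : ν ≠ Measure.dirac 0)
    (hμs : ∀ n, (μ n) (Set.Iio (0 : ℝ)) = 0) (hμ0 : ∀ n, μ n ≠ Measure.dirac 0)
    (H : ∀ f : BoundedContinuousFunction ℝ ℝ,
        Tendsto (fun n => ∫ x, f x ∂(μ n)) atTop (nhds (∫ x, f x ∂ν)))
    (K : Set ℂ) (hK : K ⊆ OmegaDom) (hKc : IsCompact K) :
    TendstoUniformlyOn (fun n z => BT (μ n) z) (BT ν) atTop K := by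
  have hreal : ∀ f : C(I, ℝ), Tendsto (fun n => ∫ x, f (uI x) ∂(μ n)) atTop
      (nhds (∫ x, f (uI x) ∂ν)) := fun f =>
    H ((BoundedContinuousFunction.mkOfCompact f).compContinuous uI)
  have hpt : ∀ z : OmegaDom, Tendsto (fun n => psiT (μ n) z) atTop (nhds (psiT ν z)) := by
    intro z
    have hdec : ∀ (m : Measure ℝ) [IsProbabilityMeasure m], m (Set.Iio (0 : ℝ)) = 0 →
        psiT m z = ((∫ x, (⟨fun u => (HC z u).re, by fun_prop⟩ : C(I, ℝ)) (uI x) ∂m : ℝ) : ℂ) +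
          ((∫ x, (⟨fun u => (HC z u).im, by fun_prop⟩ : C(I, ℝ)) (uI x) ∂m : ℝ) : ℂ) * Complex.I := by
      intro m _ hm
      rw [psiT_eq hm]
      exact (integral_re_add_im (integrable_comp m (HC z))).symm
    rw [hdec ν hνs]
    simp_rw [fun n => hdec (μ n) (hμs n)]
    refine Tendsto.add ?_ (Tendsto.mul_const _ ?_)
    · exact (Complex.continuous_ofReal.tendsto _).comp (hreal _)
    · exact (Complex.continuous_ofReal.tendsto _).comp (hreal _)
  rw [← tendstoLocallyUniformlyOn_iff_tendstoUniformlyOn_of_compact hKc,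
    tendstoLocallyUniformlyOn_iff_filter]
  intro z0 hz0
  let Z0 : OmegaDom := ⟨z0, hK hz0⟩
  let Hf : ℂ → C(I, ℂ) := fun z => by
    classical exact if h : z ∈ OmegaDom then HC ⟨z, h⟩ else 0
  have hHf : ∀ z (h : z ∈ OmegaDom), Hf z = HC ⟨z, h⟩ := fun z h => by simp [Hf, h]
  have hcont : ContinuousOn Hf OmegaDom := by
    rw [continuousOn_iff_continuous_domRestrict]
    convert HC.continuous with z
    simp [Hf]
  have hHt : Tendsto Hf (𝓝[K] z0) (𝓝 (Hf z0)) := (hcont.mono hK) z0 hz0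
  have hmem : ∀ᶠ z in 𝓝[K] z0, z ∈ OmegaDom := by
    filter_upwards [self_mem_nhdsWithin] with z hz using hK hz
  have hdiff : ∀ (m : Measure ℝ) [IsProbabilityMeasure m], m (Set.Iio (0 : ℝ)) = 0 →
      ∀ z ∈ OmegaDom, ‖psiT m z - psiT m z0‖ ≤ ‖Hf z - Hf z0‖ := by
    intro m _ hm z hz
    have e1 := psiT_eq hm ⟨z, hz⟩
    have e2 := psiT_eq hm Z0
    simp only [Z0] at e1 e2
    rw [e1, e2, hHf z hz, hHf z0 (hK hz0)]
    exact lip m _ _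
  have hn0 : Tendsto (fun z => ‖Hf z - Hf z0‖) (𝓝[K] z0) (𝓝 0) := by
    have := (hHt.sub_const (Hf z0)).norm
    simpa using this
  have hψν : Tendsto (psiT ν) (𝓝[K] z0) (𝓝 (psiT ν z0)) := by
    rw [tendsto_iff_norm_sub_tendsto_zero]
    refine squeeze_zero' (Eventually.of_forall fun _ => norm_nonneg _) ?_ hn0
    filter_upwards [hmem] with z hz using hdiff ν hνs z hz
  have hψμ : Tendsto (fun p : ℕ × ℂ => psiT (μ p.1) p.2) (atTop ×ˢ 𝓝[K] z0)
      (𝓝 (psiT ν z0)) := by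
    have h1 : Tendsto (fun p : ℕ × ℂ => psiT (μ p.1) p.2 - psiT (μ p.1) z0)
        (atTop ×ˢ 𝓝[K] z0) (𝓝 0) := by
      rw [tendsto_zero_iff_norm_tendsto_zero]
      refine squeeze_zero' (Eventually.of_forall fun _ => norm_nonneg _) ?_
        (hn0.comp tendsto_snd)
      filter_upwards [tendsto_snd.eventually hmem] with p hp using hdiff _ (hμs _) _ hp
    have h2 : Tendsto (fun p : ℕ × ℂ => psiT (μ p.1) z0)
        (atTop ×ˢ 𝓝[K] z0) (𝓝 (psiT ν z0)) := (hpt Z0).comp tendsto_fst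
    simpa using h1.add h2
  have hne : psiT ν z0 ≠ 0 := psiT_ne hνs hν0 Z0
  have hid : Tendsto (fun z : ℂ => z) (𝓝[K] z0) (𝓝 z0) := tendsto_id'.2 nhdsWithin_le_nhds
  have hB1 : Tendsto (BT ν) (𝓝[K] z0) (𝓝 (z0 * (1 + (psiT ν z0)⁻¹))) := by
    refine (hid.mul ((hψν.inv₀ hne).const_add 1)).congr' ?_
    filter_upwards [hmem] with z hz using (BT_eq hνs hν0 ⟨z, hz⟩).symm
  have hB2 : Tendsto (fun p : ℕ × ℂ => BT (μ p.1) p.2) (atTop ×ˢ 𝓝[K] z0)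
      (𝓝 (z0 * (1 + (psiT ν z0)⁻¹))) := by
    refine ((hid.comp tendsto_snd).mul ((hψμ.inv₀ hne).const_add 1)).congr' ?_
    filter_upwards [tendsto_snd.eventually hmem] with p hp using
      (BT_eq (hμs _) (hμ0 _) ⟨p.2, hp⟩).symm
  rw [Metric.tendstoUniformlyOnFilter_iff]
  intro ε hε
  have hd := (hB1.comp (tendsto_snd (f := (atTop : Filter ℕ)))).dist hB2
  rw [dist_self] at hd
  exact hd.eventually (gt_mem_nhds hε)

lemma denomR_pos (t : Set.Ioi (0:ℝ)) (u : I) : 0 < (u : ℝ) + (1 - (u : ℝ)) * (t : ℝ) := by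
  have h0 := u.2.1
  have h1 := u.2.2
  have ht : (0:ℝ) < t := t.2
  rcases h0.lt_or_eq with h | h
  · have := mul_nonneg (sub_nonneg.2 h1) ht.le
    linarith
  · rw [← h]; simpa using ht

/-- `g_t(u) = u/(u+(1-u)t)`, i.e. `1/(1+tx)`. -/
noncomputable def GR : C(Set.Ioi (0:ℝ), C(I, ℝ)) :=
  ContinuousMap.curry
    ⟨fun p : Set.Ioi (0:ℝ) × I => (p.2 : ℝ) / ((p.2 : ℝ) + (1 - (p.2 : ℝ)) * (p.1 : ℝ)), by
      refine Continuous.div (by fun_prop) (by fun_prop) ?_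
      intro p
      exact (denomR_pos _ _).ne'⟩

lemma GR_apply (t : Set.Ioi (0:ℝ)) (u : I) :
    GR t u = (u : ℝ) / ((u : ℝ) + (1 - (u : ℝ)) * (t : ℝ)) := rfl

lemma GR_uI (t : Set.Ioi (0:ℝ)) {x : ℝ} (hx : 0 ≤ x) : GR t (uI x) = (1 + x * t)⁻¹ := by
  have ht : (0:ℝ) < t := t.2
  rw [GR_apply, uI_coe hx]
  have h1 : (1 + x) ≠ 0 := by positivity
  have h2 : 1 + x * t ≠ 0 := by positivity
  have e1 : (1 + x)⁻¹ + (1 - (1 + x)⁻¹) * (t:ℝ) = (1 + x * t) / (1 + x) := by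
    field_simp; ring
  rw [e1]; field_simp

def genS : Set C(I, ℝ) := insert 1 (Set.range GR)

lemma GR_mul_ne (s t : Set.Ioi (0:ℝ)) (h : (s:ℝ) ≠ t) :
    GR s * GR t = ((s:ℝ) - t)⁻¹ • ((s:ℝ) • GR s - (t:ℝ) • GR t) +
      ((1 - ((s:ℝ) - t)⁻¹ * (s - t)) • (1 : C(I, ℝ))) := by
  have hst : (s:ℝ) - t ≠ 0 := sub_ne_zero.2 h
  ext u
  have h1 := (denomR_pos s u).ne'
  have h2 := (denomR_pos t u).ne'
  simp only [ContinuousMap.mul_apply, ContinuousMap.add_apply, ContinuousMap.smul_apply,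
    ContinuousMap.sub_apply, GR_apply, smul_eq_mul, ContinuousMap.one_apply]
  field_simp
  ring

lemma mul_gen (a b : C(I, ℝ)) (ha : a ∈ genS) (hb : b ∈ genS) :
    a * b ∈ (Submodule.span ℝ genS).topologicalClosure := by
  have hsub : ∀ c ∈ genS, c ∈ (Submodule.span ℝ genS).topologicalClosure := fun c hc =>
    Submodule.le_topologicalClosure _ (Submodule.subset_span hc)
  rcases ha with rfl | ⟨s, rfl⟩
  · simpa using hsub b hb
  rcases hb with rfl | ⟨t, rfl⟩
  · simpa using hsub (GR s) (Or.inr ⟨s, rfl⟩)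
  have hne : ∀ t : Set.Ioi (0:ℝ), (s:ℝ) ≠ t →
      GR s * GR t ∈ (Submodule.span ℝ genS).topologicalClosure := by
    intro t h
    rw [GR_mul_ne s t h]
    exact add_mem (Submodule.smul_mem _ _ (sub_mem
      (Submodule.smul_mem _ _ (hsub _ (Or.inr ⟨s, rfl⟩)))
      (Submodule.smul_mem _ _ (hsub _ (Or.inr ⟨t, rfl⟩)))))
      (Submodule.smul_mem _ _ (hsub _ (Or.inl rfl)))
  by_cases h : (s:ℝ) = t
  · have hs : (0:ℝ) < s := s.2
    let q : ℕ → Set.Ioi (0:ℝ) := fun n => ⟨s + 1 / ((n:ℝ) + 1), by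
      have : (0:ℝ) < 1 / ((n:ℝ) + 1) := by positivity
      exact add_pos hs this⟩
    have hq : Tendsto q atTop (𝓝 t) := by
      rw [tendsto_subtype_rng]
      have := (tendsto_one_div_add_atTop_nhds_zero_nat (𝕜 := ℝ)).const_add (s:ℝ)
      rw [add_zero, h] at this
      rw [← h] at this
      simpa [q, h] using this
    have hc := ((GR.continuous.tendsto t).comp hq).const_mul (GR s)
    refine (Submodule.isClosed_topologicalClosure _).mem_of_tendsto hc
      (Eventually.of_forall fun n => hne _ ?_)
    have : (0:ℝ) < 1 / ((n:ℝ) + 1) := by positivity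
    simp only [q]
    linarith
  · exact hne t h

noncomputable def algA : Subalgebra ℝ C(I, ℝ) where
  carrier := (Submodule.span ℝ genS).topologicalClosure
  mul_mem' := by
    intro a b ha hb
    have hcl := Submodule.isClosed_topologicalClosure (Submodule.span ℝ genS)
    have := map_mem_closure₂ (f := fun a b : C(I, ℝ) => a * b) continuous_mul
      (s := (Submodule.span ℝ genS : Set C(I, ℝ))) (t := (Submodule.span ℝ genS : Set C(I, ℝ)))
      (u := ((Submodule.span ℝ genS).topologicalClosure : Set C(I, ℝ))) ha hb ?_
    · rwa [hcl.closure_eq] at this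
    · intro a ha b hb
      refine Submodule.span_induction₂
        (p := fun a b _ _ => a * b ∈ (Submodule.span ℝ genS).topologicalClosure)
        mul_gen ?_ ?_ ?_ ?_ ?_ ?_ ha hb
      · intro y _; simp
      · intro y _; simp
      · intro x y z _ _ _ h1 h2
        rw [add_mul]; exact add_mem h1 h2
      · intro x y z _ _ _ h1 h2
        rw [mul_add]; exact add_mem h1 h2
      · intro r x y _ _ h1
        rw [smul_mul_assoc]; exact Submodule.smul_mem _ _ h1
      · intro r x y _ _ h1
        rw [mul_smul_comm]; exact Submodule.smul_mem _ _ h1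
  add_mem' := fun ha hb => add_mem (S := Submodule ℝ C(I, ℝ)) ha hb
  algebraMap_mem' := by
    intro r
    rw [Algebra.algebraMap_eq_smul_one]
    exact Submodule.smul_mem _ _
      (Submodule.le_topologicalClosure _ (Submodule.subset_span (Or.inl rfl)))

lemma span_top (f : C(I, ℝ)) : f ∈ (Submodule.span ℝ genS).topologicalClosure := by
  have hsep : algA.SeparatesPoints := by
    intro x y hxy
    refine ⟨GR ⟨1, Set.mem_Ioi.2 one_pos⟩, ⟨GR ⟨1, Set.mem_Ioi.2 one_pos⟩, ?_, rfl⟩, ?_⟩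
    · exact Submodule.le_topologicalClosure _ (Submodule.subset_span (Or.inr ⟨_, rfl⟩))
    · rw [GR_apply, GR_apply]
      simp
      exact fun h => hxy (Subtype.ext h)
  have h1 := ContinuousMap.subalgebra_topologicalClosure_eq_top_of_separatesPoints algA hsep
  have h2 : f ∈ algA.topologicalClosure := by rw [h1]; trivial
  have h3 : f ∈ closure (algA : Set C(I, ℝ)) := h2
  have h4 : IsClosed (algA : Set C(I, ℝ)) :=
    Submodule.isClosed_topologicalClosure (Submodule.span ℝ genS)
  rw [h4.closure_eq] at h3
  exact h3

/-- Convergence on the generators gives convergence on all of `C(I, ℝ)`. -/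
lemma conv_all (ν : Measure ℝ) (μ : ℕ → Measure ℝ)
    [IsProbabilityMeasure ν] [∀ n, IsProbabilityMeasure (μ n)]
    (hg : ∀ t, Tendsto (fun n => ∫ x, GR t (uI x) ∂(μ n)) atTop (𝓝 (∫ x, GR t (uI x) ∂ν)))
    (f : C(I, ℝ)) :
    Tendsto (fun n => ∫ x, f (uI x) ∂(μ n)) atTop (𝓝 (∫ x, f (uI x) ∂ν)) := by
  have hspan : ∀ g ∈ Submodule.span ℝ genS,
      Tendsto (fun n => ∫ x, g (uI x) ∂(μ n)) atTop (𝓝 (∫ x, g (uI x) ∂ν)) := by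
    intro g hgm
    induction hgm using Submodule.span_induction with
    | mem g h =>
      rcases h with rfl | ⟨t, rfl⟩
      · simp
      · exact hg t
    | zero => simp
    | add a b _ _ ha hb =>
      have e : ∀ (m : Measure ℝ) [IsProbabilityMeasure m],
          ∫ x, (a + b) (uI x) ∂m = ∫ x, a (uI x) ∂m + ∫ x, b (uI x) ∂m := fun m _ =>
        integral_add (integrable_comp m a) (integrable_comp m b)
      simp_rw [fun n => e (μ n), e ν]
      exact ha.add hb
    | smul r a _ ha =>
      have e : ∀ (m : Measure ℝ), ∫ x, (r • a) (uI x) ∂m = r * ∫ x, a (uI x) ∂m := fun m =>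
        integral_const_mul r _
      simp_rw [e]
      exact ha.const_mul r
  rw [Metric.tendsto_atTop]
  intro ε hε
  have hf : f ∈ closure (Submodule.span ℝ genS : Set C(I, ℝ)) := span_top f
  obtain ⟨g, hgm, hfg⟩ := Metric.mem_closure_iff.1 hf (ε / 3) (by positivity)
  obtain ⟨N, hN⟩ := Metric.tendsto_atTop.1 (hspan g hgm) (ε / 3) (by positivity)
  refine ⟨N, fun n hn => ?_⟩
  have h1 := lip (μ n) f g
  have h2 := lip ν f g
  have h3 := hN n hn
  rw [dist_eq_norm] at hfg
  rw [Real.dist_eq] at *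
  rw [Real.norm_eq_abs] at h1 h2
  rw [abs_lt] at *
  rw [abs_le] at *
  constructor <;> linarith [h1.1, h1.2, h2.1, h2.2, h3.1, h3.2]

/-- `f · g_t` extends continuously to the compactification. -/
lemma exists_ext (f : BoundedContinuousFunction ℝ ℝ) (t : Set.Ioi (0:ℝ)) :
    ∃ F : C(I, ℝ), ∀ x : ℝ, 0 ≤ x → F (uI x) = f x * GR t (uI x) := by
  let F : I → ℝ := fun u => f ((u : ℝ)⁻¹ - 1) * GR t u
  have hF : Continuous F := by
    rw [continuous_iff_continuousAt]
    intro u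
    by_cases hu : (u : ℝ) = 0
    · have h0 : F u = 0 := by simp [F, GR_apply, hu]
      unfold ContinuousAt
      rw [h0]
      have hG : Tendsto (fun v => ‖f‖ * |GR t v|) (𝓝 u) (𝓝 0) := by
        have : Tendsto (fun v => ‖f‖ * |GR t v|) (𝓝 u) (𝓝 (‖f‖ * |GR t u|)) :=
          Continuous.tendsto (by fun_prop) u
        simpa [GR_apply, hu] using this
      refine squeeze_zero_norm (fun v => ?_) hG
      simp only [F, norm_mul, Real.norm_eq_abs]
      gcongr
      exact f.norm_coe_le_norm _
    · refine ContinuousAt.mul ?_ (GR t).continuous.continuousAt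
      refine f.continuous.continuousAt.comp (f := fun v : I => (v : ℝ)⁻¹ - 1) ?_
      exact (ContinuousAt.inv₀ continuous_subtype_val.continuousAt hu).sub continuousAt_const
  refine ⟨⟨F, hF⟩, fun x hx => ?_⟩
  simp only [ContinuousMap.coe_mk, F, uI_coe hx, inv_inv, add_sub_cancel_left]

lemma backward (ν : Measure ℝ) (μ : ℕ → Measure ℝ)
    [IsProbabilityMeasure ν] [∀ n, IsProbabilityMeasure (μ n)]
    (hνs : ν (Set.Iio (0 : ℝ)) = 0) (hν0 : ν ≠ Measure.dirac 0)
    (hμs : ∀ n, (μ n) (Set.Iio (0 : ℝ)) = 0) (hμ0 : ∀ n, μ n ≠ Measure.dirac 0)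
    (H : ∀ z ∈ OmegaDom, Tendsto (fun n => BT (μ n) z) atTop (𝓝 (BT ν z)))
    (f : BoundedContinuousFunction ℝ ℝ) :
    Tendsto (fun n => ∫ x, f x ∂(μ n)) atTop (𝓝 (∫ x, f x ∂ν)) := by
  have hg : ∀ t, Tendsto (fun n => ∫ x, GR t (uI x) ∂(μ n)) atTop
      (𝓝 (∫ x, GR t (uI x) ∂ν)) := by
    intro t
    have ht : (0:ℝ) < t := t.2
    let z : OmegaDom := ⟨-((t:ℝ):ℂ), by
      simp only [OmegaDom, Set.mem_ofPred_eq, not_and, not_le]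
      intro _; simpa using ht⟩
    have hz : (z : ℂ) = -((t:ℝ):ℂ) := rfl
    have hz0 : (z : ℂ) ≠ 0 := by
      rw [hz]; simpa using ht.ne'
    have hB := H z z.2
    rw [BT_eq hνs hν0 z] at hB
    simp_rw [fun n => BT_eq (hμs n) (hμ0 n) z] at hB
    have h1 := (hB.const_mul (z:ℂ)⁻¹).sub_const 1
    simp only [inv_mul_cancel_left₀ hz0, add_sub_cancel_left] at h1
    have h2 := h1.inv₀ (inv_ne_zero (psiT_ne hνs hν0 z))
    simp only [inv_inv] at h2
    have e : ∀ (m : Measure ℝ) [IsProbabilityMeasure m], m (Set.Iio (0 : ℝ)) = 0 →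
        ∫ x, GR t (uI x) ∂m = 1 + (psiT m z).re := by
      intro m _ hm
      have e1 : (psiT m z).re = ∫ x, (HC z (uI x)).re ∂m := by
        rw [psiT_eq hm]
        exact (integral_re (integrable_comp m (HC z))).symm
      have e2 : ∫ x, (1 + (HC z (uI x)).re) ∂m = 1 + ∫ x, (HC z (uI x)).re ∂m := by
        have hre : Integrable (fun x => (HC z (uI x)).re) m := (integrable_comp m (HC z)).re
        rw [integral_add (integrable_const _) hre]
        simp
      rw [e1, ← e2]
      refine integral_congr_ae ?_
      filter_upwards [ae_nonneg hm] with x hx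
      rw [GR_uI t hx, HC_uI z hx, hz]
      have e3 : (x:ℂ) * -((t:ℝ):ℂ) / (1 - (x:ℂ) * -((t:ℝ):ℂ)) =
          ((-(x * t) / (1 + x * t) : ℝ) : ℂ) := by
        push_cast; ring_nf
      rw [e3, Complex.ofReal_re]
      have : 1 + x * t ≠ 0 := by positivity
      field_simp
      ring
    rw [e ν hνs]
    simp_rw [fun n => e (μ n) (hμs n)]
    exact ((Complex.continuous_re.tendsto _).comp h2).const_add 1
  have hall := conv_all ν μ hg
  -- tightness
  have htight : Tendsto (fun k : ℕ => ∫ x, GR ⟨1 / ((k:ℝ) + 1), by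
      simp only [Set.mem_Ioi]; positivity⟩ (uI x) ∂ν) atTop (𝓝 (∫ _, (1:ℝ) ∂ν)) := by
    refine tendsto_integral_of_dominated_convergence (fun _ => (1:ℝ)) ?_ (integrable_const _) ?_ ?_
    · intro n
      exact (integrable_comp ν _).aestronglyMeasurable
    · intro n
      filter_upwards [ae_nonneg hνs] with x hx
      rw [GR_uI _ hx, Real.norm_eq_abs, abs_of_nonneg (by positivity)]
      apply inv_le_one_of_one_le₀
      have : 0 ≤ x * (1 / ((n:ℝ) + 1)) := by positivity
      simpa using this
    · filter_upwards [ae_nonneg hνs] with x hx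
      simp_rw [GR_uI _ hx]
      have := (((tendsto_one_div_add_atTop_nhds_zero_nat (𝕜 := ℝ)).const_mul x).const_add 1).inv₀
        (by simp)
      simpa using this
  rw [Metric.tendsto_atTop]
  intro ε hε
  set M : ℝ := ‖f‖ + 1 with hM
  have hMpos : 0 < M := by positivity
  obtain ⟨k, hk⟩ := (Metric.tendsto_atTop.1 htight (ε / (6 * M)) (by positivity))
  have hk := hk k le_rfl
  generalize_proofs hp at hk
  set t : Set.Ioi (0:ℝ) := ⟨1 / ((k:ℝ) + 1), hp⟩
  obtain ⟨F, hF⟩ := exists_ext f t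
  obtain ⟨N1, hN1⟩ := Metric.tendsto_atTop.1 (hall F) (ε / 2) (by positivity)
  obtain ⟨N2, hN2⟩ := Metric.tendsto_atTop.1 (hg t) (ε / (6 * M)) (by positivity)
  have hbd : ∀ (m : Measure ℝ) [IsProbabilityMeasure m], m (Set.Iio (0 : ℝ)) = 0 →
      |∫ x, f x ∂m - ∫ x, F (uI x) ∂m| ≤ M * (1 - ∫ x, GR t (uI x) ∂m) := by
    intro m _ hm
    have hfi : Integrable f m := f.integrable m
    rw [← integral_sub hfi (integrable_comp m F)]
    have e : M * (1 - ∫ x, GR t (uI x) ∂m) = ∫ x, M * (1 - GR t (uI x)) ∂m := by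
      rw [integral_const_mul, integral_sub (integrable_const _) (integrable_comp m _)]
      simp
    rw [e, ← Real.norm_eq_abs]
    refine norm_integral_le_of_norm_le
      (((integrable_const _).sub (integrable_comp m _)).const_mul M) ?_
    filter_upwards [ae_nonneg hm] with x hx
    have ht : (0:ℝ) < t := t.2
    have hle : GR t (uI x) ≤ 1 := by
      rw [GR_uI _ hx]
      apply inv_le_one_of_one_le₀
      have : 0 ≤ x * (t:ℝ) := by positivity
      linarith
    have e2 : f x - F (uI x) = f x * (1 - GR t (uI x)) := by rw [hF x hx]; ring
    rw [e2, norm_mul, Real.norm_eq_abs (1 - _), abs_of_nonneg (by linarith)]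
    refine mul_le_mul_of_nonneg_right ?_ (by linarith)
    have := f.norm_coe_le_norm x
    linarith
  refine ⟨max N1 N2, fun n hn => ?_⟩
  have h1 := hN1 n (le_trans (le_max_left _ _) hn)
  have h2 := hN2 n (le_trans (le_max_right _ _) hn)
  have h3 := hbd ν hνs
  have h4 := hbd (μ n) (hμs n)
  have hone : ∫ _, (1:ℝ) ∂ν = 1 := by simp
  rw [hone] at hk
  rw [Real.dist_eq] at *
  rw [abs_lt] at *
  rw [abs_le] at *
  have hδ : M * (ε / (6 * M)) = ε / 6 := by field_simp
  have h5 : M * (1 - ∫ x, GR t (uI x) ∂ν) ≤ ε / 6 := by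
    rw [← hδ]; exact mul_le_mul_of_nonneg_left (by linarith [hk.1]) hMpos.le
  have h6 : M * (1 - ∫ x, GR t (uI x) ∂(μ n)) < ε / 6 + ε / 6 := by
    rw [← hδ, ← mul_add]; exact mul_lt_mul_of_pos_left (by linarith [hk.1, h2.1]) hMpos
  constructor <;> linarith [h1.1, h1.2, h3.1, h3.2, h4.1, h4.2]

end BTransformAux

/-- For measures `ν, μ₁, μ₂, …` in `M₊` (probability measures on `[0,∞)` other than `δ₀`),
weak convergence `μ_n ⇒ ν` holds if and only if `B_{μ_n} → B_ν` uniformly on every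
compact subset of `Ω = ℂ ∖ [0,∞)`. -/
theorem weak_convergence_iff_B_transform (ν : Measure ℝ) (μ : ℕ → Measure ℝ)
    [IsProbabilityMeasure ν] [∀ n, IsProbabilityMeasure (μ n)]
    (hνs : ν (Set.Iio (0 : ℝ)) = 0) (hν0 : ν ≠ Measure.dirac 0)
    (hμs : ∀ n, (μ n) (Set.Iio (0 : ℝ)) = 0) (hμ0 : ∀ n, μ n ≠ Measure.dirac 0) :
    (∀ f : BoundedContinuousFunction ℝ ℝ,
        Tendsto (fun n => ∫ x, f x ∂(μ n)) atTop (nhds (∫ x, f x ∂ν)))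
      ↔ (∀ K : Set ℂ, K ⊆ OmegaDom → IsCompact K →
          TendstoUniformlyOn (fun n z => BT (μ n) z) (BT ν) atTop K) := by
  constructor
  · intro H K hK hKc
    exact BTransformAux.forward ν μ hνs hν0 hμs hμ0 H K hK hKc
  · intro H
    refine BTransformAux.backward ν μ hνs hν0 hμs hμ0 ?_
    intro z hz
    exact (H {z} (by simpa using hz) isCompact_singleton).tendsto_at (Set.mem_singleton z)
end

section
/- Let ν, μ₁, μ₂, … be Borel probability measures on [0,∞). If ψ_{μ_n}(y) → ψ_ν(y) as n → ∞ for every y ∈ (−∞,0), then the sequence {μ_n} is tight and μ_n converges weakly to ν. -/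
open MeasureTheory Complex Set Filter

open scoped NNReal BoundedContinuousFunction Topology

/-- The kernel `x ↦ 1/(1+sx)` on `[0,∞)`. -/
noncomputable def gK (s : ℝ≥0) : ℝ≥0 →ᵇ ℝ :=
  BoundedContinuousFunction.ofNormedAddCommGroup (fun x : ℝ≥0 => 1 / (1 + (s : ℝ) * (x : ℝ)))
    (by
      refine Continuous.div continuous_const (by fun_prop) (fun x => ?_)
      positivity) 1
    (by
      intro x
      have h1 : (0 : ℝ) ≤ (s : ℝ) * x := by positivity
      rw [Real.norm_of_nonneg (by positivity), div_le_one (by positivity)]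
      linarith)

lemma gK_apply (s x : ℝ≥0) : gK s x = 1 / (1 + (s : ℝ) * (x : ℝ)) := rfl

lemma gK_zero : gK 0 = 1 := by
  ext x; simp [gK_apply]

lemma gK_nonneg (s x : ℝ≥0) : 0 ≤ gK s x := by rw [gK_apply]; positivity

lemma gK_le_one (s x : ℝ≥0) : gK s x ≤ 1 := by
  have h1 : (0 : ℝ) ≤ (s : ℝ) * x := by positivity
  rw [gK_apply, div_le_one (by positivity)]
  linarith

lemma gK_norm_le (s : ℝ≥0) : ‖gK s‖ ≤ 1 := by
  refine (BoundedContinuousFunction.norm_le zero_le_one).2 fun x => ?_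
  rw [Real.norm_of_nonneg (gK_nonneg s x)]
  exact gK_le_one s x

lemma gK_mul_of_ne {s r : ℝ≥0} (h : s ≠ r) :
    gK s * gK r = ((s : ℝ) / (s - r)) • gK s - ((r : ℝ) / (s - r)) • gK r := by
  ext x
  have h0 : (s : ℝ) - r ≠ 0 := sub_ne_zero.2 (by exact_mod_cast h)
  have h1 : (1 + (s : ℝ) * x) ≠ 0 := by positivity
  have h2 : (1 + (r : ℝ) * x) ≠ 0 := by positivity
  simp only [BoundedContinuousFunction.coe_mul, Pi.mul_apply, BoundedContinuousFunction.coe_sub,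
    Pi.sub_apply, BoundedContinuousFunction.coe_smul, gK_apply, smul_eq_mul]
  field_simp
  ring

lemma gK_sub_norm_le {s : ℝ≥0} (hs : 0 < s) (d : ℝ≥0) :
    ‖gK s - gK (s + d)‖ ≤ (d : ℝ) / s := by
  have hs' : (0 : ℝ) < s := by exact_mod_cast hs
  refine (BoundedContinuousFunction.norm_le (by positivity)).2 fun x => ?_
  have h1 : (0 : ℝ) < (1 + (s : ℝ) * x) := by positivity
  have h2 : (0 : ℝ) < (1 + ((s : ℝ) + d) * x) := by positivity
  have e : (gK s - gK (s + d)) x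
      = d * x / ((1 + (s : ℝ) * x) * (1 + ((s : ℝ) + d) * x)) := by
    simp only [BoundedContinuousFunction.coe_sub, Pi.sub_apply, gK_apply, NNReal.coe_add]
    field_simp
    ring
  rw [e, Real.norm_of_nonneg (by positivity), div_le_div_iff₀ (by positivity) hs']
  have h3 : (s : ℝ) * x ≤ (1 + (s : ℝ) * x) * (1 + ((s : ℝ) + d) * x) := by
    have : (0 : ℝ) ≤ ((s : ℝ) + d) * x := by positivity
    have : (0 : ℝ) ≤ (s : ℝ) * x := by positivity
    nlinarith
  have hd : (0 : ℝ) ≤ d := d.2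
  nlinarith [mul_le_mul_of_nonneg_left h3 hd]

/-- The closed linear span of the kernels. -/
noncomputable def gW : Submodule ℝ (ℝ≥0 →ᵇ ℝ) :=
  (Submodule.span ℝ (Set.range gK)).topologicalClosure

lemma gK_mem (s : ℝ≥0) : gK s ∈ gW :=
  Submodule.le_topologicalClosure _ (Submodule.subset_span ⟨s, rfl⟩)

lemma gK_mul_mem (s r : ℝ≥0) : gK s * gK r ∈ gW := by
  by_cases h : s = r
  · subst h
    rcases eq_or_lt_of_le (zero_le : 0 ≤ s) with h0 | h0
    · rw [← h0, gK_zero, one_mul, ← gK_zero]; exact gK_mem 0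
    · have hcl : IsClosed (gW : Set (ℝ≥0 →ᵇ ℝ)) := Submodule.isClosed_topologicalClosure _
      change gK s * gK s ∈ (gW : Set (ℝ≥0 →ᵇ ℝ))
      rw [← hcl.closure_eq, Metric.mem_closure_iff]
      intro ε hε
      have hs' : (0 : ℝ) < s := by exact_mod_cast h0
      let d : ℝ≥0 := ⟨ε * s / 2, by positivity⟩
      have hd : (d : ℝ) = ε * s / 2 := rfl
      have hd0 : 0 < d := by
        rw [← NNReal.coe_pos, hd]; positivity
      have hne : s ≠ s + d := (lt_add_of_pos_right s hd0).ne
      refine ⟨gK s * gK (s + d), ?_, ?_⟩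
      · change gK s * gK (s + d) ∈ gW
        rw [gK_mul_of_ne hne]
        exact gW.sub_mem (gW.smul_mem _ (gK_mem _)) (gW.smul_mem _ (gK_mem _))
      · rw [dist_eq_norm, ← mul_sub]
        calc ‖gK s * (gK s - gK (s + d))‖ ≤ ‖gK s‖ * ‖gK s - gK (s + d)‖ := norm_mul_le _ _
          _ ≤ 1 * ((d : ℝ) / s) :=
            mul_le_mul (gK_norm_le s) (gK_sub_norm_le h0 d) (norm_nonneg _) zero_le_one
          _ = ε / 2 := by rw [hd]; field_simp
          _ < ε := by linarith
  · rw [gK_mul_of_ne h]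
    exact gW.sub_mem (gW.smul_mem _ (gK_mem _)) (gW.smul_mem _ (gK_mem _))

lemma gW_mul_mem {a b : ℝ≥0 →ᵇ ℝ} (ha : a ∈ gW) (hb : b ∈ gW) : a * b ∈ gW := by
  have key : ∀ a ∈ Submodule.span ℝ (Set.range gK), ∀ b ∈ Submodule.span ℝ (Set.range gK),
      a * b ∈ gW := by
    intro a ha b hb
    induction ha, hb using Submodule.span_induction₂ with
    | mem_mem x y hx hy =>
      obtain ⟨s, rfl⟩ := hx
      obtain ⟨r, rfl⟩ := hy
      exact gK_mul_mem s r
    | zero_left y hy => rw [zero_mul]; exact gW.zero_mem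
    | zero_right x hx => rw [mul_zero]; exact gW.zero_mem
    | add_left x y z _ _ _ h1 h2 => rw [add_mul]; exact gW.add_mem h1 h2
    | add_right x y z _ _ _ h1 h2 => rw [mul_add]; exact gW.add_mem h1 h2
    | smul_left r x y _ _ h => rw [smul_mul_assoc]; exact gW.smul_mem _ h
    | smul_right r x y _ _ h => rw [mul_smul_comm]; exact gW.smul_mem _ h
  have hcl : IsClosed (gW : Set (ℝ≥0 →ᵇ ℝ)) := Submodule.isClosed_topologicalClosure _
  have := map_mem_closure₂ (f := fun a b : ℝ≥0 →ᵇ ℝ => a * b)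
    (u := (gW : Set (ℝ≥0 →ᵇ ℝ))) (by exact continuous_mul) ha hb key
  rwa [hcl.closure_eq] at this

/-- `gW` as a star subalgebra. -/
noncomputable def gA : StarSubalgebra ℝ (ℝ≥0 →ᵇ ℝ) where
  carrier := gW
  mul_mem' := gW_mul_mem
  add_mem' := gW.add_mem
  algebraMap_mem' := fun r => by
    rw [Algebra.algebraMap_eq_smul_one, ← gK_zero]
    exact gW.smul_mem _ (gK_mem 0)
  star_mem' := fun {a} ha => by
    have : star a = a := by ext x; simp
    rw [this]; exact ha

lemma gA_sep : (gA.map (BoundedContinuousFunction.toContinuousMapStarₐ ℝ)).SeparatesPoints := by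
  intro x y hxy
  refine ⟨gK 1, ⟨_, ⟨gK 1, gK_mem 1, rfl⟩, rfl⟩, ?_⟩
  intro he
  apply hxy
  rw [gK_apply, gK_apply] at he
  have h1 : (0 : ℝ) < 1 + ((1 : ℝ≥0) : ℝ) * x := by positivity
  have h2 : (0 : ℝ) < 1 + ((1 : ℝ≥0) : ℝ) * y := by positivity
  rw [div_eq_div_iff h1.ne' h2.ne'] at he
  simp at he
  exact he.symm

lemma tendsto_of_mem_gW (ν : ProbabilityMeasure ℝ≥0) (μ : ℕ → ProbabilityMeasure ℝ≥0)
    (h : ∀ s : ℝ≥0, Tendsto (fun n => ∫ x, gK s x ∂(μ n : Measure ℝ≥0)) atTop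
      (𝓝 (∫ x, gK s x ∂(ν : Measure ℝ≥0)))) {f : ℝ≥0 →ᵇ ℝ} (hf : f ∈ gW) :
    Tendsto (fun n => ∫ x, f x ∂(μ n : Measure ℝ≥0)) atTop
      (𝓝 (∫ x, f x ∂(ν : Measure ℝ≥0))) := by
  have hspan : ∀ f ∈ Submodule.span ℝ (Set.range gK),
      Tendsto (fun n => ∫ x, f x ∂(μ n : Measure ℝ≥0)) atTop
        (𝓝 (∫ x, f x ∂(ν : Measure ℝ≥0))) := by
    intro f hf
    induction hf using Submodule.span_induction with
    | mem x hx => obtain ⟨s, rfl⟩ := hx; exact h s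
    | zero => simp
    | add f g _ _ h1 h2 =>
      have e : ∀ m : ProbabilityMeasure ℝ≥0, ∫ x, (f + g) x ∂(m : Measure ℝ≥0)
          = ∫ x, f x ∂(m : Measure ℝ≥0) + ∫ x, g x ∂(m : Measure ℝ≥0) := fun m =>
        integral_add (f.integrable _) (g.integrable _)
      simp only [e]
      exact h1.add h2
    | smul c f _ h1 =>
      have e : ∀ m : ProbabilityMeasure ℝ≥0, ∫ x, (c • f) x ∂(m : Measure ℝ≥0)
          = c * ∫ x, f x ∂(m : Measure ℝ≥0) := fun m => integral_const_mul c _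
      simp only [e]
      exact h1.const_mul c
  have hd : ∀ (m : ProbabilityMeasure ℝ≥0) (f g : ℝ≥0 →ᵇ ℝ),
      |∫ x, f x ∂(m : Measure ℝ≥0) - ∫ x, g x ∂(m : Measure ℝ≥0)| ≤ dist f g := by
    intro m f g
    rw [← integral_sub (f.integrable _) (g.integrable _), dist_eq_norm]
    have := (f - g).norm_integral_le_norm (m : Measure ℝ≥0)
    simpa using this
  rw [Metric.tendsto_atTop]
  intro ε hε
  obtain ⟨g, hg, hfg⟩ := Metric.mem_closure_iff.1 hf (ε / 3) (by positivity)
  obtain ⟨N, hN⟩ := Metric.tendsto_atTop.1 (hspan g hg) (ε / 3) (by positivity)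
  refine ⟨N, fun n hn => ?_⟩
  have h1 := hN n hn
  have h2 := hd (μ n) f g
  have h3 := hd ν f g
  rw [Real.dist_eq] at h1 ⊢
  rw [abs_le] at h2 h3
  rw [abs_lt] at h1 ⊢
  constructor <;> linarith

lemma tight_of_gK (ν : ProbabilityMeasure ℝ≥0) (μ : ℕ → ProbabilityMeasure ℝ≥0)
    (h : ∀ s : ℝ≥0, Tendsto (fun n => ∫ x, gK s x ∂(μ n : Measure ℝ≥0)) atTop
      (𝓝 (∫ x, gK s x ∂(ν : Measure ℝ≥0)))) :
    ∀ ε : ℝ, 0 < ε → ∃ K : Set ℝ≥0, IsCompact K ∧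
      ∀ n, (μ n : Measure ℝ≥0) Kᶜ ≤ ENNReal.ofReal ε := by
  intro ε hε
  have hlim : Tendsto (fun k : ℕ => ∫ x, gK (1 / ((k : ℝ≥0) + 1)) x ∂(ν : Measure ℝ≥0)) atTop
      (𝓝 (∫ _x, (1 : ℝ) ∂(ν : Measure ℝ≥0))) := by
    refine tendsto_integral_of_dominated_convergence (fun _ => 1) ?_ (by simp) ?_ ?_
    · exact fun k => (gK _).continuous.aestronglyMeasurable
    · refine fun k => ae_of_all _ fun x => ?_
      rw [Real.norm_of_nonneg (gK_nonneg _ x)]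
      exact gK_le_one _ x
    · refine ae_of_all _ fun x => ?_
      simp only [gK_apply]
      have h0 : Tendsto (fun k : ℕ => 1 + (1 / ((k : ℝ) + 1)) * (x : ℝ)) atTop (𝓝 (1 + 0 * x)) :=
        (tendsto_one_div_add_atTop_nhds_zero_nat.mul_const _).const_add 1
      have h1 := h0.inv₀ (by simp)
      simpa using h1
  simp only [integral_const, probReal_univ, smul_eq_mul, mul_one] at hlim
  obtain ⟨k, hk⟩ := (hlim.eventually_const_lt (show 1 - ε / 2 < 1 by linarith)).exists
  obtain ⟨N, hN⟩ := eventually_atTop.1 ((h _).eventually_const_lt hk)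
  have hsing : ∀ n, ∃ K : Set ℝ≥0, IsCompact K ∧
      (μ n : Measure ℝ≥0) Kᶜ ≤ ENNReal.ofReal ε := by
    intro n
    have h1 : IsTightMeasureSet {(μ n : Measure ℝ≥0)} := isTightMeasureSet_singleton
    obtain ⟨K, hK, hK'⟩ := isTightMeasureSet_iff_exists_isCompact_measure_compl_le.1 h1
      (ENNReal.ofReal ε) (by simpa using hε)
    exact ⟨K, hK, hK' _ rfl⟩
  choose K hK hK' using hsing
  refine ⟨Set.Icc 0 ((k : ℝ≥0) + 1) ∪ ⋃ n ∈ Finset.range N, K n,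
    isCompact_Icc.union ((Finset.range N).isCompact_biUnion fun n _ => hK n), fun n => ?_⟩
  by_cases hn : n < N
  · refine (measure_mono (Set.compl_subset_compl.2 ?_)).trans (hK' n)
    refine Set.subset_union_of_subset_right ?_ _
    exact Set.subset_biUnion_of_mem (u := K) (by simpa using hn)
  · have h1 := hN n (not_lt.1 hn)
    refine (measure_mono (Set.compl_subset_compl.2 Set.subset_union_left)).trans ?_
    set s : ℝ≥0 := 1 / ((k : ℝ≥0) + 1) with hs
    have hint : Integrable (fun x => 1 - gK s x) (μ n : Measure ℝ≥0) :=
      (integrable_const _).sub ((gK s).integrable _)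
    have hm := mul_meas_ge_le_integral_of_nonneg (μ := (μ n : Measure ℝ≥0))
      (f := fun x => 1 - gK s x) (ae_of_all _ fun x => sub_nonneg.2 (gK_le_one s x)) hint (1 / 2)
    rw [integral_sub (integrable_const _) ((gK s).integrable _)] at hm
    simp only [integral_const, probReal_univ, smul_eq_mul, mul_one] at hm
    have hsub : (Set.Icc 0 ((k : ℝ≥0) + 1))ᶜ ⊆ {x : ℝ≥0 | 1 / 2 ≤ 1 - gK s x} := by
      intro x hx
      have hx' : (k : ℝ≥0) + 1 < x := by
        by_contra hc
        exact hx ⟨zero_le, not_lt.1 hc⟩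
      have hx2 : (k : ℝ) + 1 < x := by exact_mod_cast hx'
      have hk0 : (0 : ℝ) < (k : ℝ) + 1 := by positivity
      have hsx : 1 ≤ (s : ℝ) * x := by
        have : (s : ℝ) = 1 / ((k : ℝ) + 1) := by rw [hs]; push_cast; rfl
        rw [this, one_div_mul_eq_div, le_div_iff₀ hk0]
        linarith
      have : gK s x ≤ 1 / 2 := by
        rw [gK_apply]
        exact one_div_le_one_div_of_le (by norm_num) (by linarith)
      change 1 / 2 ≤ 1 - gK s x
      linarith
    refine (measure_mono hsub).trans ?_
    rw [← ofReal_measureReal]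
    exact ENNReal.ofReal_le_ofReal (by linarith)

lemma psiT_eq (μ : Measure ℝ) [IsProbabilityMeasure μ] (hμ : μ (Set.Iio (0 : ℝ)) = 0)
    (s : ℝ≥0) :
    psiT μ ((-(s : ℝ) : ℝ) : ℂ)
      = (((∫ x, gK s x ∂(μ.map Real.toNNReal)) - 1 : ℝ) : ℂ) := by
  have hae : ∀ᵐ x ∂μ, 0 ≤ x := by
    rw [ae_iff]; simpa [Set.Iio] using hμ
  have hm : Measurable Real.toNNReal := measurable_real_toNNReal
  rw [integral_map hm.aemeasurable (gK s).continuous.aestronglyMeasurable]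
  have hint : Integrable (fun x => gK s (Real.toNNReal x)) μ :=
    Integrable.comp_measurable
      (haveI := Measure.isProbabilityMeasure_map (μ := μ) hm.aemeasurable
       (gK s).integrable _) hm
  have e : (∫ x, gK s (Real.toNNReal x) ∂μ) - 1 = ∫ x, (gK s (Real.toNNReal x) - 1) ∂μ := by
    rw [integral_sub hint (integrable_const _)]; simp
  rw [e, ← integral_complex_ofReal, psiT]
  refine integral_congr_ae ?_
  filter_upwards [hae] with x hx
  rw [gK_apply, Real.coe_toNNReal x hx]
  have h1 : (1 + (s : ℝ) * x) ≠ 0 := by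
    have : 0 ≤ (s : ℝ) * x := by positivity
    positivity
  have e2 : 1 / (1 + (s : ℝ) * x) - 1 = (x * (-s)) / (1 - x * (-s)) := by
    have h2 : 1 - x * (-(s : ℝ)) = 1 + s * x := by ring
    rw [h2]; field_simp; ring
  rw [e2]
  simp

/-- If `ψ_{μ_n}(y) → ψ_ν(y)` for all `y ∈ (−∞,0)`, then `{μ_n}` is tight and
`μ_n` converges weakly to `ν`. -/
theorem tight_and_weak_convergence_of_psi (ν : Measure ℝ) (μ : ℕ → Measure ℝ)
    [IsProbabilityMeasure ν] [∀ n, IsProbabilityMeasure (μ n)]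
    (hνs : ν (Set.Iio (0 : ℝ)) = 0) (hμs : ∀ n, (μ n) (Set.Iio (0 : ℝ)) = 0)
    (h : ∀ y : ℝ, y < 0 →
      Tendsto (fun n => psiT (μ n) (y : ℂ)) atTop (nhds (psiT ν (y : ℂ)))) :
    (∀ ε : ℝ, 0 < ε → ∃ K : Set ℝ, IsCompact K ∧ ∀ n, (μ n) Kᶜ ≤ ENNReal.ofReal ε) ∧
    (∀ f : BoundedContinuousFunction ℝ ℝ,
        Tendsto (fun n => ∫ x, f x ∂(μ n)) atTop (nhds (∫ x, f x ∂ν))) := by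
  have hm : Measurable Real.toNNReal := measurable_real_toNNReal
  have hp : ∀ m : Measure ℝ, IsProbabilityMeasure m →
      IsProbabilityMeasure (m.map Real.toNNReal) := fun m _ =>
    Measure.isProbabilityMeasure_map hm.aemeasurable
  let ν' : ProbabilityMeasure ℝ≥0 := ⟨ν.map Real.toNNReal, hp ν inferInstance⟩
  let μ' : ℕ → ProbabilityMeasure ℝ≥0 := fun n => ⟨(μ n).map Real.toNNReal, hp _ inferInstance⟩
  have hg : ∀ s : ℝ≥0, Tendsto (fun n => ∫ x, gK s x ∂(μ' n : Measure ℝ≥0)) atTop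
      (𝓝 (∫ x, gK s x ∂(ν' : Measure ℝ≥0))) := by
    intro s
    rcases eq_or_lt_of_le (zero_le : 0 ≤ s) with h0 | h0
    · rw [← h0, gK_zero]; simp
    · have h1 := h (-(s : ℝ)) (by simpa using h0)
      simp only [psiT_eq _ hνs, psiT_eq _ (hμs _)] at h1
      have h2 := (Complex.continuous_re.tendsto _).comp h1
      have h3 := h2.add_const 1
      simp only [Function.comp_def, Complex.ofReal_re, sub_add_cancel] at h3
      exact h3
  have ht := tight_of_gK ν' μ' hg
  refine ⟨fun ε hε => ?_, fun f => ?_⟩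
  · obtain ⟨K, hK, hK'⟩ := ht ε hε
    refine ⟨(fun x : ℝ≥0 => (x : ℝ)) '' K, hK.image NNReal.continuous_coe, fun n => ?_⟩
    refine le_trans ?_ (hK' n)
    change _ ≤ ((μ n).map Real.toNNReal) Kᶜ
    rw [Measure.map_apply hm hK.measurableSet.compl]
    refine measure_mono_ae ?_
    have hae : ∀ᵐ x ∂(μ n), 0 ≤ x := by
      rw [ae_iff]; simpa [Set.Iio] using hμs n
    filter_upwards [hae] with x hx hxK hxc
    exact hxK ⟨_, hxc, Real.coe_toNNReal x hx⟩
  · have htight : IsTightMeasureSet {((μ' n : ProbabilityMeasure ℝ≥0) : Measure ℝ≥0) | n} := by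
      rw [isTightMeasureSet_iff_exists_isCompact_measure_compl_le]
      intro ε hε
      obtain ⟨δ, hδ, hδε⟩ : ∃ δ : ℝ, 0 < δ ∧ ENNReal.ofReal δ ≤ ε := by
        obtain ⟨r, hr, hr'⟩ := ENNReal.lt_iff_exists_nnreal_btwn.1 hε
        exact ⟨r, by simpa using hr, by simpa using hr'.le⟩
      obtain ⟨K, hK, hK'⟩ := ht δ hδ
      refine ⟨K, hK, ?_⟩
      rintro _ ⟨n, rfl⟩
      exact (hK' n).trans hδε
    have hconv := ProbabilityMeasure.tendsto_of_tight_of_separatesPoints ℝ htight (μ₀ := ν')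
      (𝓕 := atTop) gA_sep (fun g hgA => tendsto_of_mem_gW ν' μ' hg hgA)
    rw [ProbabilityMeasure.tendsto_iff_forall_integral_tendsto] at hconv
    have h1 := hconv (f.compContinuous ⟨fun x : ℝ≥0 => (x : ℝ), NNReal.continuous_coe⟩)
    have e : ∀ m : Measure ℝ, m (Set.Iio (0 : ℝ)) = 0 →
        ∫ x, (f.compContinuous ⟨fun x : ℝ≥0 => (x : ℝ), NNReal.continuous_coe⟩) x
          ∂(m.map Real.toNNReal) = ∫ x, f x ∂m := by
      intro m hm0
      rw [integral_map hm.aemeasurable (BoundedContinuousFunction.continuous _).aestronglyMeasurable]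
      refine integral_congr_ae ?_
      have hae : ∀ᵐ x ∂m, 0 ≤ x := by
        rw [ae_iff]; simpa [Set.Iio] using hm0
      filter_upwards [hae] with x hx
      simp [Real.coe_toNNReal x hx]
    have h2 : Tendsto (fun n => ∫ x, (f.compContinuous
        ⟨fun x : ℝ≥0 => (x : ℝ), NNReal.continuous_coe⟩) x ∂((μ n).map Real.toNNReal)) atTop
        (𝓝 (∫ x, (f.compContinuous
        ⟨fun x : ℝ≥0 => (x : ℝ), NNReal.continuous_coe⟩) x ∂(ν.map Real.toNNReal))) := h1
    simpa only [e _ hνs, e _ (hμs _)] using h2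
end

section
/- Let {μ_{nj} : n ≥ 1, 1 ≤ j ≤ k_n} be an infinitesimal triangular array of Borel probability measures on [0,∞). Let D be a closed disc with center on the negative real axis contained in the open left half-plane {z ∈ ℂ : Re z < 0}, and suppose that for all n and 1 ≤ j ≤ k_n there are functions S_{nj}, analytic on an open set containing D, such that z·S_{nj}(z) ∈ Ω and η_{μ°_{nj}}(z·S_{nj}(z)) = z for all z ∈ D (i.e., the Σ-transforms Σ_{μ°_{nj}} = S_{nj} are defined on D). Then there exists a smaller closed disc D₁ ⊆ D with center on the negative real axis such that for every ε > 0 there is N with: for all n ≥ N, all 1 ≤ j ≤ k_n, and all z ∈ D₁, |Log S_{nj}(z) − g_{nj}(z)| ≤ ε |g_{nj}(z)|, where Log denotes the principal branch of the complex logarithm; that is, Log Σ_{μ°_{nj}}(z) = g_{nj}(z)(1+o(1)) uniformly in j and in z ∈ D₁ as n → ∞. -/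
open MeasureTheory Complex Set Filter

/-- The scaling constant `b_μ = exp(∫_{[1/e,e]} log x dμ(x))`. -/
noncomputable def bScale (μ : Measure ℝ) : ℝ :=
  Real.exp (∫ x in Set.Icc (Real.exp 1)⁻¹ (Real.exp 1), Real.log x ∂μ)

/-- The scaled measure `μ°`, with `μ°(A) = μ(b_μ · A)`,
i.e. the pushforward of `μ` under `x ↦ x / b_μ`. -/
noncomputable def scaledM (μ : Measure ℝ) : Measure ℝ :=
  Measure.map (fun x => x / bScale μ) μ

/-- The auxiliary function `g(z) = ∫ (z−1)(1−x)/(xz−1) dμ°(x)`. -/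
noncomputable def gAux (μ : Measure ℝ) (z : ℂ) : ℂ :=
  ∫ x, ((z - 1) * (1 - (x : ℂ))) / ((x : ℂ) * z - 1) ∂(scaledM μ)

namespace LogSigma

lemma den_bound {m x : ℝ} {w : ℂ} (hx : 0 ≤ x) (hw : w.re ≤ -m) :
    1 + x * m ≤ ‖1 - (x : ℂ) * w‖ := by
  refine le_trans ?_ (Complex.re_le_norm _)
  simp
  nlinarith [mul_le_mul_of_nonneg_left hw hx]

lemma den_ne {m x : ℝ} {w : ℂ} (hm : 0 < m) (hx : 0 ≤ x) (hw : w.re ≤ -m) :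
    1 - (x : ℂ) * w ≠ 0 := by
  have := den_bound hx hw
  have h2 : 0 < 1 + x * m := by positivity
  exact norm_pos_iff.1 (h2.trans_le this)

/-- the smallness functional -/
noncomputable def Aint (m : ℝ) (ν : Measure ℝ) : ℝ := ∫ x, |1 - x| / (1 + x * m) ∂ν

lemma quot_bound {m x : ℝ} (hm : 0 < m) (hx : 0 ≤ x) :
    |1 - x| / (1 + x * m) ≤ 1 + 1 / m := by
  have h2 : 0 < 1 + x * m := by positivity
  rw [div_le_iff₀ h2]
  have h3 : (1 + 1 / m) * (1 + x * m) = 1 + 1 / m + x * m + x := by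
    field_simp
    ring
  rw [h3, abs_le]
  have : 0 < 1 / m := by positivity
  have : 0 ≤ x * m := by positivity
  constructor <;> linarith

lemma quot_int {m : ℝ} (hm : 0 < m) (ν : Measure ℝ) [IsProbabilityMeasure ν]
    (hν : ∀ᵐ x ∂ν, 0 ≤ x) : Integrable (fun x : ℝ => |1 - x| / (1 + x * m)) ν := by
  refine Integrable.of_bound (C := 1 + 1 / m) ?_ ?_
  · exact (Measurable.aestronglyMeasurable (by fun_prop))
  · filter_upwards [hν] with x hx
    rw [Real.norm_of_nonneg (by positivity)]
    exact quot_bound hm hx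

lemma Aint_nonneg {m : ℝ} (hm : 0 < m) (ν : Measure ℝ)
    (hν : ∀ᵐ x ∂ν, 0 ≤ x) : 0 ≤ Aint m ν := by
  refine integral_nonneg_of_ae ?_
  filter_upwards [hν] with x hx
  simp only [Pi.zero_apply]
  positivity

lemma Aint_le {m δ : ℝ} (hm : 0 < m) (hδ : 0 < δ) (ν : Measure ℝ) [IsProbabilityMeasure ν]
    (hν : ∀ᵐ x ∂ν, 0 ≤ x) (h : 1 - δ ≤ (ν (Ioo (1 - δ) (1 + δ))).toReal) :
    Aint m ν ≤ δ + (1 + 1 / m) * δ := by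
  have hc : (ν (Ioo (1 - δ) (1 + δ))ᶜ).toReal ≤ δ := by
    have := prob_compl_eq_one_sub (μ := ν) (measurableSet_Ioo (a := 1 - δ) (b := 1 + δ))
    rw [this, ENNReal.toReal_sub_of_le prob_le_one ENNReal.one_ne_top]
    simp
    linarith
  have hi : Integrable (fun x : ℝ => δ +
      (Ioo (1 - δ) (1 + δ))ᶜ.indicator (fun _ => (1 + 1 / m)) x) ν := by
    refine (integrable_const _).add ?_
    exact (integrable_const _).indicator measurableSet_Ioo.compl
  calc Aint m ν ≤ ∫ x, (δ + (Ioo (1 - δ) (1 + δ))ᶜ.indicator (fun _ => (1 + 1 / m)) x) ∂ν := by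
        refine integral_mono_ae (quot_int hm ν hν) hi ?_
        filter_upwards [hν] with x hx
        by_cases hx2 : x ∈ Ioo (1 - δ) (1 + δ)
        · have h2 : 1 ≤ 1 + x * m := by nlinarith
          simp only [Set.indicator, mem_compl_iff, hx2, not_true, if_false, add_zero]
          rw [div_le_iff₀ (by linarith)]
          have : |1 - x| ≤ δ := by
            rw [abs_le]; constructor <;> linarith [hx2.1, hx2.2]
          nlinarith
        · have := quot_bound hm hx
          simp only [Set.indicator, mem_compl_iff, hx2, not_false_iff, if_true]
          linarith
    _ = δ + (1 + 1 / m) * (ν (Ioo (1 - δ) (1 + δ))ᶜ).toReal := by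
        rw [integral_add (integrable_const _)
          ((integrable_const _).indicator measurableSet_Ioo.compl),
          integral_indicator measurableSet_Ioo.compl]
        simp [Measure.real, mul_comm]
    _ ≤ _ := by
        have : 0 < 1 + 1 / m := by positivity
        nlinarith

lemma int_inv {m : ℝ} (hm : 0 < m) (ν : Measure ℝ) [IsProbabilityMeasure ν]
    (hν : ∀ᵐ x ∂ν, 0 ≤ x) {w : ℂ} (hw : w.re ≤ -m) :
    Integrable (fun x : ℝ => 1 / (1 - (x : ℂ) * w)) ν := by
  refine Integrable.of_bound (C := 1) ?_ ?_
  · exact (Measurable.aestronglyMeasurable (by fun_prop))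
  · filter_upwards [hν] with x hx
    rw [norm_div, norm_one]
    have h1 := den_bound hx hw
    have h2 : 1 ≤ 1 + x * m := by nlinarith
    exact div_le_one_of_le₀ (by linarith) (norm_nonneg _)

lemma int_inv_approx {m : ℝ} (hm : 0 < m) (ν : Measure ℝ) [IsProbabilityMeasure ν]
    (hν : ∀ᵐ x ∂ν, 0 ≤ x) {w : ℂ} (hw : w.re ≤ -m) :
    ‖(∫ x : ℝ, 1 / (1 - (x : ℂ) * w) ∂ν) - 1 / (1 - w)‖ ≤ Aint m ν := by
  have h1 : (∫ x : ℝ, 1 / (1 - (x : ℂ) * w) ∂ν) - 1 / (1 - w)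
      = ∫ x : ℝ, (1 / (1 - (x : ℂ) * w) - 1 / (1 - w)) ∂ν := by
    rw [integral_sub (int_inv hm ν hν hw) (integrable_const _)]
    simp
  rw [h1]
  refine norm_integral_le_of_norm_le (quot_int hm ν hν) ?_
  filter_upwards [hν] with x hx
  have hd := den_bound hx hw
  have hn := den_ne hm hx hw
  have hn1 : 1 - w ≠ 0 := by simpa using den_ne hm zero_le_one hw
  have hw1 : ‖w‖ ≤ ‖1 - w‖ := by
    rw [← sq_le_sq₀ (norm_nonneg _) (norm_nonneg _), Complex.sq_norm, Complex.sq_norm,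
      Complex.normSq_apply, Complex.normSq_apply]
    simp
    nlinarith
  have e : 1 / (1 - (x : ℂ) * w) - 1 / (1 - w)
      = (((x - 1 : ℝ) : ℂ) / (1 - (x : ℂ) * w)) * (w / (1 - w)) := by
    push_cast
    field_simp
    ring
  rw [e, norm_mul, norm_div, norm_div, Complex.norm_real, Real.norm_eq_abs, abs_sub_comm]
  have h2 : 0 < 1 + x * m := by positivity
  have h3 : ‖w‖ / ‖1 - w‖ ≤ 1 := div_le_one_of_le₀ hw1 (norm_nonneg _)
  calc |1 - x| / ‖1 - (x : ℂ) * w‖ * (‖w‖ / ‖1 - w‖)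
      ≤ |1 - x| / ‖1 - (x : ℂ) * w‖ * 1 := by gcongr
    _ ≤ |1 - x| / (1 + x * m) := by rw [mul_one]; gcongr

lemma eta_eq (ν : Measure ℝ) [IsProbabilityMeasure ν]
    (hν : ∀ᵐ x ∂ν, 0 ≤ x) {w z : ℂ} (hw : w ∈ OmegaDom) (hz : z.re < 0) (h : etaT ν w = z) :
    Integrable (fun x : ℝ => ((x : ℂ) * w) / (1 - (x : ℂ) * w)) ν ∧
    (∫ x : ℝ, ((x : ℂ) * w) / (1 - (x : ℂ) * w) ∂ν) = z / (1 - z) ∧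
    (∫ x : ℝ, 1 / (1 - (x : ℂ) * w) ∂ν) = 1 / (1 - z) := by
  have hz0 : z ≠ 0 := by rintro rfl; simp at hz
  have hz1 : 1 - z ≠ 0 := by
    intro h0
    have : z = 1 := by linear_combination -h0
    rw [this] at hz; simp at hz; linarith
  have hI : Integrable (fun x : ℝ => ((x : ℂ) * w) / (1 - (x : ℂ) * w)) ν := by
    by_contra hcon
    have : psiT ν w = 0 := integral_undef hcon
    rw [etaT, this] at h
    simp at h
    exact hz0 h.symm
  have hpsi : psiT ν w = z / (1 - z) := by
    have h1 : 1 + psiT ν w ≠ 0 := by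
      intro h0
      rw [etaT, h0] at h
      simp at h
      exact hz0 h.symm
    rw [etaT, div_eq_iff h1] at h
    rw [eq_div_iff hz1]
    linear_combination h
  refine ⟨hI, hpsi, ?_⟩
  have : (∫ x : ℝ, 1 / (1 - (x : ℂ) * w) ∂ν)
      = ∫ x : ℝ, (1 + ((x : ℂ) * w) / (1 - (x : ℂ) * w)) ∂ν := by
    refine integral_congr_ae ?_
    filter_upwards [hν] with x hx
    have hn : 1 - (x : ℂ) * w ≠ 0 := by
      intro h0
      have h1 := congrArg Complex.re h0
      have h2 := congrArg Complex.im h0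
      simp at h1 h2
      apply hw
      rcases h2 with h2 | h2
      · simp [h2] at h1
      · refine ⟨h2, ?_⟩
        by_contra hneg
        push Not at hneg
        nlinarith
    field_simp
    ring
  rw [this, integral_add (integrable_const _) hI, ← psiT, hpsi]
  simp
  field_simp
  ring

lemma w_real (ν : Measure ℝ) [IsProbabilityMeasure ν]
    (hν : ∀ᵐ x ∂ν, 0 ≤ x) {w : ℂ} {c : ℝ} (hw : w ∈ OmegaDom) (hc : c < 0)
    (h : etaT ν w = c) : ∃ t : ℝ, t < 0 ∧ w = t := by
  obtain ⟨hI, hpsi, -⟩ := eta_eq ν hν hw (by simpa using hc) h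
  by_cases him : w.im = 0
  · refine ⟨w.re, ?_, ?_⟩
    · by_contra hcon
      exact hw ⟨him, not_lt.1 hcon⟩
    · apply Complex.ext <;> simp [him]
  exfalso
  have hre : ((c : ℂ) / (1 - c)).im = 0 := by
    rw [show (c : ℂ) / (1 - c) = ((c / (1 - c) : ℝ) : ℂ) by push_cast; rfl]
    exact Complex.ofReal_im _
  have hcne : (c : ℂ) / (1 - c) ≠ 0 := by
    refine div_ne_zero (by exact_mod_cast hc.ne) ?_
    have : (1 - c : ℝ) ≠ 0 := by linarith
    exact_mod_cast this
  have e : ∀ x : ℝ, (((x : ℂ) * w) / (1 - (x : ℂ) * w)).im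
      = w.im * (x / Complex.normSq (1 - (x : ℂ) * w)) := by
    intro x
    rw [Complex.div_im]
    simp
    ring
  have hIim : Integrable (fun x : ℝ => (((x : ℂ) * w) / (1 - (x : ℂ) * w)).im) ν := hI.im
  have h0 : ∫ x : ℝ, (((x : ℂ) * w) / (1 - (x : ℂ) * w)).im ∂ν = 0 := by
    have := integral_im hI
    simp only [RCLike.im_to_complex] at this
    rw [this, hpsi, hre]
  simp_rw [e] at h0 hIim
  rw [integral_const_mul] at h0
  have h1 := (mul_eq_zero.1 h0).resolve_left him
  have hI2 : Integrable (fun x : ℝ => x / Complex.normSq (1 - (x : ℂ) * w)) ν := by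
    have := hIim.const_mul (w.im)⁻¹
    refine this.congr (Eventually.of_forall fun x => ?_)
    simp only
    field_simp
  have h2 : 0 ≤ᵐ[ν] fun x : ℝ => x / Complex.normSq (1 - (x : ℂ) * w) := by
    filter_upwards [hν] with x hx
    exact div_nonneg hx (Complex.normSq_nonneg _)
  have h3 := (integral_eq_zero_iff_of_nonneg_ae h2 hI2).1 h1
  apply hcne
  rw [← hpsi]
  refine integral_eq_zero_of_ae ?_
  filter_upwards [h3] with x hx
  simp only [Pi.zero_apply, div_eq_zero_iff, Complex.normSq_eq_zero] at hx ⊢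
  rcases hx with hx | hx
  · left; simp [hx]
  · right; exact hx

lemma real_mono (ν : Measure ℝ) [IsProbabilityMeasure ν]
    (hν : ∀ᵐ x ∂ν, 0 ≤ x) {s t : ℝ} (hst : s ≤ t) (ht : t < 0) :
    (∫ x : ℝ, 1 / (1 - (x : ℂ) * s) ∂ν).re ≤ (∫ x : ℝ, 1 / (1 - (x : ℂ) * t) ∂ν).re := by
  have hm : 0 < -t := by linarith
  have i1 := int_inv hm ν hν (w := (s : ℂ)) (by simpa using hst)
  have i2 := int_inv hm ν hν (w := (t : ℂ)) (by simp)
  have j1 := integral_re i1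
  have j2 := integral_re i2
  simp only [RCLike.re_to_complex] at j1 j2
  rw [← j1, ← j2]
  refine integral_mono_ae i1.re i2.re ?_
  filter_upwards [hν] with x hx
  have e : ∀ y : ℝ, (1 / (1 - (x : ℂ) * y)).re = 1 / (1 - x * y) := by
    intro y
    rw [show (1 : ℂ) / (1 - x * y) = ((1 / (1 - x * y) : ℝ) : ℂ) by push_cast; rfl]
    exact Complex.ofReal_re _
  simp only [RCLike.re_to_complex, e]
  have h1 : 0 < 1 - x * t := by nlinarith
  apply one_div_le_one_div_of_le h1
  nlinarith

/-- localisation at a real point -/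
lemma loc_real {m ρ B : ℝ} (hm : 0 < m) (hρ : 0 < ρ) (ν : Measure ℝ) [IsProbabilityMeasure ν]
    (hν : ∀ᵐ x ∂ν, 0 ≤ x) {w : ℂ} {c : ℝ} (hw : w ∈ OmegaDom) (hc : c + ρ ≤ -m)
    (hB : 1 - c + ρ ≤ B) (hA : Aint m ν * B ^ 2 < ρ)
    (h : etaT ν w = c) : ‖w - c‖ < ρ := by
  have hc0 : c < 0 := by linarith
  obtain ⟨t, ht, rfl⟩ := w_real ν hν hw hc0 h
  obtain ⟨-, -, hF⟩ := eta_eq ν hν hw (by simpa using hc0) h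
  have hF' : (∫ x : ℝ, 1 / (1 - (x : ℂ) * t) ∂ν).re = 1 / (1 - c) := by
    rw [hF, show (1 : ℂ) / (1 - c) = ((1 / (1 - c) : ℝ) : ℂ) by push_cast; rfl]
    exact Complex.ofReal_re _
  have key : ∀ s : ℝ, s ≤ -m →
      |(∫ x : ℝ, 1 / (1 - (x : ℂ) * s) ∂ν).re - 1 / (1 - s)| ≤ Aint m ν := by
    intro s hs
    refine le_trans ?_ (int_inv_approx hm ν hν (w := (s : ℂ)) (by simpa using hs))
    refine le_trans (le_of_eq ?_) (Complex.abs_re_le_norm _)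
    rw [Complex.sub_re, show (1 : ℂ) / (1 - s) = ((1 / (1 - s) : ℝ) : ℂ) by push_cast; rfl]
    rw [Complex.ofReal_re]
  have hAn := Aint_nonneg hm ν hν
  rw [← Complex.ofReal_sub, Complex.norm_real, Real.norm_eq_abs, abs_lt]
  constructor
  · by_contra hcon
    have h1 := real_mono ν hν (s := t) (t := c - ρ) (by linarith) (by linarith)
    have h2 := abs_le.1 (key (c - ρ) (by linarith))
    rw [hF'] at h1
    have h3 : 1 / (1 - c) - 1 / (1 - (c - ρ)) = ρ / ((1 - c) * (1 - (c - ρ))) := by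
      have : 1 - c ≠ 0 := by linarith
      have : 1 - (c - ρ) ≠ 0 := by linarith
      field_simp
      ring
    have h4 : ρ / ((1 - c) * (1 - (c - ρ))) ≤ Aint m ν := by rw [← h3]; linarith [h2.2]
    rw [div_le_iff₀ (by apply mul_pos <;> linarith)] at h4
    have h5 : (1 - c) * (1 - (c - ρ)) ≤ B ^ 2 := by
      rw [sq]; apply mul_le_mul <;> linarith
    nlinarith
  · by_contra hcon
    have h1 := real_mono ν hν (s := c + ρ) (t := t) (by linarith) (by linarith)
    have h2 := abs_le.1 (key (c + ρ) (by linarith))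
    rw [hF'] at h1
    have h3 : 1 / (1 - (c + ρ)) - 1 / (1 - c) = ρ / ((1 - c) * (1 - (c + ρ))) := by
      have : 1 - c ≠ 0 := by linarith
      have : 1 - (c + ρ) ≠ 0 := by linarith
      field_simp
      ring
    have h4 : ρ / ((1 - c) * (1 - (c + ρ))) ≤ Aint m ν := by rw [← h3]; linarith [h2.1]
    rw [div_le_iff₀ (by apply mul_pos <;> linarith)] at h4
    have h5 : (1 - c) * (1 - (c + ρ)) ≤ B ^ 2 := by
      rw [sq]; apply mul_le_mul <;> linarith
    nlinarith

/-- localisation bootstrap -/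
lemma loc_boot {m B : ℝ} (hm : 0 < m) (ν : Measure ℝ) [IsProbabilityMeasure ν]
    (hν : ∀ᵐ x ∂ν, 0 ≤ x) {w z : ℂ} (hw : w.re ≤ -m) (hz : z.re ≤ -m)
    (hwB : ‖1 - w‖ ≤ B) (hzB : ‖1 - z‖ ≤ B)
    (h : (∫ x : ℝ, 1 / (1 - (x : ℂ) * w) ∂ν) = 1 / (1 - z)) :
    ‖w - z‖ ≤ Aint m ν * B ^ 2 := by
  have h1 := int_inv_approx hm ν hν hw
  rw [h] at h1
  have hn1 : 1 - w ≠ 0 := by simpa using den_ne hm zero_le_one hw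
  have hn2 : 1 - z ≠ 0 := by simpa using den_ne hm zero_le_one hz
  have e : w - z = -((1 / (1 - z) - 1 / (1 - w)) * ((1 - z) * (1 - w))) := by
    field_simp
    ring
  have hAn := Aint_nonneg hm ν hν
  have hB0 : 0 ≤ B := (norm_nonneg _).trans hwB
  rw [e, norm_neg, norm_mul, norm_mul, sq]
  gcongr

/-- the exact identity -/
lemma g_identity {m : ℝ} (hm : 0 < m) (ν : Measure ℝ) [IsProbabilityMeasure ν]
    (hν : ∀ᵐ x ∂ν, 0 ≤ x) {w z : ℂ} (hw : w.re ≤ -m) (hz : z.re ≤ -m)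
    (h : (∫ x : ℝ, 1 / (1 - (x : ℂ) * w) ∂ν) = 1 / (1 - z)) :
    ∃ J : ℂ, ‖J‖ ≤ (1 + 1 / m) * Aint m ν ∧
    (∫ x : ℝ, ((z - 1) * (1 - (x : ℂ))) / ((x : ℂ) * z - 1) ∂ν)
      = ((w - z) / w) * (1 + ((z - w) / (1 - z) + w * J)) := by
  have hn1 : 1 - w ≠ 0 := by simpa using den_ne hm zero_le_one hw
  have hn2 : 1 - z ≠ 0 := by simpa using den_ne hm zero_le_one hz
  have hw0 : w ≠ 0 := by rintro rfl; simp at hw; linarith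
  have hb : ∀ᵐ x : ℝ ∂ν, ‖(1 - (x : ℂ)) ^ 2 / ((1 - (x : ℂ) * w) * (1 - (x : ℂ) * z))‖
      ≤ (1 + 1 / m) * (|1 - x| / (1 + x * m)) := by
    filter_upwards [hν] with x hx
    have hd1 := den_bound hx hw
    have hd2 := den_bound hx hz
    have h2 : 0 < 1 + x * m := by positivity
    have hq := quot_bound hm hx
    have e1 : ‖1 - (x : ℂ)‖ = |1 - x| := by
      rw [← Complex.ofReal_one, ← Complex.ofReal_sub, Complex.norm_real, Real.norm_eq_abs]
    rw [norm_div, norm_mul, norm_pow, e1, sq, mul_div_mul_comm]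
    have q1 : |1 - x| / ‖1 - (x : ℂ) * w‖ ≤ 1 + 1 / m := le_trans (by gcongr) hq
    have q2 : |1 - x| / ‖1 - (x : ℂ) * z‖ ≤ |1 - x| / (1 + x * m) := by gcongr
    exact mul_le_mul q1 q2 (by positivity) (by positivity)
  have hJint : Integrable (fun x : ℝ =>
      (1 - (x : ℂ)) ^ 2 / ((1 - (x : ℂ) * w) * (1 - (x : ℂ) * z))) ν := by
    refine Integrable.mono' ((quot_int hm ν hν).const_mul (1 + 1 / m)) ?_ hb
    exact (Measurable.aestronglyMeasurable (by fun_prop))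
  refine ⟨∫ x : ℝ, (1 - (x : ℂ)) ^ 2 / ((1 - (x : ℂ) * w) * (1 - (x : ℂ) * z)) ∂ν, ?_, ?_⟩
  · rw [Aint, ← integral_const_mul]
    exact norm_integral_le_of_norm_le ((quot_int hm ν hν).const_mul (1 + 1 / m)) hb
  · have hi := int_inv hm ν hν hw
    have e : (∫ x : ℝ, ((z - 1) * (1 - (x : ℂ))) / ((x : ℂ) * z - 1) ∂ν)
        = ∫ x : ℝ, ((w - z) * ((1 - (x : ℂ)) ^ 2 / ((1 - (x : ℂ) * w) * (1 - (x : ℂ) * z)))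
          + ((1 - w) / w - (1 - w) ^ 2 / w * (1 / (1 - (x : ℂ) * w)))) ∂ν := by
      refine integral_congr_ae ?_
      filter_upwards [hν] with x hx
      have hd1 := den_ne hm hx hw
      have hd2 := den_ne hm hx hz
      have hd3 : ((z - 1) * (1 - (x : ℂ))) / ((x : ℂ) * z - 1)
          = ((1 - z) * (1 - (x : ℂ))) / (1 - (x : ℂ) * z) := by
        rw [← neg_div_neg_eq]
        congr 1 <;> ring
      have hd4 : 1 - z * (x : ℂ) ≠ 0 := by rwa [mul_comm]
      rw [hd3]
      field_simp
      ring
    have hi2 : Integrable (fun x : ℝ =>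
        (1 - w) / w - (1 - w) ^ 2 / w * (1 / (1 - (x : ℂ) * w))) ν :=
      (integrable_const _).sub (hi.const_mul _)
    rw [e, integral_add (hJint.const_mul _) hi2,
      integral_sub (integrable_const _) (hi.const_mul _), integral_const_mul, integral_const_mul, h]
    simp
    field_simp
    ring

lemma log_final {u θ g S : ℂ} {τ : ℝ} (hS : S = (1 - u)⁻¹) (hg : g = u * (1 + θ))
    (hu : ‖u‖ ≤ τ) (hθ : ‖θ‖ ≤ τ) (hτ : τ ≤ 1 / 2) :
    ‖Complex.log S - g‖ ≤ 4 * τ * ‖g‖ := by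
  have hτ0 : 0 ≤ τ := (norm_nonneg _).trans hu
  have hre : 0 < (1 - u).re := by
    have := Complex.re_le_norm u
    simp; linarith
  have harg : (1 - u).arg ≠ Real.pi := by
    intro h
    rw [Complex.arg_eq_pi_iff] at h
    linarith [h.1]
  have hl : Complex.log S = -Complex.log (1 - u) := by rw [hS, Complex.log_inv _ harg]
  have h1 := Complex.norm_log_one_add_sub_self_le (z := -u) (by rw [norm_neg]; linarith)
  rw [norm_neg] at h1
  have h2 : ‖Complex.log S - u‖ ≤ τ * ‖u‖ := by
    have e : Complex.log S - u = -(Complex.log (1 + -u) - -u) := by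
      rw [hl, ← sub_eq_add_neg]; ring
    rw [e, norm_neg]
    refine h1.trans ?_
    have h3 : (1 - ‖u‖)⁻¹ ≤ 2 := by
      rw [inv_le_comm₀ (by linarith) (by norm_num)]
      linarith
    have h4 : ‖u‖ ^ 2 * (1 - ‖u‖)⁻¹ ≤ ‖u‖ ^ 2 * 2 := by gcongr
    nlinarith [norm_nonneg u]
  have h5 : ‖u‖ ≤ 2 * ‖g‖ := by
    have : ‖u‖ - ‖u‖ * ‖θ‖ ≤ ‖g‖ := by
      rw [hg, mul_add, mul_one, ← norm_mul]
      exact norm_sub_le_norm_add _ _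
    nlinarith [norm_nonneg u]
  have e : Complex.log S - g = (Complex.log S - u) - u * θ := by rw [hg]; ring
  calc ‖Complex.log S - g‖ ≤ ‖Complex.log S - u‖ + ‖u * θ‖ := by rw [e]; exact norm_sub_le _ _
    _ ≤ τ * ‖u‖ + ‖u‖ * τ := by rw [norm_mul]; gcongr
    _ ≤ 4 * τ * ‖g‖ := by nlinarith

/-- uniform closeness of the scaled measures to the unit mass at one -/
lemma scaled_close {δ : ℝ} (hδ : 0 < δ) : ∃ κ > 0, ∃ δ' > 0, ∀ (μ : Measure ℝ)
    [IsProbabilityMeasure μ], 1 - δ' ≤ (μ (Ioo (1 - κ) (1 + κ))).toReal →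
    1 - δ' ≤ (μ (Ioo (1 - min δ 1 / 4) (1 + min δ 1 / 4))).toReal → 
    1 - δ ≤ (scaledM μ (Ioo (1 - δ) (1 + δ))).toReal := by
  set d := min δ 1 / 4 with hd
  have hd0 : 0 < d := by positivity
  have hd1 : d ≤ δ / 4 := by rw [hd]; gcongr; exact min_le_left _ _
  have hd2 : d ≤ 1 / 4 := by rw [hd]; gcongr; exact min_le_right _ _
  obtain ⟨η, hη, hexp⟩ := Metric.continuousAt_iff.1 (Real.continuous_exp.continuousAt (x := 0)) d hd0
  obtain ⟨κ, hκ, hlog⟩ := Metric.continuousAt_iff.1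
    (Real.continuousAt_log (one_ne_zero)) (η / 4) (by positivity)
  simp only [Real.dist_eq, sub_zero, Real.exp_zero, Real.log_one] at hexp hlog
  refine ⟨κ, hκ, min δ (η / 4), by positivity, ?_⟩
  intro μ _ h1 h2
  have hm1 := min_le_left δ (η / 4)
  have hm2 := min_le_right δ (η / 4)
  have hc : (μ (Ioo (1 - κ) (1 + κ))ᶜ).toReal ≤ η / 4 := by
    have := prob_compl_eq_one_sub (μ := μ) (measurableSet_Ioo (a := 1 - κ) (b := 1 + κ))
    rw [this, ENNReal.toReal_sub_of_le prob_le_one ENNReal.one_ne_top]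
    simp
    linarith
  have hb : |∫ x in Set.Icc (Real.exp 1)⁻¹ (Real.exp 1), Real.log x ∂μ| < η := by
    rw [← integral_indicator measurableSet_Icc, ← Real.norm_eq_abs]
    have hi2 : Integrable ((Ioo (1 - κ) (1 + κ))ᶜ.indicator (fun _ => (1 : ℝ))) μ :=
      (integrable_const _).indicator measurableSet_Ioo.compl
    have := norm_integral_le_of_norm_le (μ := μ)
      (f := (Set.Icc (Real.exp 1)⁻¹ (Real.exp 1)).indicator (fun x => Real.log x))
      (g := fun x => η / 4 + (Ioo (1 - κ) (1 + κ))ᶜ.indicator (fun _ => (1 : ℝ)) x)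
      ((integrable_const _).add hi2) (Eventually.of_forall fun x => by
        by_cases hx : x ∈ Set.Icc (Real.exp 1)⁻¹ (Real.exp 1)
        · rw [Set.indicator_of_mem hx]
          by_cases hx2 : x ∈ Ioo (1 - κ) (1 + κ)
          · simp only [Set.indicator, mem_compl_iff, hx2, not_true, if_false, add_zero]
            refine (hlog ?_).le
            rw [abs_lt]; constructor <;> linarith [hx2.1, hx2.2]
          · simp only [Set.indicator, mem_compl_iff, hx2, not_false_iff, if_true]
            have hx0 : 0 < x := lt_of_lt_of_le (by positivity) hx.1
            have : |Real.log x| ≤ 1 := by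
              rw [abs_le]
              constructor
              · rw [Real.le_log_iff_exp_le hx0, Real.exp_neg]; exact hx.1
              · rw [Real.log_le_iff_le_exp hx0]; exact hx.2
            rw [Real.norm_eq_abs]
            linarith
        · rw [Set.indicator_of_notMem hx, norm_zero]
          have : 0 ≤ (Ioo (1 - κ) (1 + κ))ᶜ.indicator (fun _ => (1 : ℝ)) x :=
            Set.indicator_nonneg (fun _ _ => zero_le_one) _
          positivity)
    rw [integral_add (integrable_const _) hi2, integral_indicator measurableSet_Ioo.compl] at this
    simp [Measure.real] at this
    rw [Real.norm_eq_abs] 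
    linarith
  have hB := hexp hb
  rw [← bScale, abs_lt] at hB
  have hbpos : 0 < bScale μ := Real.exp_pos _
  refine le_trans (by linarith) (h2.trans ?_)
  rw [scaledM, Measure.map_apply (by fun_prop) measurableSet_Ioo]
  refine ENNReal.toReal_mono (measure_ne_top _ _) (measure_mono ?_)
  intro x hx
  simp only [mem_preimage, mem_Ioo] at hx ⊢
  rw [lt_div_iff₀ hbpos, div_lt_iff₀ hbpos]
  constructor <;> nlinarith [hx.1, hx.2, hB.1, hB.2]

end LogSigma

/-- Lemma 3.1 (ii): for an infinitesimal triangular array `{μ_{nj}}` on `[0,∞)` and a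
closed disc `D` with center on the negative real axis on which all the Σ-transforms
`Σ_{μ°_{nj}} = S_{nj}` are defined (analytic on an open set containing `D`, with
`η_{μ°_{nj}}(z·S_{nj}(z)) = z` on `D`), there is a smaller closed disc `D₁ ⊆ D`, also
with center on the negative real axis, such that
`Log Σ_{μ°_{nj}}(z) = g_{nj}(z)(1+o(1))` uniformly in `1 ≤ j ≤ k_n` and `z ∈ D₁`. -/
theorem log_Sigma_transform_approx (k : ℕ → ℕ) (hk : ∀ n, 1 ≤ k n)
    (μ : ℕ → ℕ → Measure ℝ) [∀ n j, IsProbabilityMeasure (μ n j)]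
    (hsupp : ∀ n j, (μ n j) (Set.Iio (0 : ℝ)) = 0)
    (hinf : ∀ ε : ℝ, 0 < ε → ∀ δ : ℝ, 0 < δ → ∃ N : ℕ, ∀ n ≥ N, ∀ j,
      1 ≤ j → j ≤ k n → 1 - δ ≤ ((μ n j) (Set.Ioo (1 - ε) (1 + ε))).toReal)
    (c r : ℝ) (hc : c < 0) (hr : 0 < r)
    (hD : Metric.closedBall (c : ℂ) r ⊆ {z : ℂ | z.re < 0})
    (S : ℕ → ℕ → ℂ → ℂ)
    (hS : ∀ n j, 1 ≤ j → j ≤ k n → ∃ U : Set ℂ, IsOpen U ∧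
      Metric.closedBall (c : ℂ) r ⊆ U ∧ AnalyticOnNhd ℂ (S n j) U ∧
      ∀ z ∈ Metric.closedBall (c : ℂ) r,
        z * S n j z ∈ OmegaDom ∧ etaT (scaledM (μ n j)) (z * S n j z) = z) :
    ∃ c₁ r₁ : ℝ, c₁ < 0 ∧ 0 < r₁ ∧
      Metric.closedBall (c₁ : ℂ) r₁ ⊆ Metric.closedBall (c : ℂ) r ∧
      ∀ ε : ℝ, 0 < ε → ∃ N : ℕ, ∀ n ≥ N, ∀ j, 1 ≤ j → j ≤ k n →
        ∀ z ∈ Metric.closedBall (c₁ : ℂ) r₁,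
          ‖Complex.log (S n j z) - gAux (μ n j) z‖ ≤ ε * ‖gAux (μ n j) z‖ := by
  have hcr : c + r < 0 := by
    have : ((c + r : ℝ) : ℂ) ∈ Metric.closedBall (c : ℂ) r := by
      rw [Metric.mem_closedBall, dist_eq_norm, ← Complex.ofReal_sub, Complex.norm_real]
      simp [abs_of_pos hr]
    simpa using hD this
  refine ⟨c, r, hc, hr, subset_rfl, ?_⟩
  intro ε hε
  obtain ⟨m, hmdef⟩ : ∃ m : ℝ, m = -(c + r) / 2 := ⟨_, rfl⟩
  have hm : 0 < m := by rw [hmdef]; linarith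
  obtain ⟨B, hBdef⟩ : ∃ B : ℝ, B = 1 - c + r + m := ⟨_, rfl⟩
  have hB : 1 < B := by rw [hBdef]; linarith
  -- the required smallness
  obtain ⟨τ, hτdef⟩ : ∃ τ : ℝ, τ = min (min (1 / 2) (ε / 4)) (m / 2) := ⟨_, rfl⟩
  have hτ : 0 < τ := by rw [hτdef]; positivity
  have hτ1 : τ ≤ 1 / 2 := by rw [hτdef]; exact (min_le_left _ _).trans (min_le_left _ _)
  have hτ2 : τ ≤ ε / 4 := by rw [hτdef]; exact (min_le_left _ _).trans (min_le_right _ _)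
  have hτ3 : τ ≤ m / 2 := by rw [hτdef]; exact min_le_right _ _
  obtain ⟨Q, hQdef⟩ : ∃ Q : ℝ, Q = B ^ 2 + B ^ 2 / m + B * (1 + 1 / m) := ⟨_, rfl⟩
  have hQ : 0 < Q := by rw [hQdef]; positivity
  obtain ⟨δ, hδdef⟩ : ∃ δ : ℝ, δ = τ / Q / (1 + (1 + 1 / m)) := ⟨_, rfl⟩
  have hδ : 0 < δ := by rw [hδdef]; positivity
  obtain ⟨κ, hκ, δ', hδ', hclose⟩ := LogSigma.scaled_close hδ
  obtain ⟨N₁, hN₁⟩ := hinf κ hκ δ' hδ'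
  obtain ⟨N₂, hN₂⟩ := hinf (min δ 1 / 4) (by positivity) δ' hδ'
  refine ⟨max N₁ N₂, ?_⟩
  intro n hn j hj1 hj2
  have hsc := hclose (μ n j) (hN₁ n ((le_max_left _ _).trans hn) j hj1 hj2)
    (hN₂ n ((le_max_right _ _).trans hn) j hj1 hj2)
  have hmeas : Measurable (fun x : ℝ => x / bScale (μ n j)) := by fun_prop
  have hprob : IsProbabilityMeasure (scaledM (μ n j)) :=
    Measure.isProbabilityMeasure_map hmeas.aemeasurable
  have hpos : ∀ᵐ x ∂(scaledM (μ n j)), 0 ≤ x := by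
    rw [scaledM, ae_map_iff hmeas.aemeasurable measurableSet_Ici]
    have : ∀ᵐ x ∂(μ n j), 0 ≤ x := by
      rw [ae_iff]
      simpa [not_le, Set.Iio] using hsupp n j
    filter_upwards [this] with x hx
    exact div_nonneg hx (Real.exp_pos _).le
  have hgdef : ∀ z, gAux (μ n j) z = ∫ x : ℝ, ((z - 1) * (1 - (x : ℂ))) / ((x : ℂ) * z - 1)
      ∂(scaledM (μ n j)) := fun z => rfl
  obtain ⟨U, -, hUsub, hUan, hSz⟩ := hS n j hj1 hj2
  generalize scaledM (μ n j) = ν at *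
  have hAδ := LogSigma.Aint_le hm hδ ν hpos hsc
  have hA0 := LogSigma.Aint_nonneg hm ν hpos
  have hAQ : LogSigma.Aint m ν * Q ≤ τ := by
    rw [← le_div_iff₀ hQ]
    refine hAδ.trans (le_of_eq ?_)
    rw [hδdef]
    have : 1 + (1 + 1 / m) ≠ 0 := by positivity
    field_simp
  have hAB : LogSigma.Aint m ν * B ^ 2 + LogSigma.Aint m ν * (B ^ 2 / m)
      + LogSigma.Aint m ν * (B * (1 + 1 / m)) ≤ τ := by
    refine le_trans (le_of_eq ?_) hAQ
    rw [hQdef]; ring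
  have t1 : 0 ≤ LogSigma.Aint m ν * B ^ 2 := by positivity
  have t2 : 0 ≤ LogSigma.Aint m ν * (B ^ 2 / m) := by positivity
  have t3 : 0 ≤ LogSigma.Aint m ν * (B * (1 + 1 / m)) := by positivity
  have hzre : ∀ z ∈ Metric.closedBall (c : ℂ) r, z.re ≤ -(2 * m) := by
    intro z hz
    rw [Metric.mem_closedBall, dist_eq_norm] at hz
    have := (Complex.re_le_norm (z - c)).trans hz
    simp at this
    rw [hmdef]; linarith
  have hz1 : ∀ z ∈ Metric.closedBall (c : ℂ) r, ‖1 - z‖ ≤ 1 - c + r := by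
    intro z hz
    rw [Metric.mem_closedBall, dist_eq_norm] at hz
    have e : 1 - z = ((1 - c : ℝ) : ℂ) - (z - c) := by push_cast; ring
    rw [e]
    refine (norm_sub_le _ _).trans ?_
    rw [Complex.norm_real, Real.norm_of_nonneg (by linarith)]
    linarith
  have hboot : ∀ z ∈ Metric.closedBall (c : ℂ) r, ‖z * S n j z - z‖ ≤ m →
      (z * S n j z).re ≤ -m ∧ ‖1 - z * S n j z‖ ≤ B ∧
      ‖z * S n j z - z‖ ≤ LogSigma.Aint m ν * B ^ 2 := by
    intro z hz hd
    have h1 := hzre z hz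
    have h2 : (z * S n j z).re ≤ -m := by
      have := (Complex.re_le_norm (z * S n j z - z)).trans hd
      rw [Complex.sub_re] at this
      linarith
    have h3 : ‖1 - z * S n j z‖ ≤ B := by
      have e : 1 - z * S n j z = (1 - z) - (z * S n j z - z) := by ring
      rw [e]
      refine (norm_sub_le _ _).trans ?_
      have := hz1 z hz
      linarith
    refine ⟨h2, h3, ?_⟩
    obtain ⟨hO, hE⟩ := hSz z hz
    obtain ⟨-, -, hF⟩ := LogSigma.eta_eq ν hpos hO (by linarith) hE
    exact LogSigma.loc_boot hm ν hpos h2 (by linarith) h3 (by linarith [hz1 z hz]) hF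
  have hcmem : (c : ℂ) ∈ Metric.closedBall (c : ℂ) r := Metric.mem_closedBall_self hr.le
  have hcent : ‖(c : ℂ) * S n j c - c‖ < m := by
    obtain ⟨hO, hE⟩ := hSz c hcmem
    refine LogSigma.loc_real (B := B) hm hm ν hpos hO ?_ ?_ ?_ hE
    · linarith
    · linarith
    · linarith
  have hcont : ContinuousOn (fun z => ‖z * S n j z - z‖) (Metric.closedBall (c : ℂ) r) := by
    have : ContinuousOn (S n j) (Metric.closedBall (c : ℂ) r) := hUan.continuousOn.mono hUsub
    fun_prop
  have hloc : ∀ z ∈ Metric.closedBall (c : ℂ) r, ‖z * S n j z - z‖ ≤ m := by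
    intro z hz
    by_contra hcon
    push Not at hcon
    have hpre : IsPreconnected (Metric.closedBall (c : ℂ) r) :=
      (convex_closedBall _ _).isPreconnected
    obtain ⟨y, hy, hym⟩ := hpre.intermediate_value hcmem hz hcont ⟨hcent.le, hcon.le⟩
    simp only at hym
    have := (hboot y hy hym.le).2.2
    linarith
  intro z hz
  obtain ⟨hwre, hwB, hwz⟩ := hboot z hz (hloc z hz)
  obtain ⟨hO, hE⟩ := hSz z hz
  have hzr := hzre z hz
  obtain ⟨-, -, hF⟩ := LogSigma.eta_eq ν hpos hO (by linarith) hE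
  have hz0 : z ≠ 0 := by
    rintro rfl
    simp at hzr
    linarith
  have hw0 : z * S n j z ≠ 0 := by
    intro h0
    rw [h0] at hwre
    simp at hwre
    linarith
  have hS0 : S n j z ≠ 0 := right_ne_zero_of_mul hw0
  obtain ⟨J, hJ, hg⟩ := LogSigma.g_identity hm ν hpos hwre (by linarith) hF
  rw [← hgdef] at hg
  have hwm : m ≤ ‖z * S n j z‖ := by
    have := (abs_le.1 (Complex.abs_re_le_norm (z * S n j z))).1
    linarith
  have h1z : 1 ≤ ‖1 - z‖ := by
    have := Complex.re_le_norm (1 - z)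
    simp at this
    linarith
  have hwn : ‖z * S n j z‖ ≤ B := by
    refine le_trans ?_ hwB
    rw [← sq_le_sq₀ (norm_nonneg _) (norm_nonneg _), Complex.sq_norm, Complex.sq_norm,
      Complex.normSq_apply, Complex.normSq_apply, Complex.sub_re, Complex.sub_im,
      Complex.one_re, Complex.one_im]
    nlinarith
  have hu : ‖(z * S n j z - z) / (z * S n j z)‖ ≤ τ := by
    rw [norm_div]
    calc ‖z * S n j z - z‖ / ‖z * S n j z‖ ≤ (LogSigma.Aint m ν * B ^ 2) / m := by gcongr
      _ = LogSigma.Aint m ν * (B ^ 2 / m) := by ring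
      _ ≤ τ := by linarith
  have hθ : ‖(z - z * S n j z) / (1 - z) + z * S n j z * J‖ ≤ τ := by
    have a1 : ‖(z - z * S n j z) / (1 - z)‖ ≤ LogSigma.Aint m ν * B ^ 2 := by
      rw [norm_div, norm_sub_rev]
      exact (div_le_self (norm_nonneg _) h1z).trans hwz
    have a2 : ‖z * S n j z * J‖ ≤ LogSigma.Aint m ν * (B * (1 + 1 / m)) := by
      rw [norm_mul]
      calc ‖z * S n j z‖ * ‖J‖ ≤ B * ((1 + 1 / m) * LogSigma.Aint m ν) := by gcongr
        _ = _ := by ring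
    refine (norm_add_le _ _).trans ?_
    linarith
  have hSu : S n j z = (1 - (z * S n j z - z) / (z * S n j z))⁻¹ := by
    field_simp
    ring
  refine (LogSigma.log_final hSu hg hu hθ hτ1).trans ?_
  gcongr
  linarith
end

section
/- There exists a unique map ω : 𝔻̄ → 𝔻̄ with the following properties: ω is continuous and one-to-one on 𝔻̄, ω(𝔻) ⊆ 𝔻, ω is analytic in 𝔻, and Φ(ω(z)) = z for every z ∈ 𝔻. -/
open Complex Set Metric

/-- `ω` is a global inverse of `Φ`: continuous and one-to-one on the closed unit disc,
mapping `𝔻̄` into `𝔻̄` and `𝔻` into `𝔻`, analytic in `𝔻`, and satisfying `Φ(ω(z)) = z`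
on `𝔻`. -/
def IsGlobalInverse (Φ ω : ℂ → ℂ) : Prop :=
  ContinuousOn ω (closedBall 0 1) ∧ Set.InjOn ω (closedBall 0 1) ∧
    Set.MapsTo ω (closedBall 0 1) (closedBall 0 1) ∧
    Set.MapsTo ω (ball 0 1) (ball 0 1) ∧
    AnalyticOnNhd ℂ ω (ball 0 1) ∧
    ∀ z ∈ ball (0 : ℂ) 1, Φ (ω z) = z

open scoped ComplexConjugate Topology
open Filter

lemma aux_normSq_id (a b : ℂ) :
    normSq (1 - conj a * b) = normSq (b - a) + (1 - normSq a) * (1 - normSq b) := by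
  simp [Complex.normSq_apply]; ring

lemma aux_one_sub_ne {a b : ℂ} (ha : ‖a‖ < 1) (hb : ‖b‖ ≤ 1) : 1 - conj a * b ≠ 0 := by
  intro h
  have h1 : ‖conj a * b‖ = 1 := by rw [← sub_eq_zero.1 h]; simp
  rw [norm_mul, Complex.norm_conj] at h1
  nlinarith [norm_nonneg a, norm_nonneg b]

lemma aux_normSq_lt {a : ℂ} : normSq a < 1 ↔ ‖a‖ < 1 := by
  rw [Complex.normSq_eq_norm_sq]
  constructor
  · intro h; nlinarith [norm_nonneg a]
  · intro h; nlinarith [norm_nonneg a]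

lemma aux_mob {a b : ℂ} (ha : ‖a‖ < 1) (hb : ‖b‖ < 1) : ‖(b - a) / (1 - conj a * b)‖ < 1 := by
  have h0 := aux_one_sub_ne ha hb.le
  rw [← aux_normSq_lt, map_div₀, div_lt_one (Complex.normSq_pos.2 h0), aux_normSq_id]
  have := aux_normSq_lt.2 ha
  have := aux_normSq_lt.2 hb
  nlinarith

lemma aux_mob_diff {a : ℂ} (ha : ‖a‖ < 1) :
    DifferentiableOn ℂ (fun z => (z - a) / (1 - conj a * z)) (ball 0 1) := by
  refine DifferentiableOn.div (by fun_prop) (by fun_prop) ?_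
  intro z hz
  exact aux_one_sub_ne ha (by simpa using (mem_ball.1 hz).le)

/-- Schwarz-Pick, open target -/
lemma aux_sp_strict {F : ℂ → ℂ} (hF : DifferentiableOn ℂ F (ball 0 1))
    (hm : MapsTo F (ball 0 1) (ball 0 1)) {v w : ℂ} (hv : ‖v‖ < 1) (hw : ‖w‖ < 1) :
    normSq (F v - F w) * normSq (1 - conj w * v) ≤
      normSq (v - w) * normSq (1 - conj (F w) * F v) := by
  have hFw : ‖F w‖ < 1 := by simpa using hm (show w ∈ ball (0 : ℂ) 1 by simpa using hw)
  have hFv : ‖F v‖ < 1 := by simpa using hm (show v ∈ ball (0 : ℂ) 1 by simpa using hv)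
  have hw' : ‖-w‖ < 1 := by simpa using hw
  have m1 : MapsTo (fun z => (z - -w) / (1 - conj (-w) * z)) (ball 0 1) (ball 0 1) := by
    intro z hz
    simpa using aux_mob hw' (by simpa using hz)
  have m2 : MapsTo (fun z => (z - F w) / (1 - conj (F w) * z)) (ball 0 1) (ball 0 1) := by
    intro z hz
    simpa using aux_mob hFw (by simpa using hz)
  have hd := (aux_mob_diff hFw).comp (hF.comp (aux_mob_diff hw') m1) (hm.comp m1)
  have hmm := m2.comp (hm.comp m1)
  set u := (v - w) / (1 - conj w * v) with hu
  have hun : ‖u‖ < 1 := aux_mob hw hv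
  have nv := aux_one_sub_ne hw hv.le
  have nw := aux_one_sub_ne hw hw.le
  have nF := aux_one_sub_ne hFw hFv.le
  have hMu : (u - -w) / (1 - conj (-w) * u) = v := by
    have : 1 - conj (-w) * u ≠ 0 := aux_one_sub_ne hw' hun.le
    have hu' : u * (1 - conj w * v) = v - w := by rw [hu]; exact div_mul_cancel₀ _ nv
    rw [div_eq_iff this, map_neg]
    linear_combination hu'
  have key := Complex.norm_le_norm_of_mapsTo_ball hd (hmm.mono_right ball_subset_closedBall)
    (by simp) hun
  simp only [Function.comp_apply, hMu] at key
  have k2 : normSq ((F v - F w) / (1 - conj (F w) * F v)) ≤ normSq u := by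
    rw [Complex.normSq_eq_norm_sq, Complex.normSq_eq_norm_sq]
    gcongr
  rw [hu, map_div₀, map_div₀, div_le_div_iff₀ (Complex.normSq_pos.2 nF)
    (Complex.normSq_pos.2 nv)] at k2
  exact k2

/-- Schwarz-Pick, closed target -/
lemma aux_sp {F : ℂ → ℂ} (hF : DifferentiableOn ℂ F (ball 0 1))
    (hm : MapsTo F (ball 0 1) (closedBall 0 1)) {v w : ℂ} (hv : ‖v‖ < 1) (hw : ‖w‖ < 1) :
    normSq (F v - F w) * normSq (1 - conj w * v) ≤
      normSq (v - w) * normSq (1 - conj (F w) * F v) := by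
  have h1 : ∀ᶠ t : ℝ in 𝓝[<] 1,
      normSq (t * F v - t * F w) * normSq (1 - conj w * v) ≤
      normSq (v - w) * normSq (1 - conj (t * F w) * (t * F v)) := by
    filter_upwards [Ioo_mem_nhdsLT (show (0:ℝ) < 1 by norm_num)] with t ht
    refine aux_sp_strict (F := fun z => t * F z) (hF.const_mul _) ?_ hv hw
    intro z hz
    have := hm hz
    simp only [mem_closedBall, mem_ball, dist_zero_right, norm_mul, Complex.norm_real,
      Real.norm_eq_abs, abs_of_pos ht.1] at this ⊢
    nlinarith [ht.1, ht.2, norm_nonneg (F z)]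
  refine le_of_tendsto_of_tendsto ?_ ?_ h1
  · have : Continuous fun t : ℝ =>
      normSq (t * F v - t * F w) * normSq (1 - conj w * v) := by fun_prop
    simpa using (this.tendsto 1).mono_left nhdsWithin_le_nhds
  · have : Continuous fun t : ℝ =>
      normSq (v - w) * normSq (1 - conj (t * F w) * (t * F v)) := by
        refine continuous_const.mul (Complex.continuous_normSq.comp ?_)
        refine continuous_const.sub ((Complex.continuous_conj.comp ?_).mul ?_) <;> fun_prop
    simpa using (this.tendsto 1).mono_left nhdsWithin_le_nhds

/-- 1-Lipschitz estimate -/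
lemma aux_lip {F : ℂ → ℂ} (hF : DifferentiableOn ℂ F (ball 0 1))
    (hm : MapsTo F (ball 0 1) (closedBall 0 1)) {v w : ℂ} (hv : ‖v‖ < 1) (hw : ‖w‖ < 1)
    (hv' : ‖v‖ ≤ ‖F v‖) (hw' : ‖w‖ ≤ ‖F w‖) : ‖F v - F w‖ ≤ ‖v - w‖ := by
  have h := aux_sp hF hm hv hw
  rw [aux_normSq_id, aux_normSq_id] at h
  have a1 : normSq v ≤ normSq (F v) := by
    rw [Complex.normSq_eq_norm_sq, Complex.normSq_eq_norm_sq]; gcongr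
  have a2 : normSq w ≤ normSq (F w) := by
    rw [Complex.normSq_eq_norm_sq, Complex.normSq_eq_norm_sq]; gcongr
  have b1 : normSq (F v) ≤ 1 := by
    rw [Complex.normSq_eq_norm_sq]
    have : ‖F v‖ ≤ 1 := by simpa using hm (show v ∈ ball (0 : ℂ) 1 by simpa using hv)
    nlinarith [norm_nonneg (F v)]
  have b2 : normSq (F w) ≤ 1 := by
    rw [Complex.normSq_eq_norm_sq]
    have : ‖F w‖ ≤ 1 := by simpa using hm (show w ∈ ball (0 : ℂ) 1 by simpa using hw)
    nlinarith [norm_nonneg (F w)]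
  have c1 := aux_normSq_lt.2 hv
  have c2 := aux_normSq_lt.2 hw
  have hP : (1 - normSq (F w)) * (1 - normSq (F v)) ≤ (1 - normSq w) * (1 - normSq v) := by
    apply mul_le_mul <;> linarith
  have hpos : 0 < (1 - normSq w) * (1 - normSq v) := mul_pos (by linarith) (by linarith)
  have hfin : normSq (F v - F w) ≤ normSq (v - w) := by
    have := mul_le_mul_of_nonneg_left hP (Complex.normSq_nonneg (v - w))
    refine le_of_mul_le_mul_right (a := (1 - normSq w) * (1 - normSq v)) ?_ hpos
    nlinarith
  rw [Complex.normSq_eq_norm_sq, Complex.normSq_eq_norm_sq] at hfin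
  exact (sq_le_sq₀ (norm_nonneg _) (norm_nonneg _)).1 hfin

/-- Pick inequality with a node at 0, strict -/
lemma aux_pick_strict {h : ℂ → ℂ} (hF : DifferentiableOn ℂ h (ball 0 1))
    (hm : MapsTo h (ball 0 1) (ball 0 1)) {v w : ℂ} (hv : ‖v‖ < 1) (hw : ‖w‖ < 1) :
    normSq (h 0) * normSq (h v - h w) ≤
      (1 - normSq (h 0)) * ((1 - normSq (h v)) / (1 - normSq v) + (1 - normSq (h w)) / (1 - normSq w)
        - 2 * ((1 - conj (h w) * h v) / (1 - conj w * v)).re) := by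
  have h0 : ‖h 0‖ < 1 := by simpa using hm (show (0:ℂ) ∈ ball (0 : ℂ) 1 by simp)
  have m2 : MapsTo (fun z => (z - h 0) / (1 - conj (h 0) * z)) (ball 0 1) (ball 0 1) := by
    intro z hz
    simpa using aux_mob h0 (by simpa using hz)
  have hd := (aux_mob_diff h0).comp hF hm
  set B := (fun z => (z - h 0) / (1 - conj (h 0) * z)) ∘ h with hB
  have hB0 : B 0 = 0 := by simp [hB]
  set F := dslope B 0 with hFdef
  have hBm : MapsTo B (ball 0 1) (closedBall (B 0) 1) := by
    rw [hB0]; exact (m2.comp hm).mono_right ball_subset_closedBall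
  have hFd : DifferentiableOn ℂ F (ball 0 1) :=
    (differentiableOn_dslope (ball_mem_nhds _ one_pos)).2 hd
  have hFm : MapsTo F (ball 0 1) (closedBall 0 1) := by
    intro z hz
    simpa using norm_dslope_le_div_of_mapsTo_ball hd hBm hz
  have hFz : ∀ z, ‖z‖ < 1 → z * F z * (1 - conj (h 0) * h z) = h z - h 0 := by
    intro z hz
    have h1 : ‖h z‖ < 1 := by simpa using hm (show z ∈ ball (0 : ℂ) 1 by simpa using hz)
    have h2 := sub_smul_dslope B 0 z
    rw [hB0] at h2
    simp only [sub_zero, smul_eq_mul] at h2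
    rw [hFdef, h2, hB]
    exact div_mul_cancel₀ _ (aux_one_sub_ne h0 h1.le)
  have sp := aux_sp hFd hFm hv hw
  have e1 := hFz v hv
  have e2 := hFz w hw
  have nvw := aux_one_sub_ne hw hv.le
  have pv : 0 < 1 - normSq v := by linarith [aux_normSq_lt.2 hv]
  have pw : 0 < 1 - normSq w := by linarith [aux_normSq_lt.2 hw]
  have fv : 0 ≤ 1 - normSq (F v) := by
    have : ‖F v‖ ≤ 1 := by simpa using hFm (show v ∈ ball (0 : ℂ) 1 by simpa using hv)
    rw [Complex.normSq_eq_norm_sq]; nlinarith [norm_nonneg (F v)]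
  have fw : 0 ≤ 1 - normSq (F w) := by
    have : ‖F w‖ ≤ 1 := by simpa using hFm (show w ∈ ball (0 : ℂ) 1 by simpa using hw)
    rw [Complex.normSq_eq_norm_sq]; nlinarith [norm_nonneg (F w)]
  -- abbreviate the values
  generalize F v = f at *
  generalize F w = g at *
  generalize h v = x at *
  generalize h w = y at *
  generalize h 0 = c at *
  set a := 1 - conj c * x with ha
  set b := 1 - conj c * y with hb
  set q := (1 - conj g * f) / (1 - conj w * v) with hq
  have idd : ∀ s t r : ℂ, ((1 - normSq c : ℝ) : ℂ) * (1 - conj t * s)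
      = (1 - conj c * s) * conj (1 - conj c * t) - (s - c) * conj (t - c) := by
    intro s t r
    rw [Complex.ofReal_sub, ← Complex.mul_conj]
    simp
    ring
  have idr : ∀ s : ℂ, (1 - normSq c) * (1 - normSq s)
      = normSq (1 - conj c * s) - normSq (s - c) := by
    intro s
    rw [aux_normSq_id]; ring
  have d1 : (1 - normSq c) * ((1 - normSq x) / (1 - normSq v)) =
      normSq a + normSq (a * v) * ((1 - normSq f) / (1 - normSq v)) := by
    rw [← mul_div_assoc, idr, ← e1, div_eq_iff pv.ne', add_mul, mul_assoc (normSq (a * v)), div_mul_cancel₀ _ pv.ne']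
    simp only [map_mul]; ring
  have d2 : (1 - normSq c) * ((1 - normSq y) / (1 - normSq w)) =
      normSq b + normSq (b * w) * ((1 - normSq g) / (1 - normSq w)) := by
    rw [← mul_div_assoc, idr, ← e2, div_eq_iff pw.ne', add_mul, mul_assoc (normSq (b * w)), div_mul_cancel₀ _ pw.ne']
    simp only [map_mul]; ring
  have d3 : ((1 - normSq c : ℝ) : ℂ) * ((1 - conj y * x) / (1 - conj w * v)) =
      a * conj b + (a * v) * conj (b * w) * q := by
    rw [← mul_div_assoc, idd x y 0, ← e1, ← e2, div_eq_iff nvw, add_mul, mul_assoc _ q, hq,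
      div_mul_cancel₀ _ nvw]
    simp only [map_mul]; ring
  have d3' : (1 - normSq c) * ((1 - conj y * x) / (1 - conj w * v)).re =
      (a * conj b).re + ((a * v) * conj (b * w) * q).re := by
    rw [← Complex.re_ofReal_mul, d3, Complex.add_re]
  have hab : normSq c * normSq (x - y) = normSq a + normSq b - 2 * (a * conj b).re := by
    rw [← Complex.normSq_sub, ha, hb]
    rw [show (1 - conj c * x - (1 - conj c * y)) = - (conj c * (x - y)) by ring]
    simp
  -- Schwarz-Pick
  have hqq : normSq q ≤ ((1 - normSq f) / (1 - normSq v)) * ((1 - normSq g) / (1 - normSq w)) := by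
    rw [hq, map_div₀, div_mul_div_comm, div_le_div_iff₀ (Complex.normSq_pos.2 nvw) (mul_pos pv pw)]
    rw [aux_normSq_id, aux_normSq_id] at *
    nlinarith
  set q1 := (1 - normSq f) / (1 - normSq v)
  set q2 := (1 - normSq g) / (1 - normSq w)
  have q1n : 0 ≤ q1 := div_nonneg fv pv.le
  have q2n : 0 ≤ q2 := div_nonneg fw pw.le
  have hre : ((a * v) * conj (b * w) * q).re ≤ ‖a * v‖ * ‖b * w‖ * ‖q‖ := by
    refine (Complex.re_le_norm _).trans ?_
    rw [norm_mul, norm_mul, Complex.norm_conj]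
  have hfin : 2 * (‖a * v‖ * ‖b * w‖ * ‖q‖) ≤ ‖a * v‖ ^ 2 * q1 + ‖b * w‖ ^ 2 * q2 := by
    rw [Complex.normSq_eq_norm_sq] at hqq
    have hs : ‖q‖ ≤ √q1 * √q2 := by
      rw [← Real.sqrt_mul q1n]; exact Real.le_sqrt_of_sq_le hqq
    have := mul_le_mul_of_nonneg_left hs (mul_nonneg (norm_nonneg (a * v)) (norm_nonneg (b * w)))
    nlinarith [sq_nonneg (‖a * v‖ * √q1 - ‖b * w‖ * √q2), Real.sq_sqrt q1n, Real.sq_sqrt q2n]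
  rw [← Complex.normSq_eq_norm_sq, ← Complex.normSq_eq_norm_sq] at hfin
  rw [hab]
  linarith [d1, d2, d3', hre, hfin]

lemma aux_pick {h : ℂ → ℂ} (hF : DifferentiableOn ℂ h (ball 0 1))
    (hm : MapsTo h (ball 0 1) (closedBall 0 1)) {v w : ℂ} (hv : ‖v‖ < 1) (hw : ‖w‖ < 1) :
    normSq (h 0) * normSq (h v - h w) ≤
      (1 - normSq (h 0)) * ((1 - normSq (h v)) / (1 - normSq v) + (1 - normSq (h w)) / (1 - normSq w)
        - 2 * ((1 - conj (h w) * h v) / (1 - conj w * v)).re) := by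
  have h1 : ∀ᶠ t : ℝ in 𝓝[<] 1,
    normSq (t * h 0) * normSq (t * h v - t * h w) ≤
      (1 - normSq (t * h 0)) * ((1 - normSq (t * h v)) / (1 - normSq v)
        + (1 - normSq (t * h w)) / (1 - normSq w)
        - 2 * ((1 - conj (t * h w) * (t * h v)) / (1 - conj w * v)).re) := by
    filter_upwards [Ioo_mem_nhdsLT (show (0:ℝ) < 1 by norm_num)] with t ht
    refine aux_pick_strict (h := fun z => t * h z) (hF.const_mul _) ?_ hv hw
    intro z hz
    have := hm hz
    simp only [mem_closedBall, mem_ball, dist_zero_right, norm_mul, Complex.norm_real,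
      Real.norm_eq_abs, abs_of_pos ht.1] at this ⊢
    nlinarith [ht.1, ht.2, norm_nonneg (h z)]
  have cc : ∀ x : ℂ, Continuous fun t : ℝ => (t : ℂ) * x := fun x => by fun_prop
  have cn : ∀ x : ℂ, Continuous fun t : ℝ => normSq ((t : ℂ) * x) := fun x =>
    Complex.continuous_normSq.comp (cc x)
  refine le_of_tendsto_of_tendsto ?_ ?_ h1
  · have : Continuous fun t : ℝ => normSq (t * h 0) * normSq (t * h v - t * h w) := by fun_prop
    simpa using (this.tendsto 1).mono_left nhdsWithin_le_nhds
  · have : Continuous fun t : ℝ =>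
      (1 - normSq (t * h 0)) * ((1 - normSq (t * h v)) / (1 - normSq v)
        + (1 - normSq (t * h w)) / (1 - normSq w)
        - 2 * ((1 - conj (t * h w) * (t * h v)) / (1 - conj w * v)).re) := by
        refine (continuous_const.sub (cn _)).mul ((((continuous_const.sub (cn _)).div_const _).add
          ((continuous_const.sub (cn _)).div_const _)).sub (continuous_const.mul
            (Complex.continuous_re.comp (Continuous.div_const ?_ _))))
        exact continuous_const.sub ((Complex.continuous_conj.comp (cc _)).mul (cc _))
    simpa using (this.tendsto 1).mono_left nhdsWithin_le_nhds

/-- the key modulus of continuity -/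
lemma aux_modulus {h : ℂ → ℂ} (hF : DifferentiableOn ℂ h (ball 0 1))
    (hm : MapsTo h (ball 0 1) (closedBall 0 1)) {v w x y : ℂ} (hv : ‖v‖ < 1) (hw : ‖w‖ < 1)
    (hx : ‖x‖ < 1) (hy : ‖y‖ < 1) (ev : v = x * h v) (ew : w = y * h w) :
    ‖h 0‖ ^ 2 * ‖h v - h w‖ ^ 4 ≤ 4 * ‖1 - conj y * x‖ := by
  have mem : ∀ z, ‖z‖ < 1 → ‖h z‖ ≤ 1 := fun z hz => by
    simpa using hm (show z ∈ ball (0 : ℂ) 1 by simpa using hz)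
  have hv' : ‖v‖ ≤ ‖h v‖ := by
    have : ‖v‖ = ‖x‖ * ‖h v‖ := by rw [← norm_mul, ← ev]
    nlinarith [norm_nonneg (h v)]
  have hw' : ‖w‖ ≤ ‖h w‖ := by
    have : ‖w‖ = ‖y‖ * ‖h w‖ := by rw [← norm_mul, ← ew]
    nlinarith [norm_nonneg (h w)]
  have hl := aux_lip hF hm hv hw hv' hw'
  have hp := aux_pick hF hm hv hw
  have pv : 0 < 1 - normSq v := by linarith [aux_normSq_lt.2 hv]
  have pw : 0 < 1 - normSq w := by linarith [aux_normSq_lt.2 hw]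
  have D1 : (1 - normSq (h v)) / (1 - normSq v) ≤ 1 := by
    rw [div_le_one pv, Complex.normSq_eq_norm_sq, Complex.normSq_eq_norm_sq]; gcongr
  have D2 : (1 - normSq (h w)) / (1 - normSq w) ≤ 1 := by
    rw [div_le_one pw, Complex.normSq_eq_norm_sq, Complex.normSq_eq_norm_sq]; gcongr
  have nvw := aux_one_sub_ne hw hv.le
  have P : 1 - (1 - conj (h w) * h v) / (1 - conj w * v) =
      (conj (h w) * h v * (1 - conj y * x)) / (1 - conj w * v) := by
    rw [eq_div_iff nvw, sub_mul, div_mul_cancel₀ _ nvw]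
    have : conj w * v = (conj y * conj (h w)) * (x * h v) := by
      rw [← map_mul, ← ew, ← ev]
    rw [this]; ring
  have R : 1 - ((1 - conj (h w) * h v) / (1 - conj w * v)).re ≤
      ‖1 - conj y * x‖ / ‖1 - conj w * v‖ := by
    rw [← Complex.one_re, ← Complex.sub_re, P]
    refine (Complex.re_le_norm _).trans ?_
    rw [norm_div, norm_mul, norm_mul, Complex.norm_conj]
    gcongr
    have := mul_le_one₀ (mem w hw) (norm_nonneg _) (mem v hv)
    nlinarith [norm_nonneg (1 - conj y * x)]
  have lowr : ‖v - w‖ ^ 2 ≤ 2 * ‖1 - conj w * v‖ := by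
    have h1 := Complex.re_le_norm (1 - conj w * v)
    have h2 : ‖v - w‖ ^ 2 = 2 * (1 - conj w * v).re - (1 - normSq v) - (1 - normSq w) := by
      rw [← Complex.normSq_eq_norm_sq]; simp [Complex.normSq_apply]; ring
    linarith
  have c0 : normSq (h 0) ≤ 1 := by
    rw [Complex.normSq_eq_norm_sq]; nlinarith [mem 0 (by simp), norm_nonneg (h 0)]
  have c1 := Complex.normSq_nonneg (h 0)
  have npos : 0 < ‖1 - conj w * v‖ := norm_pos_iff.2 nvw
  have E : ‖h 0‖ ^ 2 * ‖h v - h w‖ ^ 2 ≤ 2 * (‖1 - conj y * x‖ / ‖1 - conj w * v‖) := by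
    rw [← Complex.normSq_eq_norm_sq, ← Complex.normSq_eq_norm_sq]
    have hQ : 0 ≤ ‖1 - conj y * x‖ / ‖1 - conj w * v‖ := by positivity
    have : (1 - normSq (h 0)) * ((1 - normSq (h v)) / (1 - normSq v)
        + (1 - normSq (h w)) / (1 - normSq w)
        - 2 * ((1 - conj (h w) * h v) / (1 - conj w * v)).re) ≤
        (1 - normSq (h 0)) * (2 * (‖1 - conj y * x‖ / ‖1 - conj w * v‖)) := by
      apply mul_le_mul_of_nonneg_left _ (by linarith)
      linarith
    nlinarith
  rw [← mul_div_assoc, le_div_iff₀ npos] at E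
  have hl2 : ‖h v - h w‖ ^ 2 ≤ ‖v - w‖ ^ 2 := by gcongr
  calc ‖h 0‖ ^ 2 * ‖h v - h w‖ ^ 4 = ‖h 0‖ ^ 2 * ‖h v - h w‖ ^ 2 * ‖h v - h w‖ ^ 2 := by ring
    _ ≤ ‖h 0‖ ^ 2 * ‖h v - h w‖ ^ 2 * (2 * ‖1 - conj w * v‖) := by
        gcongr; linarith
    _ ≤ _ := by linarith

lemma aux_exists_h {Φ : ℂ → ℂ} (hΦ : AnalyticOnNhd ℂ Φ (ball 0 1)) (hΦ0 : Φ 0 = 0)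
    (hΦge : ∀ z ∈ ball (0 : ℂ) 1, ‖z‖ ≤ ‖Φ z‖) :
    ∃ h : ℂ → ℂ, DifferentiableOn ℂ h (ball 0 1) ∧ MapsTo h (ball 0 1) (closedBall 0 1) ∧
      ∀ z ∈ ball (0 : ℂ) 1, h z ≠ 0 ∧ z = Φ z * h z := by
  set g := dslope Φ 0 with hg
  have hgd : DifferentiableOn ℂ g (ball 0 1) :=
    (differentiableOn_dslope (ball_mem_nhds _ one_pos)).2 hΦ.differentiableOn
  have hgz : ∀ z, z * g z = Φ z := by
    intro z
    have h2 := sub_smul_dslope Φ 0 z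
    simpa [hΦ0] using h2
  have hge' : ∀ z ∈ ball (0 : ℂ) 1, z ≠ 0 → 1 ≤ ‖g z‖ := by
    intro z hz hz0
    have h1 := hΦge z hz
    rw [← hgz z, norm_mul] at h1
    have : 0 < ‖z‖ := norm_pos_iff.2 hz0
    nlinarith
  have hge : ∀ z ∈ ball (0 : ℂ) 1, 1 ≤ ‖g z‖ := by
    intro z hz
    by_cases hz0 : z = 0
    · subst hz0
      have hc : ContinuousAt g 0 := hgd.continuousOn.continuousAt (ball_mem_nhds _ one_pos)
      have ht : Tendsto (fun z => ‖g z‖) (𝓝[≠] 0) (𝓝 ‖g 0‖) :=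
        (hc.norm.tendsto).mono_left nhdsWithin_le_nhds
      refine ge_of_tendsto ht ?_
      filter_upwards [self_mem_nhdsWithin,
        mem_nhdsWithin_of_mem_nhds (ball_mem_nhds (0:ℂ) one_pos)] with z h1 h2
      exact hge' z h2 h1
    · exact hge' z hz hz0
  have hne : ∀ z ∈ ball (0 : ℂ) 1, g z ≠ 0 := by
    intro z hz h0
    have := hge z hz
    rw [h0, norm_zero] at this
    linarith
  refine ⟨fun z => (g z)⁻¹, hgd.inv hne, ?_, ?_⟩
  · intro z hz
    simpa using inv_le_one_of_one_le₀ (hge z hz)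
  · intro z hz
    refine ⟨inv_ne_zero (hne z hz), ?_⟩
    rw [← hgz z, mul_assoc, mul_inv_cancel₀ (hne z hz), mul_one]

lemma aux_surj {Φ : ℂ → ℂ} (hΦ : AnalyticOnNhd ℂ Φ (ball 0 1)) (hΦ0 : Φ 0 = 0)
    (hΦge : ∀ z ∈ ball (0 : ℂ) 1, ‖z‖ ≤ ‖Φ z‖) :
    ball (0 : ℂ) 1 ⊆ Φ '' ball 0 1 := by
  have hpc : IsPreconnected (ball (0 : ℂ) 1) := (convex_ball _ _).isPreconnected
  have hopen : IsOpen (Φ '' ball 0 1) := by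
    rcases hΦ.is_constant_or_isOpen hpc with ⟨w, hw⟩ | h
    · exfalso
      have h1 : (1 / 2 : ℂ) ∈ ball (0 : ℂ) 1 := by simp; norm_num
      have h2 := hΦge _ h1
      rw [hw _ h1, ← hw 0 (by simp), hΦ0] at h2
      norm_num at h2
    · exact h _ subset_rfl isOpen_ball
  refine hpc.subset_of_closure_inter_subset hopen ⟨0, by simp, 0, by simp, hΦ0⟩ ?_
  rintro z ⟨hz, hzb⟩
  obtain ⟨r, hr1, hr2⟩ := exists_between (show ‖z‖ < 1 by simpa using hzb)
  have hsub : closedBall (0 : ℂ) r ⊆ ball 0 1 := closedBall_subset_ball hr2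
  have hK : IsClosed (Φ '' closedBall 0 r) :=
    ((isCompact_closedBall 0 r).image_of_continuousOn (hΦ.continuousOn.mono hsub)).isClosed
  by_contra hcon
  have hzK : z ∉ Φ '' closedBall 0 r := fun h => hcon (image_mono hsub h)
  obtain ⟨y, ⟨hy1, hy2⟩, w, hw, rfl⟩ := mem_closure_iff.1 hz _ (hK.isOpen_compl.inter
    (isOpen_ball (x := (0 : ℂ)) (ε := r))) ⟨hzK, by simpa using hr1⟩
  apply hy1
  refine ⟨w, ?_, rfl⟩
  have := hΦge w hw
  simp only [mem_ball, dist_zero_right] at hy2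
  simp only [mem_closedBall, dist_zero_right]
  linarith

set_option maxHeartbeats 1000000 in
theorem global_inverse_exists_unique (Φ : ℂ → ℂ)
    (hΦ : AnalyticOnNhd ℂ Φ (ball 0 1)) (hΦ0 : Φ 0 = 0)
    (hΦge : ∀ z ∈ ball (0 : ℂ) 1, ‖z‖ ≤ ‖Φ z‖) :
    ∃ ω : ℂ → ℂ, IsGlobalInverse Φ ω ∧
      ∀ ω' : ℂ → ℂ, IsGlobalInverse Φ ω' → Set.EqOn ω' ω (closedBall 0 1) := by
  obtain ⟨h, hd, hm, hh⟩ := aux_exists_h hΦ hΦ0 hΦge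
  have mem : ∀ z ∈ ball (0 : ℂ) 1, ‖h z‖ ≤ 1 := fun z hz => by simpa using hm hz
  -- Lipschitz facts
  have lip : ∀ v ∈ ball (0 : ℂ) 1, ∀ w ∈ ball (0 : ℂ) 1, ‖Φ v‖ < 1 → ‖Φ w‖ < 1 →
      ‖h v - h w‖ ≤ ‖v - w‖ := by
    intro v hv w hw h1 h2
    have e1 : ‖v‖ = ‖Φ v‖ * ‖h v‖ := by rw [← norm_mul, ← (hh v hv).2]
    have e2 : ‖w‖ = ‖Φ w‖ * ‖h w‖ := by rw [← norm_mul, ← (hh w hw).2]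
    refine aux_lip hd hm (by simpa using hv) (by simpa using hw) ?_ ?_
    · nlinarith [norm_nonneg (h v)]
    · nlinarith [norm_nonneg (h w)]
  have lip2 : ∀ v ∈ ball (0 : ℂ) 1, ∀ w ∈ ball (0 : ℂ) 1, ‖Φ v‖ < 1 → ‖Φ w‖ < 1 →
      (1 - ‖Φ v‖) * ‖v - w‖ ≤ ‖Φ v - Φ w‖ := by
    intro v hv w hw h1 h2
    have h3 := lip v hv w hw h1 h2
    have h4 : v - w = Φ v * (h v - h w) + (Φ v - Φ w) * h w := by
      linear_combination (hh v hv).2 - (hh w hw).2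
    have h5 : ‖v - w‖ ≤ ‖Φ v‖ * ‖h v - h w‖ + ‖Φ v - Φ w‖ * ‖h w‖ := by
      rw [← norm_mul, ← norm_mul]
      conv_lhs => rw [h4]
      exact norm_add_le _ _
    have h6 := mul_le_mul_of_nonneg_left h3 (norm_nonneg (Φ v))
    have h7 := mul_le_mul_of_nonneg_left (mem w hw) (norm_nonneg (Φ v - Φ w))
    linarith
  have inj : ∀ v ∈ ball (0 : ℂ) 1, ∀ w ∈ ball (0 : ℂ) 1, ‖Φ v‖ < 1 → Φ v = Φ w → v = w := by
    intro v hv w hw h1 h2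
    have h3 := lip2 v hv w hw h1 (h2 ▸ h1)
    rw [h2, sub_self, norm_zero] at h3
    rw [h2] at h1
    have h4 : ‖v - w‖ = 0 := by nlinarith [norm_nonneg (v - w)]
    exact sub_eq_zero.1 (norm_eq_zero.1 h4)
  -- the interior inverse
  have hsurj : ∀ z ∈ ball (0 : ℂ) 1, ∃ w, w ∈ ball (0 : ℂ) 1 ∧ Φ w = z :=
    fun z hz => aux_surj hΦ hΦ0 hΦge hz
  choose! o ho1 ho2 using hsurj
  have nrm : ∀ z ∈ ball (0 : ℂ) 1, ‖z‖ < 1 := fun z hz => by simpa using hz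
  have ho3 : ∀ z ∈ ball (0 : ℂ) 1, ‖Φ (o z)‖ < 1 := fun z hz => by
    rw [ho2 z hz]; exact nrm z hz
  have hoh : ∀ z ∈ ball (0 : ℂ) 1, o z = z * h (o z) := fun z hz => by
    have := (hh (o z) (ho1 z hz)).2
    rwa [ho2 z hz] at this
  have ocont : ∀ z ∈ ball (0 : ℂ) 1, ContinuousAt o z := by
    intro z hz
    have hz1 : 0 < 1 - ‖z‖ := by linarith [nrm z hz]
    have ht : Tendsto (fun y => ‖z - y‖ / (1 - ‖z‖)) (𝓝 z) (𝓝 0) := by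
      have : Continuous fun y => ‖z - y‖ / (1 - ‖z‖) := by fun_prop
      simpa using this.tendsto z
    refine tendsto_iff_dist_tendsto_zero.2 (squeeze_zero' (Eventually.of_forall fun _ => dist_nonneg)
      ?_ ht)
    filter_upwards [isOpen_ball.mem_nhds hz] with y hy
    have := lip2 (o z) (ho1 z hz) (o y) (ho1 y hy) (ho3 z hz) (ho3 y hy)
    rw [ho2 z hz, ho2 y hy] at this
    rw [dist_comm, dist_eq_norm, le_div_iff₀ hz1]
    linarith
  have oC : ContinuousOn o (ball 0 1) := fun z hz => (ocont z hz).continuousWithinAt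
  have odiff : DifferentiableOn ℂ o (ball 0 1) := by
    intro z hz
    have hw := ho1 z hz
    have hΦd : HasDerivAt Φ (deriv Φ (o z)) (o z) := (hΦ _ hw).differentiableAt.hasDerivAt
    have hhd : HasDerivAt h (deriv h (o z)) (o z) :=
      (hd.differentiableAt (isOpen_ball.mem_nhds hw)).hasDerivAt
    have hne : deriv Φ (o z) ≠ 0 := by
      intro h0
      have hprod := hΦd.mul hhd
      have hid : HasDerivAt (fun y : ℂ => Φ y * h y) 1 (o z) := by
        refine (hasDerivAt_id (o z)).congr_of_eventuallyEq ?_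
        filter_upwards [isOpen_ball.mem_nhds hw] with y hy
        exact (hh y hy).2.symm
      have e := hprod.unique hid
      rw [h0, zero_mul, zero_add] at e
      have hle : ‖deriv h (o z)‖ ≤ 1 := by
        refine hhd.le_of_lip' zero_le_one ?_
        have hopen : ∀ᶠ y in 𝓝 (o z), ‖Φ y‖ < 1 :=
          hΦd.continuousAt.norm.eventually_lt continuousAt_const (ho3 z hz)
        filter_upwards [isOpen_ball.mem_nhds hw, hopen] with y hy hy2
        rw [one_mul]
        exact lip y hy _ hw hy2 (ho3 z hz)
      have : ‖Φ (o z)‖ * ‖deriv h (o z)‖ = 1 := by rw [← norm_mul, e, norm_one]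
      nlinarith [ho3 z hz, norm_nonneg (Φ (o z))]
    refine (HasDerivAt.of_local_left_inverse (ocont z hz) hΦd hne ?_).differentiableAt
      |>.differentiableWithinAt
    filter_upwards [isOpen_ball.mem_nhds hz] with y hy using ho2 y hy
  -- limits at the boundary
  have hcl : closure (ball (0 : ℂ) 1) = closedBall 0 1 := closure_ball _ one_ne_zero
  have h0ne : h 0 ≠ 0 := (hh 0 (by simp)).1
  have h0pos : 0 < ‖h 0‖ ^ 2 := by positivity
  have olim : ∀ z ∈ closedBall (0 : ℂ) 1, ∃ y, Tendsto o (𝓝[ball 0 1] z) (𝓝 y) := by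
    intro z hz
    by_cases hzb : z ∈ ball (0 : ℂ) 1
    · exact ⟨o z, oC z hzb⟩
    have hz1 : ‖z‖ = 1 := le_antisymm (by simpa using hz) (by simpa using hzb)
    have : (𝓝[ball 0 1] z).NeBot := mem_closure_iff_nhdsWithin_neBot.1 (hcl ▸ hz)
    rw [← cauchy_map_iff_exists_tendsto, cauchy_map_iff]
    refine ⟨inferInstance, ?_⟩
    rw [tendsto_uniformity_iff_dist_tendsto_zero]
    set b : ℂ × ℂ → ℝ := fun p =>
      √(√(4 * ‖1 - conj p.2 * p.1‖ / ‖h 0‖ ^ 2)) + ‖p.1 - p.2‖ with hb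
    have hbc : Continuous b := by
      have : Continuous fun p : ℂ × ℂ => conj p.2 := Complex.continuous_conj.comp continuous_snd
      fun_prop
    have hbz : b (z, z) = 0 := by
      have : conj z * z = 1 := by
        rw [mul_comm, Complex.mul_conj, Complex.normSq_eq_norm_sq, hz1]; simp
      simp [hb, this]
    have hbt : Tendsto b (𝓝[ball 0 1] z ×ˢ 𝓝[ball 0 1] z) (𝓝 0) := by
      rw [← hbz]
      refine (hbc.tendsto (z, z)).mono_left ?_
      rw [nhds_prod_eq]
      exact Filter.prod_mono nhdsWithin_le_nhds nhdsWithin_le_nhds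
    refine squeeze_zero' (Eventually.of_forall fun _ => dist_nonneg) ?_ hbt
    have hev : ∀ᶠ p in 𝓝[ball 0 1] z ×ˢ 𝓝[ball 0 1] z,
        p.1 ∈ ball (0 : ℂ) 1 ∧ p.2 ∈ ball (0 : ℂ) 1 :=
      prod_mem_prod self_mem_nhdsWithin self_mem_nhdsWithin
    filter_upwards [hev] with p hp
    obtain ⟨hx, hy⟩ := hp
    have key := aux_modulus hd hm (nrm _ (ho1 _ hx)) (nrm _ (ho1 _ hy)) (nrm _ hx) (nrm _ hy)
      (hoh _ hx) (hoh _ hy)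
    have k2 : ‖h (o p.1) - h (o p.2)‖ ≤ √(√(4 * ‖1 - conj p.2 * p.1‖ / ‖h 0‖ ^ 2)) := by
      apply Real.le_sqrt_of_sq_le
      apply Real.le_sqrt_of_sq_le
      rw [le_div_iff₀ h0pos]
      linarith
    have k3 : o p.1 - o p.2 = p.1 * (h (o p.1) - h (o p.2)) + (p.1 - p.2) * h (o p.2) := by
      linear_combination hoh _ hx - hoh _ hy
    rw [dist_eq_norm]
    have k4 : ‖o p.1 - o p.2‖ ≤
        ‖p.1‖ * ‖h (o p.1) - h (o p.2)‖ + ‖p.1 - p.2‖ * ‖h (o p.2)‖ := by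
      rw [← norm_mul, ← norm_mul, k3]
      exact norm_add_le _ _
    have k5 := mul_le_mul_of_nonneg_right (nrm _ hx).le (norm_nonneg (h (o p.1) - h (o p.2)))
    have k6 := mul_le_mul_of_nonneg_left (mem _ (ho1 _ hy)) (norm_nonneg (p.1 - p.2))
    simp only [hb]
    linarith
  set ω := extendFrom (ball (0 : ℂ) 1) o with hω
  have ωC : ContinuousOn ω (closedBall 0 1) := continuousOn_extendFrom hcl.ge olim
  have ωe : ∀ z ∈ ball (0 : ℂ) 1, ω z = o z := extendFrom_extends oC
  have ωt : ∀ z ∈ closedBall (0 : ℂ) 1, Tendsto o (𝓝[ball 0 1] z) (𝓝 (ω z)) := by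
    intro z hz
    refine ((ωC z hz).mono ball_subset_closedBall).congr' ?_
    filter_upwards [self_mem_nhdsWithin] with y hy using ωe y hy
  have nb : ∀ z ∈ closedBall (0 : ℂ) 1, (𝓝[ball 0 1] z).NeBot := fun z hz =>
    mem_closure_iff_nhdsWithin_neBot.1 (hcl ▸ hz)
  have hz0 : (0 : ℂ) ∈ ball (0 : ℂ) 1 := by simp
  have ω0 : ω 0 = 0 := by rw [ωe 0 hz0, hoh 0 hz0, zero_mul]
  have evne : ∀ z : ℂ, z ≠ 0 → ∀ᶠ y in 𝓝[ball 0 1] z, y ≠ 0 := fun z hz =>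
    mem_nhdsWithin_of_mem_nhds (isOpen_ne.mem_nhds hz)
  have hdivo : ∀ z ∈ ball (0 : ℂ) 1, z ≠ 0 → o z / z = h (o z) := fun z hz hz0 => by
    rw [div_eq_iff hz0, mul_comm]; exact hoh z hz
  have claimA : ∀ z ∈ closedBall (0 : ℂ) 1, z ≠ 0 → ‖ω z / z - h 0‖ ≤ ‖ω z‖ := by
    intro z hz hne
    have := nb z hz
    have t1 : Tendsto (fun y => ‖o y / y - h 0‖) (𝓝[ball 0 1] z) (𝓝 ‖ω z / z - h 0‖) :=
      (((ωt z hz).div (tendsto_id.mono_left nhdsWithin_le_nhds) hne).sub_const _).norm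
    refine le_of_tendsto_of_tendsto t1 (ωt z hz).norm ?_
    filter_upwards [self_mem_nhdsWithin, evne z hne] with y hy hy0
    rw [hdivo y hy hy0]
    simpa using lip (o y) (ho1 y hy) 0 hz0 (ho3 y hy) (by simp [hΦ0])
  have ωne : ∀ z ∈ closedBall (0 : ℂ) 1, z ≠ 0 → ω z ≠ 0 := by
    intro z hz hne h0
    have := claimA z hz hne
    rw [h0] at this
    simp at this
    exact h0ne this
  have claimB1 : ∀ z ∈ closedBall (0 : ℂ) 1, z ≠ 0 → ∀ y ∈ ball (0 : ℂ) 1, y ≠ 0 →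
      ‖ω z / z - o y / y‖ ≤ ‖ω z - o y‖ := by
    intro z hz hne y hy hy0
    have := nb z hz
    have t1 : Tendsto (fun x => ‖o x / x - o y / y‖) (𝓝[ball 0 1] z) (𝓝 ‖ω z / z - o y / y‖) :=
      (((ωt z hz).div (tendsto_id.mono_left nhdsWithin_le_nhds) hne).sub_const _).norm
    refine le_of_tendsto_of_tendsto t1 ((ωt z hz).sub_const _).norm ?_
    filter_upwards [self_mem_nhdsWithin, evne z hne] with x hx hx0
    rw [hdivo x hx hx0, hdivo y hy hy0]
    exact lip _ (ho1 x hx) _ (ho1 y hy) (ho3 x hx) (ho3 y hy)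
  have claimB : ∀ z ∈ closedBall (0 : ℂ) 1, z ≠ 0 → ∀ y ∈ closedBall (0 : ℂ) 1, y ≠ 0 →
      ‖ω z / z - ω y / y‖ ≤ ‖ω z - ω y‖ := by
    intro z hz hne y hy hy0
    have := nb y hy
    have t1 : Tendsto (fun x => ‖ω z / z - o x / x‖) (𝓝[ball 0 1] y) (𝓝 ‖ω z / z - ω y / y‖) :=
      (((ωt y hy).div (tendsto_id.mono_left nhdsWithin_le_nhds) hy0).const_sub _).norm
    refine le_of_tendsto_of_tendsto t1 ((ωt y hy).const_sub _).norm ?_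
    filter_upwards [self_mem_nhdsWithin, evne y hy0] with x hx hx0
    exact claimB1 z hz hne x hx hx0
  refine ⟨ω, ⟨ωC, ?_, ?_, ?_, ?_, ?_⟩, ?_⟩
  · intro x hx y hy hxy
    by_cases hx0 : x = 0
    · by_contra hne
      subst hx0
      exact ωne y hy (Ne.symm hne) (hxy ▸ ω0)
    by_cases hy0 : y = 0
    · subst hy0
      exact absurd (hxy.trans ω0) (ωne x hx hx0)
    have hB := claimB x hx hx0 y hy hy0
    rw [hxy, sub_self, norm_zero] at hB
    have h1 := sub_eq_zero.1 (norm_eq_zero.1 (le_antisymm hB (norm_nonneg _)))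
    rw [div_eq_div_iff hx0 hy0] at h1
    exact (mul_left_cancel₀ (ωne y hy hy0) h1).symm
  · intro z hz
    have := nb z hz
    refine isClosed_closedBall.mem_of_tendsto (ωt z hz) ?_
    filter_upwards [self_mem_nhdsWithin] with y hy using ball_subset_closedBall (ho1 y hy)
  · intro z hz
    rw [ωe z hz]
    exact ho1 z hz
  · refine DifferentiableOn.analyticOnNhd ?_ isOpen_ball
    exact odiff.congr ωe
  · intro z hz
    rw [ωe z hz]
    exact ho2 z hz
  · rintro ω' ⟨c', -, -, m', -, e'⟩
    have hEq : EqOn ω' ω (ball 0 1) := by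
      intro z hz
      rw [ωe z hz]
      refine inj _ (m' hz) _ (ho1 z hz) ?_ ?_
      · rw [e' z hz]; exact nrm z hz
      · rw [e' z hz, ho2 z hz]
    exact hEq.of_subset_closure c' ωC ball_subset_closedBall hcl.ge
end

section
/- The range ω(𝔻) satisfies ω(𝔻) = {z ∈ 𝔻 : |Φ(z)| < 1}, the topological boundary of ω(𝔻) equals ω(𝕋), and a point z ∈ 𝔻 lies on the curve ω(𝕋) if and only if |Φ(z)| = 1. -/
open Complex Set Metric

/-- Global inversion (Proposition 2.3 (2),(3)): if `Φ` is analytic on the open unit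
disc with `Φ(0) = 0` and `|Φ(z)| ≥ |z|`, and `ω` is the global inverse of `Φ`
(continuous and one-to-one on `𝔻̄`, `ω(𝔻) ⊆ 𝔻`, analytic in `𝔻`, `Φ(ω(z)) = z` on `𝔻`),
then `ω(𝔻) = {z ∈ 𝔻 : |Φ(z)| < 1}`, the topological boundary of `ω(𝔻)` is the curve
`ω(𝕋)`, and a point `z ∈ 𝔻` lies on `ω(𝕋)` if and only if `|Φ(z)| = 1`. -/
theorem global_inverse_range (Φ ω : ℂ → ℂ)
    (hΦ : AnalyticOnNhd ℂ Φ (ball 0 1)) (hΦ0 : Φ 0 = 0)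
    (hΦge : ∀ z ∈ ball (0 : ℂ) 1, ‖z‖ ≤ ‖Φ z‖)
    (hωc : ContinuousOn ω (closedBall 0 1)) (hωinj : Set.InjOn ω (closedBall 0 1))
    (hωmapsc : Set.MapsTo ω (closedBall 0 1) (closedBall 0 1))
    (hωmaps : Set.MapsTo ω (ball 0 1) (ball 0 1))
    (hωan : AnalyticOnNhd ℂ ω (ball 0 1))
    (hinv : ∀ z ∈ ball (0 : ℂ) 1, Φ (ω z) = z) :
    ω '' (ball 0 1) = {z ∈ ball (0 : ℂ) 1 | ‖Φ z‖ < 1} ∧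
    frontier (ω '' (ball 0 1)) = ω '' (sphere 0 1) ∧
    ∀ z ∈ ball (0 : ℂ) 1, (z ∈ ω '' (sphere 0 1) ↔ ‖Φ z‖ = 1) := by
  have hcb : closure (ball (0 : ℂ) 1) = closedBall 0 1 := closure_ball 0 one_ne_zero
  have hpre : IsPreconnected (ball (0 : ℂ) 1) := (convex_ball 0 1).isPreconnected
  have hsub : ball (0 : ℂ) 1 ⊆ closedBall 0 1 := ball_subset_closedBall
  have h0 : (0 : ℂ) ∈ ball (0 : ℂ) 1 := by simp
  have hh : (1 / 2 : ℂ) ∈ ball (0 : ℂ) 1 := by simp; norm_num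
  have hω0 : ω 0 = 0 := by
    have h := hΦge (ω 0) (hωmaps h0)
    rw [hinv 0 h0, norm_zero] at h
    exact norm_le_zero_iff.1 h
  -- the range is open
  have hWo : IsOpen (ω '' (ball 0 1)) := by
    rcases hωan.is_constant_or_isOpen hpre with ⟨w, hw⟩ | h
    · have := hωinj (hsub h0) (hsub hh) ((hw _ h0).trans (hw _ hh).symm)
      norm_num at this
    · exact h _ subset_rfl isOpen_ball
  have hΦo : ∀ s ⊆ ball (0 : ℂ) 1, IsOpen s → IsOpen (Φ '' s) := by
    rcases hΦ.is_constant_or_isOpen hpre with ⟨w, hw⟩ | h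
    · have h1 := hw _ h0
      have h2 := hΦge _ hh
      rw [hw _ hh, ← h1, hΦ0] at h2
      norm_num at h2
    · exact h
  have hclW : closure (ω '' (ball 0 1)) = ω '' (closedBall 0 1) := by
    apply subset_antisymm
    · apply closure_minimal (image_mono hsub)
      exact ((isCompact_closedBall 0 1).image_of_continuousOn hωc).isClosed
    · rw [← hcb]
      exact ContinuousOn.image_closure (by rwa [hcb])
  have hfr : frontier (ω '' (ball 0 1)) = ω '' (sphere 0 1) := by
    rw [hWo.frontier_eq, hclW, ← hωinj.image_sdiff_subset hsub, closedBall_sdiff_ball]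
  have hΦω : ∀ ξ ∈ closedBall (0 : ℂ) 1, ω ξ ∈ ball (0 : ℂ) 1 → Φ (ω ξ) = ξ := by
    intro ξ hξ hb
    have h1 : ContinuousWithinAt ω (ball 0 1) ξ := (hωc ξ hξ).mono hsub
    have h2 : ContinuousAt Φ (ω ξ) := (hΦ _ hb).continuousAt
    have h3 : Filter.Tendsto (fun x => Φ (ω x)) (nhdsWithin ξ (ball 0 1)) (nhds (Φ (ω ξ))) :=
      h2.tendsto.comp h1
    have h4 : Filter.Tendsto (fun x => Φ (ω x)) (nhdsWithin ξ (ball 0 1)) (nhds ξ) := by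
      have h5 : Filter.Tendsto (fun x : ℂ => x) (nhdsWithin ξ (ball 0 1)) (nhds ξ) :=
        Filter.tendsto_id.mono_left nhdsWithin_le_nhds
      refine h5.congr' ?_
      filter_upwards [self_mem_nhdsWithin] with x hx
      exact (hinv x hx).symm
    have : (nhdsWithin ξ (ball (0 : ℂ) 1)).NeBot :=
      mem_closure_iff_nhdsWithin_neBot.1 (by rwa [hcb])
    exact tendsto_nhds_unique h3 h4
  have hrange : ω '' (ball 0 1) = {z ∈ ball (0 : ℂ) 1 | ‖Φ z‖ < 1} := by
    apply subset_antisymm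
    · rintro _ ⟨w, hw, rfl⟩
      refine ⟨hωmaps hw, ?_⟩
      rw [hinv w hw]
      simpa using hw
    · rintro z ⟨hz, hz1⟩
      by_contra hzW
      -- points of the open set with |Φ| < 1 in the closure of the range lie in the range
      have hkey : ∀ y ∈ ball (0 : ℂ) 1, ‖Φ y‖ < 1 → y ∈ closure (ω '' (ball 0 1)) →
          y ∈ ω '' (ball 0 1) := by
        intro y hy hy1 hyc
        rw [hclW] at hyc
        obtain ⟨w, hw, rfl⟩ := hyc
        rw [hΦω w hw hy] at hy1
        exact ⟨w, by simpa using hy1, rfl⟩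
      have hzn : ‖z‖ < 1 := by simpa using hz
      obtain ⟨r, hr, hr1⟩ := exists_between hz1
      have hzr : ‖z‖ < r := (hΦge z hz).trans_lt hr
      have hr0 : 0 < r := (norm_nonneg z).trans_lt hzr
      have hrb : closedBall (0 : ℂ) r ⊆ ball 0 1 := closedBall_subset_ball hr1
      have hUo : IsOpen {y ∈ ball (0 : ℂ) 1 | ‖Φ y‖ < 1} :=
        hΦ.continuousOn.norm.isOpen_inter_preimage isOpen_ball (isOpen_Iio (a := (1 : ℝ)))
      set V : Set ℂ := ({y ∈ ball (0 : ℂ) 1 | ‖Φ y‖ < 1} ∩ (closure (ω '' (ball 0 1)))ᶜ) ∩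
        ball 0 r with hV
      have hVo : IsOpen V := (hUo.inter isClosed_closure.isOpen_compl).inter isOpen_ball
      have hzV : z ∈ V := ⟨⟨⟨hz, hz1⟩, fun h => hzW (hkey z hz hz1 h)⟩, by simpa using hzr⟩
      have hcV1 : closure V ⊆ closedBall 0 r :=
        closure_minimal (fun y hy => ball_subset_closedBall hy.2) isClosed_closedBall
      have hcV2 : closure V ⊆ (ω '' (ball 0 1))ᶜ :=
        closure_minimal (fun y hy hyW => hy.1.2 (subset_closure hyW)) hWo.isClosed_compl
      have hne : ∀ y ∈ closure V, Φ y ≠ 0 := by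
        intro y hy h
        have h1 := hΦge y (hrb (hcV1 hy))
        rw [h, norm_zero] at h1
        have h2 : y = 0 := norm_le_zero_iff.1 h1
        exact hcV2 hy ⟨0, h0, by rw [hω0, h2]⟩
      have hd : DiffContOnCl ℂ (fun y => (Φ y)⁻¹) V := by
        apply DifferentiableOn.diffContOnCl
        intro y hy
        exact ((hΦ y (hrb (hcV1 hy))).differentiableAt.inv (hne y hy)).differentiableWithinAt
      have hbd : Bornology.IsBounded V := isBounded_ball.subset inter_subset_right
      have hmax := Complex.norm_le_of_forall_mem_frontier_norm_le hbd hd (C := r⁻¹) (by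
        intro y hy
        rw [norm_inv]
        apply inv_anti₀ hr0
        by_contra! hlt
        have hyc : y ∈ closure V := frontier_subset_closure hy
        have hyb := hrb (hcV1 hyc)
        have hyV : y ∉ V := by
          rw [hVo.frontier_eq] at hy
          exact hy.2
        apply hyV
        have hy1 := hlt.trans hr1
        refine ⟨⟨⟨hyb, hy1⟩, fun h => hcV2 hyc (hkey y hyb hy1 h)⟩, ?_⟩
        simpa using (hΦge y hyb).trans_lt hlt) (subset_closure hzV)
      rw [norm_inv] at hmax
      have hpos : 0 < ‖Φ z‖ := norm_pos_iff.2 (hne z (subset_closure hzV))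
      exact absurd ((inv_le_inv₀ hpos hr0).1 hmax) (not_le.2 hr)
  refine ⟨hrange, hfr, fun z hz => ⟨?_, fun h1 => ?_⟩⟩
  · rintro ⟨ξ, hξ, rfl⟩
    rw [hΦω ξ (sphere_subset_closedBall hξ) hz]
    simpa using hξ
  · rw [← hfr, hWo.frontier_eq]
    refine ⟨?_, ?_⟩
    · rw [_root_.mem_closure_iff]
      intro o ho hzo
      have h2 : IsOpen (Φ '' (o ∩ ball 0 1)) := hΦo _ inter_subset_right (ho.inter isOpen_ball)
      have h3 : Φ z ∈ closure (ball (0 : ℂ) 1) := by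
        rw [hcb]
        simp [h1]
      obtain ⟨_, ⟨y, hy, rfl⟩, hy1⟩ := _root_.mem_closure_iff.1 h3 _ h2 ⟨z, ⟨hzo, hz⟩, rfl⟩
      refine ⟨y, hy.1, ?_⟩
      rw [hrange]
      exact ⟨hy.2, by simpa using hy1⟩
    · rw [hrange]
      rintro ⟨_, h⟩
      exact absurd h1 h.ne
end

section
/- (i) If ξ ∈ ω(𝔻̄) ∩ 𝕋, then the entire radius {rξ : 0 ≤ r < 1} is contained in ω(𝔻). (ii) If ξ ∈ 𝕋 is such that |ω(ξ)| < 1, then ω extends analytically to a neighborhood of ξ; that is, there exist an open set U ⊆ ℂ containing ξ and an analytic function g on U that agrees with ω on U ∩ 𝔻̄. -/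
open Complex Set Metric

lemma aux_log (h : ℂ → ℂ) (hd : DifferentiableOn ℂ h (ball 0 1))
    (h0 : ∀ z ∈ ball (0 : ℂ) 1, h z ≠ 0) :
    ∃ u : ℂ → ℂ, DifferentiableOn ℂ u (ball 0 1) ∧ ∀ z ∈ ball (0 : ℂ) 1, exp (u z) = h z := by
  have hdd : DifferentiableOn ℂ (deriv h) (ball 0 1) := hd.deriv isOpen_ball
  have hq : DifferentiableOn ℂ (fun z => deriv h z / h z) (ball 0 1) := hdd.div hd h0
  obtain ⟨u, hu0, hu⟩ := (hq.isExactOn_ball).with_val_at 0 (Complex.log (h 0))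
  have m0 : (0 : ℂ) ∈ ball (0 : ℂ) 1 := by simp
  refine ⟨u, fun z hz => (hu z hz).differentiableAt.differentiableWithinAt, fun z hz => ?_⟩
  have key : ∀ w ∈ ball (0 : ℂ) 1, HasDerivAt (fun z => h z * exp (-u z)) 0 w := by
    intro w hw
    have h1 := (hd.differentiableAt (isOpen_ball.mem_nhds hw)).hasDerivAt
    have h2 := h1.mul ((hu w hw).neg.cexp)
    refine h2.congr_deriv ?_
    have := h0 w hw
    simp only [Pi.neg_apply]
    field_simp
    ring
  have hc := isOpen_ball.is_const_of_deriv_eq_zero (convex_ball (0:ℂ) 1).isPreconnected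
    (fun w hw => (key w hw).differentiableAt.differentiableWithinAt)
    (fun w hw => (key w hw).deriv) hz m0
  simp only [hu0, exp_neg, exp_log (h0 0 m0)] at hc
  rw [mul_inv_cancel₀ (h0 0 m0)] at hc
  have := exp_ne_zero (u z)
  field_simp at hc
  exact hc.symm

lemma aux_mobius {a w : ℂ} (ha : ‖a‖ < 1) (hw : ‖w‖ < 1) :
    1 + (starRingEnd ℂ) a * w ≠ 0 ∧ ‖(w + a) / (1 + (starRingEnd ℂ) a * w)‖ < 1 := by
  have hne : 1 + (starRingEnd ℂ) a * w ≠ 0 := by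
    intro h
    have : (starRingEnd ℂ) a * w = -1 := by linear_combination h
    have h2 := congrArg norm this
    simp at h2
    nlinarith [norm_nonneg a, norm_nonneg w]
  refine ⟨hne, ?_⟩
  rw [norm_div, div_lt_one (norm_pos_iff.2 hne)]
  apply lt_of_pow_lt_pow_left₀ 2 (norm_nonneg _)
  have e1 : ‖a‖ ^ 2 < 1 := by nlinarith [norm_nonneg a]
  have e2 : ‖w‖ ^ 2 < 1 := by nlinarith [norm_nonneg w]
  rw [Complex.sq_norm, normSq_apply] at *
  rw [Complex.sq_norm, normSq_apply]
  simp only [add_re, add_im, mul_re, mul_im, conj_re, conj_im, one_re, one_im]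
  nlinarith [mul_pos (sub_pos.2 e1) (sub_pos.2 e2)]

lemma aux_half0 (F : ℂ → ℂ) (hF : DifferentiableOn ℂ F (ball 0 1))
    (hre : ∀ z ∈ ball (0 : ℂ) 1, 0 < (F z).re) : ‖deriv F 0‖ ≤ 2 * (F 0).re := by
  have m0 : (0 : ℂ) ∈ ball (0 : ℂ) 1 := by simp
  have hne : ∀ z ∈ ball (0 : ℂ) 1, F z + (starRingEnd ℂ) (F 0) ≠ 0 := by
    intro z hz h
    have := congrArg re h
    simp at this
    linarith [hre z hz, hre 0 m0]
  set G : ℂ → ℂ := fun z => (F z - F 0) / (F z + (starRingEnd ℂ) (F 0)) with hG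
  have hGd : DifferentiableOn ℂ G (ball 0 1) := (hF.sub_const _).div (hF.add_const _) hne
  have hG0 : G 0 = 0 := by simp [hG]
  have hmaps : MapsTo G (ball 0 1) (closedBall (G 0) 1) := by
    intro z hz
    rw [hG0, mem_closedBall_zero_iff, norm_div, div_le_one (norm_pos_iff.2 (hne z hz))]
    apply le_of_sq_le_sq _ (norm_nonneg _)
    rw [Complex.sq_norm, normSq_apply, Complex.sq_norm, normSq_apply]
    simp only [add_re, add_im, sub_re, sub_im, conj_re, conj_im]
    nlinarith [mul_pos (hre z hz) (hre 0 m0)]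
  have h1 := norm_deriv_le_one_of_mapsTo_ball hGd hmaps one_pos
  have hFd := (hF.differentiableAt (isOpen_ball.mem_nhds m0)).hasDerivAt
  have h2 : deriv G 0 = deriv F 0 / (2 * (F 0).re : ℝ) := by
    have := ((hFd.sub_const (F 0)).div (hFd.add_const _) (hne 0 m0)).deriv
    rw [hG]
    refine this.trans ?_
    have h3 := hne 0 m0
    rw [add_conj] at h3 ⊢
    field_simp
    simp
  rw [h2, norm_div, norm_real, Real.norm_of_nonneg (by linarith [hre 0 m0]),
    div_le_one (by linarith [hre 0 m0])] at h1
  exact h1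

lemma aux_half (u : ℂ → ℂ) (hu : DifferentiableOn ℂ u (ball 0 1))
    (hre : ∀ z ∈ ball (0 : ℂ) 1, 0 ≤ (u z).re) {a : ℂ} (ha : a ∈ ball (0 : ℂ) 1) :
    ‖deriv u a‖ * (1 - ‖a‖ ^ 2) ≤ 2 * (u a).re := by
  have ha' : ‖a‖ < 1 := by simpa using ha
  have m0 : (0 : ℂ) ∈ ball (0 : ℂ) 1 := by simp
  refine le_of_forall_pos_le_add fun ε hε => ?_
  set m : ℂ → ℂ := fun w => (w + a) / (1 + (starRingEnd ℂ) a * w) with hm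
  have hmm : MapsTo m (ball 0 1) (ball 0 1) := fun w hw => by
    rw [mem_ball_zero_iff]
    exact (aux_mobius ha' (by simpa using hw)).2
  have hmd : DifferentiableOn ℂ m (ball 0 1) := by
    refine DifferentiableOn.div (by fun_prop) (by fun_prop) fun w hw => ?_
    exact (aux_mobius ha' (by simpa using hw)).1
  have hm0 : m 0 = a := by simp [hm]
  have h := aux_half0 (fun w => u (m w) + (ε / 2 : ℝ)) ((hu.comp hmd hmm).add_const _)
    (fun z hz => by
      have := hre _ (hmm hz)
      simp only [add_re, ofReal_re]; linarith)
  have hmder : HasDerivAt m (1 - ‖a‖ ^ 2 : ℝ) 0 := by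
    have h1 : HasDerivAt (fun w : ℂ => w + a) 1 0 := (hasDerivAt_id _).add_const _
    have h2 : HasDerivAt (fun w : ℂ => 1 + (starRingEnd ℂ) a * w) ((starRingEnd ℂ) a * 1) 0 :=
      ((hasDerivAt_id _).const_mul _).const_add _
    refine (h1.div h2 (by simp)).congr_deriv ?_
    simp [mul_conj, ← Complex.sq_norm, mul_comm]
  have hua : HasDerivAt u (deriv u a) (m 0) := by
    rw [hm0]; exact (hu.differentiableAt (isOpen_ball.mem_nhds ha)).hasDerivAt
  have hd := ((hua.comp 0 hmder).add_const ((ε / 2 : ℝ) : ℂ)).deriv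
  simp only [Function.comp_def] at hd
  rw [hd, norm_mul, norm_real, Real.norm_of_nonneg (by nlinarith [norm_nonneg a])] at h
  simp only [hm0, add_re, ofReal_re] at h
  linarith

lemma aux_log_ineq {t : ℝ} (h0 : 0 < t) (h1 : t < 1) : 2 * t * (-Real.log t) < 1 - t ^ 2 := by
  have := Real.sinh_lt_self_iff.2 (Real.log_neg h0 h1)
  rw [Real.sinh_log h0] at this
  have h2 : t * ((t - t⁻¹) / 2) < t * Real.log t := mul_lt_mul_of_pos_left this h0
  have h3 : t * t⁻¹ = 1 := mul_inv_cancel₀ h0.ne'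
  nlinarith

lemma aux_anti : StrictAntiOn (fun t : ℝ => (-Real.log t) * ((1 + t) / (1 - t))) (Ioo 0 1) := by
  have hd : ∀ t ∈ Ioo (0 : ℝ) 1, HasDerivAt (fun t : ℝ => (-Real.log t) * ((1 + t) / (1 - t)))
      ((-t⁻¹) * ((1 + t) / (1 - t)) + (-Real.log t) * ((1 * (1 - t) - (1 + t) * (-1)) / (1 - t) ^ 2)) t := by
    intro t ht
    exact (Real.hasDerivAt_log ht.1.ne').neg.mul
      (((hasDerivAt_id t).const_add 1).div ((hasDerivAt_id t).const_sub 1) (by linarith [ht.2]))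
  refine strictAntiOn_of_deriv_neg (convex_Ioo 0 1)
    (fun t ht => (hd t ht).continuousAt.continuousWithinAt) fun t ht => ?_
  rw [interior_Ioo] at ht
  rw [(hd t ht).deriv]
  have h1 := aux_log_ineq ht.1 ht.2
  have h2 : 0 < 1 - t := by linarith [ht.2]
  have h3 := ht.1
  have : (-t⁻¹) * ((1 + t) / (1 - t)) + (-Real.log t) * ((1 * (1 - t) - (1 + t) * (-1)) / (1 - t) ^ 2)
      = (2 * t * (-Real.log t) - (1 - t ^ 2)) / (t * (1 - t) ^ 2) := by
    field_simp
    ring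
  rw [this]
  exact div_neg_of_neg_of_pos (by linarith) (by positivity)

lemma aux_harnack (u : ℂ → ℂ) (hu : DifferentiableOn ℂ u (ball 0 1))
    (hre : ∀ z ∈ ball (0 : ℂ) 1, 0 ≤ (u z).re) {ξ : ℂ} (hξ : ‖ξ‖ = 1) :
    MonotoneOn (fun t : ℝ => (u (t * ξ)).re * ((1 + t) / (1 - t))) (Ioo 0 1) := by
  have hmem : ∀ t ∈ Ioo (0 : ℝ) 1, (t : ℂ) * ξ ∈ ball (0 : ℂ) 1 := by
    intro t ht
    simpa [hξ, abs_of_pos ht.1] using ht.2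
  have hd : ∀ t ∈ Ioo (0 : ℝ) 1, HasDerivAt (fun t : ℝ => (u (t * ξ)).re * ((1 + t) / (1 - t)))
      ((deriv u (t * ξ) * ξ).re * ((1 + t) / (1 - t)) +
        (u (t * ξ)).re * ((1 * (1 - t) - (1 + t) * (-1)) / (1 - t) ^ 2)) t := by
    intro t ht
    have h1 : HasDerivAt (fun z : ℂ => z * ξ) ξ (t : ℂ) := by
      simpa using (hasDerivAt_id (t : ℂ)).mul_const ξ
    have h2 := (hu.differentiableAt (isOpen_ball.mem_nhds (hmem t ht))).hasDerivAt.comp (t : ℂ) h1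
    have h3 := h2.real_of_complex
    exact h3.mul
      (((hasDerivAt_id t).const_add 1).div ((hasDerivAt_id t).const_sub 1) (by linarith [ht.2]))
  refine monotoneOn_of_deriv_nonneg (convex_Ioo 0 1)
    (fun t ht => (hd t ht).continuousAt.continuousWithinAt) (fun t ht => ?_) fun t ht => ?_
  · rw [interior_Ioo] at ht
    exact (hd t ht).differentiableAt.differentiableWithinAt
  rw [interior_Ioo] at ht
  rw [(hd t ht).deriv]
  have h1 := aux_half u hu hre (hmem t ht)
  have h2 : 0 < 1 - t := by linarith [ht.2]
  have h3 := ht.1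
  have h4 : -‖deriv u (t * ξ)‖ ≤ (deriv u (t * ξ) * ξ).re := by
    have := (abs_le.1 (abs_re_le_norm (deriv u (t * ξ) * ξ))).1
    simpa [hξ] using this
  have h5 : ‖(t : ℂ) * ξ‖ = t := by simp [hξ, abs_of_pos h3]
  rw [h5] at h1
  have : (deriv u (t * ξ) * ξ).re * ((1 + t) / (1 - t)) +
        (u (t * ξ)).re * ((1 * (1 - t) - (1 + t) * (-1)) / (1 - t) ^ 2)
      = ((deriv u (t * ξ) * ξ).re * (1 - t ^ 2) + 2 * (u (t * ξ)).re) / ((1 - t) ^ 2) := by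
    field_simp
    ring
  rw [this]
  apply div_nonneg _ (by positivity)
  have h6 : 0 ≤ 1 - t ^ 2 := by nlinarith
  have h7 := mul_le_mul_of_nonneg_right h4 h6
  linarith

lemma aux_rep (Φ : ℂ → ℂ) (hΦ : AnalyticOnNhd ℂ Φ (ball 0 1)) (hΦ0 : Φ 0 = 0)
    (hΦge : ∀ z ∈ ball (0 : ℂ) 1, ‖z‖ ≤ ‖Φ z‖) :
    ∃ u : ℂ → ℂ, DifferentiableOn ℂ u (ball 0 1) ∧ (∀ z ∈ ball (0 : ℂ) 1, 0 ≤ (u z).re) ∧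
      ∀ z ∈ ball (0 : ℂ) 1, Φ z = z * exp (u z) := by
  have m0 : ball (0 : ℂ) 1 ∈ nhds (0 : ℂ) := isOpen_ball.mem_nhds (by simp)
  set h := dslope Φ 0 with hh
  have hd : DifferentiableOn ℂ h (ball 0 1) :=
    (differentiableOn_dslope m0).2 hΦ.differentiableOn
  have hmul : ∀ z, z * h z = Φ z := by
    intro z
    have := sub_smul_dslope Φ 0 z
    simpa [hΦ0] using this
  have hge' : ∀ z ∈ ball (0 : ℂ) 1, z ≠ 0 → 1 ≤ ‖h z‖ := by
    intro z hz hz0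
    have h1 := hΦge z hz
    rw [← hmul z, norm_mul] at h1
    exact le_of_mul_le_mul_left (by simpa using h1) (norm_pos_iff.2 hz0)
  have hge : ∀ z ∈ ball (0 : ℂ) 1, 1 ≤ ‖h z‖ := by
    intro z hz
    by_cases hz0 : z = 0
    · subst hz0
      have hc : ContinuousAt h 0 := (hd.differentiableAt m0).continuousAt
      have hc2 : Filter.Tendsto (fun z => ‖h z‖) (nhdsWithin 0 {0}ᶜ) (nhds ‖h 0‖) :=
        hc.norm.tendsto.mono_left nhdsWithin_le_nhds
      refine ge_of_tendsto hc2 ?_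
      filter_upwards [self_mem_nhdsWithin, nhdsWithin_le_nhds m0] with w hw hw2
      exact hge' w hw2 hw
    · exact hge' z hz hz0
  obtain ⟨u, hu, hue⟩ := aux_log h hd (fun z hz h0 => by
    have := hge z hz
    rw [h0, norm_zero] at this
    linarith)
  refine ⟨u, hu, fun z hz => ?_, fun z hz => by rw [hue z hz, hmul]⟩
  have := hge z hz
  rw [← hue z hz, norm_exp] at this
  exact Real.one_le_exp_iff.1 this

lemma aux_norm {t p : ℝ} (ht : 0 < t) : (t * Real.exp p ≤ 1 ↔ p ≤ -Real.log t) ∧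
    (t * Real.exp p < 1 ↔ p < -Real.log t) ∧ (t * Real.exp p = 1 ↔ p = -Real.log t) := by
  have : t * Real.exp p = Real.exp (Real.log t + p) := by rw [Real.exp_add, Real.exp_log ht]
  rw [this, Real.exp_le_one_iff, Real.exp_lt_one_iff, Real.exp_eq_one_iff]
  refine ⟨?_, ?_, ?_⟩ <;> constructor <;> intro h <;> linarith

lemma aux_star (Φ : ℂ → ℂ) (hΦ : AnalyticOnNhd ℂ Φ (ball 0 1)) (hΦ0 : Φ 0 = 0)
    (hΦge : ∀ z ∈ ball (0 : ℂ) 1, ‖z‖ ≤ ‖Φ z‖) {ξ : ℂ} (hξ : ‖ξ‖ = 1) {r s : ℝ}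
    (hr : 0 ≤ r) (hrs : r < s) (hs : s < 1) (h : ‖Φ (s * ξ)‖ ≤ 1) : ‖Φ (r * ξ)‖ < 1 := by
  obtain rfl | hr := hr.eq_or_lt
  · simp [hΦ0]
  obtain ⟨u, hu, hre, hrep⟩ := aux_rep Φ hΦ hΦ0 hΦge
  have hn : ∀ t ∈ Ioo (0 : ℝ) 1, ‖Φ (t * ξ)‖ = t * Real.exp (u (t * ξ)).re := by
    intro t ht
    rw [hrep _ (by simpa [hξ, abs_of_pos ht.1] using ht.2), norm_mul, norm_exp, norm_mul, hξ,
      norm_real, Real.norm_of_nonneg ht.1.le, mul_one]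
  have mr : r ∈ Ioo (0 : ℝ) 1 := ⟨hr, hrs.trans hs⟩
  have ms : s ∈ Ioo (0 : ℝ) 1 := ⟨hr.trans hrs, hs⟩
  rw [hn s ms, (aux_norm ms.1).1] at h
  rw [hn r mr, (aux_norm hr).2.1]
  have h1 := aux_harnack u hu hre hξ mr ms hrs.le
  have h2 := aux_anti mr ms hrs
  simp only at h1 h2
  have pr : 0 < (1 + r) / (1 - r) := div_pos (by linarith) (by linarith [mr.2])
  have ps : 0 < (1 + s) / (1 - s) := div_pos (by linarith) (by linarith [ms.2])
  have h3 := mul_le_mul_of_nonneg_right h ps.le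
  exact lt_of_mul_lt_mul_right (lt_of_le_of_lt (h1.trans h3) h2) pr.le

lemma aux_deriv (Φ : ℂ → ℂ) (hΦ : AnalyticOnNhd ℂ Φ (ball 0 1)) (hΦ0 : Φ 0 = 0)
    (hΦge : ∀ z ∈ ball (0 : ℂ) 1, ‖z‖ ≤ ‖Φ z‖) {a : ℂ} (ha : a ∈ ball (0 : ℂ) 1)
    (h : ‖Φ a‖ = 1) : deriv Φ a ≠ 0 := by
  obtain ⟨u, hu, hre, hrep⟩ := aux_rep Φ hΦ hΦ0 hΦge
  have ha1 : ‖a‖ < 1 := by simpa using ha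
  have ha0 : 0 < ‖a‖ := by
    rw [norm_pos_iff]
    rintro rfl
    simp [hΦ0] at h
  rw [hrep a ha, norm_mul, norm_exp, (aux_norm ha0).2.2] at h
  have h1 := aux_half u hu hre ha
  rw [h] at h1
  have h2 := aux_log_ineq ha0 ha1
  have hd : HasDerivAt Φ (1 * exp (u a) + a * (exp (u a) * deriv u a)) a := by
    have hua := (hu.differentiableAt (isOpen_ball.mem_nhds ha)).hasDerivAt
    refine ((hasDerivAt_id a).mul hua.cexp).congr_of_eventuallyEq ?_
    filter_upwards [isOpen_ball.mem_nhds ha] with z hz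
    simpa using hrep z hz
  rw [hd.deriv]
  intro h0
  have h3 : exp (u a) * (1 + a * deriv u a) = 0 := by linear_combination h0
  have h4 := (mul_eq_zero.1 h3).resolve_left (exp_ne_zero _)
  have h5 : a * deriv u a = -1 := by linear_combination h4
  have h6 := congrArg norm h5
  rw [norm_mul, norm_neg, norm_one] at h6
  have h7 := mul_le_mul_of_nonneg_left h1 ha0.le
  have h8 : ‖a‖ * (‖deriv u a‖ * (1 - ‖a‖ ^ 2)) = 1 - ‖a‖ ^ 2 := by
    rw [← mul_assoc, h6, one_mul]
  linarith

lemma aux_image (Φ ω : ℂ → ℂ)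
    (hΦ : AnalyticOnNhd ℂ Φ (ball 0 1)) (hΦ0 : Φ 0 = 0)
    (hΦge : ∀ z ∈ ball (0 : ℂ) 1, ‖z‖ ≤ ‖Φ z‖)
    (hωmaps : Set.MapsTo ω (ball 0 1) (ball 0 1))
    (hωan : AnalyticOnNhd ℂ ω (ball 0 1))
    (hinv : ∀ z ∈ ball (0 : ℂ) 1, Φ (ω z) = z) {z : ℂ} (hz : z ∈ ball (0 : ℂ) 1)
    (h : ‖Φ z‖ < 1) : z ∈ ω '' (ball 0 1) := by
  have m0 : (0 : ℂ) ∈ ball (0 : ℂ) 1 := by simp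
  have hω0 : ω 0 = 0 := by
    have := hΦge _ (hωmaps m0)
    rw [hinv 0 m0, norm_zero] at this
    exact norm_le_zero_iff.1 this
  set S : Set ℂ := {w | w ∈ ball (0 : ℂ) 1 ∧ ‖Φ w‖ < 1} with hS
  have hstar : StarConvex ℝ 0 S := by
    rw [starConvex_zero_iff]
    rintro w ⟨hw, hw1⟩ r hr hr1
    have hw' : ‖w‖ < 1 := by simpa using hw
    obtain rfl | hr1 := hr1.eq_or_lt
    · simpa using ⟨hw, hw1⟩
    by_cases hw0 : w = 0
    · subst hw0; simp [hS, hΦ0]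
    have hwp := norm_pos_iff.2 hw0
    refine ⟨?_, ?_⟩
    · simp [abs_of_nonneg hr]
      nlinarith
    have hξ : ‖w / ‖w‖‖ = 1 := by simp [hwp.ne']
    have hwc : (‖w‖ : ℂ) ≠ 0 := by exact_mod_cast hwp.ne'
    have e1 : ((‖w‖ : ℝ) : ℂ) * (w / ‖w‖) = w := by field_simp
    have e2 : ((r * ‖w‖ : ℝ) : ℂ) * (w / ‖w‖) = r • w := by
      push_cast
      rw [mul_assoc, e1]; simp
    rw [← e2]
    exact aux_star Φ hΦ hΦ0 hΦge hξ (by positivity) (by nlinarith) hw' (by rw [e1]; exact hw1.le)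
  have hSpre : IsPreconnected S :=
    (hstar.isPathConnected (by simp [hS, hΦ0])).isConnected.isPreconnected
  have hcomp : AnalyticOnNhd ℂ (ω ∘ Φ) S :=
    hωan.comp (hΦ.mono fun w hw => hw.1) fun w hw => by simpa using hw.2
  have hid : AnalyticOnNhd ℂ (id : ℂ → ℂ) S := analyticOnNhd_id
  have hΦ' : deriv Φ 0 ≠ 0 := by
    have h1 : HasDerivAt Φ (deriv Φ 0) (ω 0) := by
      rw [hω0]; exact (hΦ 0 m0).differentiableAt.hasDerivAt
    have h2 := h1.comp 0 (hωan 0 m0).differentiableAt.hasDerivAt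
    have h3 : HasDerivAt (Φ ∘ ω) 1 0 := by
      refine (hasDerivAt_id (0 : ℂ)).congr_of_eventuallyEq ?_
      filter_upwards [isOpen_ball.mem_nhds m0] with w hw using hinv w hw
    have := h2.unique h3
    intro h0
    simp [h0] at this
  have hs := (hΦ 0 m0).hasStrictDerivAt
  have hli := hs.eventually_left_inverse hΦ'
  have hcont : Filter.Tendsto (ω ∘ Φ) (nhds 0) (nhds 0) := by
    have h1 : ContinuousAt Φ 0 := (hΦ 0 m0).continuousAt
    have h2 : ContinuousAt ω (Φ 0) := by rw [hΦ0]; exact (hωan 0 m0).continuousAt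
    have := (h2.comp h1).tendsto
    simpa [hΦ0, hω0] using this
  have hev : (ω ∘ Φ) =ᶠ[nhds 0] id := by
    have hb : ∀ᶠ w in nhds (0 : ℂ), Φ w ∈ ball (0 : ℂ) 1 := by
      apply (hΦ 0 m0).continuousAt
      rw [hΦ0]
      exact isOpen_ball.mem_nhds m0
    filter_upwards [hli, hcont.eventually hli, hb] with w h1 h2 h3
    have h4 : Φ ((ω ∘ Φ) w) = Φ w := hinv _ h3
    rw [h4, h1] at h2
    exact h2.symm
  have := hcomp.eqOn_of_preconnected_of_eventuallyEq hid hSpre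
    (show (0 : ℂ) ∈ S by simp [hS, hΦ0]) hev
  exact ⟨Φ z, by simpa using h, this (show z ∈ S from ⟨hz, h⟩)⟩

/-- Global inversion (Proposition 2.3 (4),(5)): with `Φ` analytic on the open unit
disc, `Φ(0) = 0`, `|Φ(z)| ≥ |z|`, and `ω` the global inverse of `Φ`:
(i) if `ξ ∈ ω(𝔻̄) ∩ 𝕋`, then the entire radius `{rξ : 0 ≤ r < 1}` lies in `ω(𝔻)`;
(ii) if `ξ ∈ 𝕋` and `|ω(ξ)| < 1`, then `ω` extends analytically to a neighborhood
of `ξ`. -/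
theorem global_inverse_radius_and_extension (Φ ω : ℂ → ℂ)
    (hΦ : AnalyticOnNhd ℂ Φ (ball 0 1)) (hΦ0 : Φ 0 = 0)
    (hΦge : ∀ z ∈ ball (0 : ℂ) 1, ‖z‖ ≤ ‖Φ z‖)
    (hωc : ContinuousOn ω (closedBall 0 1)) (hωinj : Set.InjOn ω (closedBall 0 1))
    (hωmapsc : Set.MapsTo ω (closedBall 0 1) (closedBall 0 1))
    (hωmaps : Set.MapsTo ω (ball 0 1) (ball 0 1))
    (hωan : AnalyticOnNhd ℂ ω (ball 0 1))
    (hinv : ∀ z ∈ ball (0 : ℂ) 1, Φ (ω z) = z) :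
    (∀ ξ ∈ (ω '' (closedBall 0 1)) ∩ sphere (0 : ℂ) 1,
      ∀ r : ℝ, 0 ≤ r → r < 1 → (r : ℂ) * ξ ∈ ω '' (ball 0 1)) ∧
    (∀ ξ ∈ sphere (0 : ℂ) 1, ‖ω ξ‖ < 1 →
      ∃ U : Set ℂ, IsOpen U ∧ ξ ∈ U ∧
        ∃ g : ℂ → ℂ, AnalyticOnNhd ℂ g U ∧ Set.EqOn g ω (U ∩ closedBall 0 1)) := by
  have m0 : (0 : ℂ) ∈ ball (0 : ℂ) 1 := by simp
  -- radial approach to a point of the closed disc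
  have happ : ∀ ζ ∈ closedBall (0 : ℂ) 1, ∀ t ∈ Ioo (0 : ℝ) 1, (t : ℂ) * ζ ∈ ball (0 : ℂ) 1 := by
    intro ζ hζ t ht
    have : ‖ζ‖ ≤ 1 := by simpa using hζ
    rw [mem_ball_zero_iff, norm_mul, norm_real, Real.norm_of_nonneg ht.1.le]
    nlinarith [ht.1, ht.2]
  have hev : ∀ᶠ t : ℝ in nhdsWithin 1 (Iio 1), t ∈ Ioo (0 : ℝ) 1 :=
    Ioo_mem_nhdsLT one_pos
  have hlim0 : ∀ ζ ∈ closedBall (0 : ℂ) 1,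
      Filter.Tendsto (fun t : ℝ => (t : ℂ) * ζ) (nhdsWithin 1 (Iio 1)) (nhds ζ) := by
    intro ζ hζ
    have : Continuous (fun t : ℝ => (t : ℂ) * ζ) := by fun_prop
    simpa using (this.tendsto 1).mono_left (nhdsWithin_le_nhds (s := Iio 1))
  have hlim : ∀ ζ ∈ closedBall (0 : ℂ) 1,
      Filter.Tendsto (fun t : ℝ => ω (t * ζ)) (nhdsWithin 1 (Iio 1)) (nhds (ω ζ)) := by
    intro ζ hζ
    refine (hωc ζ hζ).tendsto.comp (tendsto_nhdsWithin_iff.2 ⟨hlim0 ζ hζ, ?_⟩)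
    filter_upwards [hev] with t ht using ball_subset_closedBall (happ ζ hζ t ht)
  constructor
  · rintro ξ ⟨⟨ζ, hζ, rfl⟩, hξ⟩ r hr hr1
    have hξ1 : ‖ω ζ‖ = 1 := by simpa using hξ
    obtain ⟨s, hrs, hs⟩ := exists_between hr1
    have hs0 : 0 < s := hr.trans_lt hrs
    have hsm : (s : ℂ) * ω ζ ∈ ball (0 : ℂ) 1 := by
      simpa [hξ1, abs_of_pos hs0] using hs
    have hle : ‖Φ (s * ω ζ)‖ ≤ 1 := by
      have h1 : Filter.Tendsto (fun t : ℝ => ‖Φ (s * ω (t * ζ))‖) (nhdsWithin 1 (Iio 1))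
          (nhds ‖Φ (s * ω ζ)‖) :=
        ((hΦ _ hsm).continuousAt.tendsto.comp ((hlim ζ hζ).const_mul (s : ℂ))).norm
      refine le_of_tendsto h1 ?_
      filter_upwards [hev] with t ht
      have hb := happ ζ hζ t ht
      set w := ω (t * ζ) with hw
      have hwb := hωmaps hb
      have hw1 : ‖w‖ < 1 := by simpa using hwb
      have hΦw : ‖Φ w‖ < 1 := by
        rw [hw, hinv _ hb]; simpa using hb
      by_cases hw0 : w = 0
      · simp [hw0, hΦ0]
      have hwp := norm_pos_iff.2 hw0
      have hξ' : ‖w / ‖w‖‖ = 1 := by simp [hwp.ne']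
      have hwc : (‖w‖ : ℂ) ≠ 0 := by exact_mod_cast hwp.ne'
      have e1 : ((‖w‖ : ℝ) : ℂ) * (w / ‖w‖) = w := by field_simp
      have e2 : ((s * ‖w‖ : ℝ) : ℂ) * (w / ‖w‖) = s * w := by
        push_cast
        rw [mul_assoc, e1]
      rw [← e2]
      exact (aux_star Φ hΦ hΦ0 hΦge hξ' (by positivity) (by nlinarith) hw1
        (by rw [e1]; exact hΦw.le)).le
    have hlt := aux_star Φ hΦ hΦ0 hΦge hξ1 hr hrs hs hle
    refine aux_image Φ ω hΦ hΦ0 hΦge hωmaps hωan hinv ?_ hlt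
    simpa [hξ1, abs_of_nonneg hr] using hr1
  · intro ξ hξ hlt
    have hξc : ξ ∈ closedBall (0 : ℂ) 1 := sphere_subset_closedBall hξ
    have hξ1 : ‖ξ‖ = 1 := by simpa using hξ
    have hab : ∀ η ∈ closedBall (0 : ℂ) 1, ‖ω η‖ < 1 → Φ (ω η) = η := by
      intro η hη hl
      have ha : ω η ∈ ball (0 : ℂ) 1 := by simpa using hl
      have h1 := (hΦ _ ha).continuousAt.tendsto.comp (hlim η hη)
      refine tendsto_nhds_unique h1 ((hlim0 η hη).congr' ?_)
      filter_upwards [hev] with t ht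
      exact (hinv _ (happ η hη t ht)).symm
    have ha : ω ξ ∈ ball (0 : ℂ) 1 := by simpa using hlt
    have hΦa := hab ξ hξc hlt
    have hd := aux_deriv Φ hΦ hΦ0 hΦge ha (by rw [hΦa, hξ1])
    have hg := (hΦ _ ha).analyticAt_localInverse hd
    have hli := (hΦ _ ha).hasStrictDerivAt.eventually_left_inverse hd
    set g := (hΦ _ ha).hasStrictDerivAt.localInverse _ _ _ hd
    rw [hΦa] at hg
    have hE : ∀ᶠ z in nhdsWithin ξ (closedBall 0 1), g z = ω z := by
      have hc := hωc ξ hξc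
      filter_upwards [hc.eventually hli, hc.eventually (isOpen_ball.mem_nhds ha),
        self_mem_nhdsWithin] with z h1 h2 h3
      rw [hab z h3 (by simpa using h2)] at h1
      exact h1
    have hE2 := eventually_nhdsWithin_iff.1 hE
    obtain ⟨U, hU, hUo, hξU⟩ := _root_.eventually_nhds_iff.1 (hE2.and hg.eventually_analyticAt)
    exact ⟨U, hUo, hξU, g, fun z hz => (hU z hz).2, fun z hz => (hU z hz.1).1 hz.2⟩
end

section
/- Let ρ be a nonzero finite Borel measure on the interval (−π,π] and let θ ∈ ℝ be fixed. Then the function h(r) = ∫_{(−π,π]} (r²−1)/((log r)(1 − 2r cos(θ+x) + r²)) dρ(x) is strictly increasing on the interval (0,1). -/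
open MeasureTheory Set

lemma aux_G : StrictAntiOn (fun r : ℝ => -Real.log r * (1 + r) / (1 - r)) (Ioo 0 1) := by
  have hd : ∀ r ∈ Ioo (0:ℝ) 1, HasDerivAt (fun r : ℝ => -Real.log r * (1 + r) / (1 - r))
      (((-r⁻¹ * (1 + r) + -Real.log r * 1) * (1 - r) - (-Real.log r * (1 + r)) * (-1)) / (1 - r) ^ 2) r := by
    intro r hr
    have h1 := (Real.hasDerivAt_log hr.1.ne').neg
    have h2 := (hasDerivAt_id r).const_add 1
    have h3 := (hasDerivAt_id r).const_sub 1
    exact (h1.mul h2).div h3 (by have := hr.2; intro h; linarith)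
  apply strictAntiOn_of_deriv_neg (convex_Ioo 0 1)
  · exact fun r hr => (hd r hr).continuousAt.continuousWithinAt
  · intro r hr
    rw [interior_Ioo] at hr
    rw [(hd r hr).deriv]
    apply div_neg_of_neg_of_pos _ (by have := hr.2; have : 0 < 1 - r := by linarith
                                      positivity)
    have hL : 0 < -Real.log r := by linarith [Real.log_neg hr.1 hr.2]
    have hs := Real.self_lt_sinh_iff.2 hL
    rw [Real.sinh_eq, neg_neg, Real.exp_neg, Real.exp_log hr.1] at hs
    have : r⁻¹ * r = 1 := inv_mul_cancel₀ hr.1.ne'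
    have e : (-r⁻¹ * (1 + r) + -Real.log r * 1) * (1 - r) - (-Real.log r * (1 + r)) * (-1)
      = -r⁻¹ + (r⁻¹ * r) * r - 2 * Real.log r := by ring
    rw [e, this]
    linarith

lemma den_pos {r c : ℝ} (hr : r ∈ Ioo (0:ℝ) 1) (hc1 : c ≤ 1) :
    (1 - r) ^ 2 ≤ 1 - 2 * r * c + r ^ 2 := by
  nlinarith [hr.1]

lemma aux_pt {a b c : ℝ} (ha : a ∈ Ioo (0:ℝ) 1) (hb : b ∈ Ioo (0:ℝ) 1) (hab : a < b)
    (hc0 : -1 ≤ c) (hc1 : c ≤ 1) :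
    (a ^ 2 - 1) / (Real.log a * (1 - 2 * a * c + a ^ 2)) <
    (b ^ 2 - 1) / (Real.log b * (1 - 2 * b * c + b ^ 2)) := by
  have hG := aux_G ha hb hab
  have hl := Real.log_lt_log ha.1 hab
  have hlb := Real.log_neg hb.1 hb.2
  have hda := den_pos ha hc1
  have hdb := den_pos hb hc1
  obtain ⟨ha0, ha1⟩ := ha
  obtain ⟨hb0, hb1⟩ := hb
  have hpa : 0 < (1 - a) := by linarith
  have hpb : 0 < (1 - b) := by linarith
  have hda' : 0 < 1 - 2 * a * c + a ^ 2 := lt_of_lt_of_le (by positivity) hda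
  have hdb' : 0 < 1 - 2 * b * c + b ^ 2 := lt_of_lt_of_le (by positivity) hdb
  simp only [] at hG
  rw [div_lt_div_iff₀ hpb hpa] at hG
  obtain ⟨A, hA⟩ : ∃ A, A = -Real.log a := ⟨_, rfl⟩
  obtain ⟨B, hB⟩ : ∃ B, B = -Real.log b := ⟨_, rfl⟩
  have hB0 : 0 < B := by linarith
  have hAB : B < A := by linarith
  have hA0 : 0 < A := by linarith
  rw [← hA, ← hB] at hG
  have e : ∀ r L D : ℝ, (r ^ 2 - 1) / (L * D) = (1 - r ^ 2) / (-L * D) := by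
    intro r L D
    rw [neg_mul, ← neg_div_neg_eq, neg_sub]
  rw [e a, e b, ← hA, ← hB, div_lt_div_iff₀ (by positivity) (by positivity)]
  -- endpoint c = -1
  have h1 : (1 - a ^ 2) * (B * (1 + b) ^ 2) < (1 - b ^ 2) * (A * (1 + a) ^ 2) := by
    have := mul_lt_mul_of_pos_left hG (show 0 < (1 + a) * (1 + b) by positivity)
    linarith
  have h2 : (1 - a ^ 2) * (B * (1 - b) ^ 2) < (1 - b ^ 2) * (A * (1 - a) ^ 2) := by
    have h3 : (1 + a) * (1 - b) * B < (1 + b) * (1 - a) * A := by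
      apply mul_lt_mul'' _ hAB (by positivity) hB0.le
      nlinarith
    have := mul_lt_mul_of_pos_left h3 (show 0 < (1 - a) * (1 - b) by positivity)
    linarith
  rcases hc1.lt_or_eq with h | h
  · have k1 := mul_lt_mul_of_pos_left h1 (show 0 < (1 - c) / 2 by linarith)
    have k2 := mul_le_mul_of_nonneg_left h2.le (show 0 ≤ (1 + c) / 2 by linarith)
    linarith
  · subst h
    linarith

lemma aux_int (ρ : Measure ℝ) [IsFiniteMeasure ρ] (θ : ℝ) {r : ℝ} (hr : r ∈ Ioo (0:ℝ) 1) :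
    Integrable (fun x => (r ^ 2 - 1) / (Real.log r * (1 - 2 * r * Real.cos (θ + x) + r ^ 2))) ρ := by
  have hl := Real.log_neg hr.1 hr.2
  have hp : 0 < (1 - r) ^ 2 := by
    have : 0 < 1 - r := by linarith [hr.2]
    positivity
  have hd : ∀ x, (1 - r) ^ 2 ≤ 1 - 2 * r * Real.cos (θ + x) + r ^ 2 :=
    fun x => den_pos hr (Real.cos_le_one _)
  refine Integrable.of_bound (C := |r ^ 2 - 1| / (|Real.log r| * (1 - r) ^ 2)) ?_ ?_
  · apply Continuous.aestronglyMeasurable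
    apply Continuous.div (by fun_prop) (by fun_prop)
    intro x
    exact mul_ne_zero hl.ne (lt_of_lt_of_le hp (hd x)).ne'
  · filter_upwards with x
    rw [Real.norm_eq_abs, abs_div, abs_mul, abs_of_pos (lt_of_lt_of_le hp (hd x))]
    have := abs_pos.2 hl.ne
    have := hd x
    gcongr

/-- For a nonzero finite Borel measure `ρ` on `(−π,π]` and a fixed `θ ∈ ℝ`, the function
`h(r) = ∫ (r²−1)/((log r)(1 − 2r cos(θ+x) + r²)) dρ(x)` is strictly increasing on
`(0,1)`. -/
theorem h_strictMonoOn (ρ : Measure ℝ) [IsFiniteMeasure ρ] (hρ : ρ ≠ 0)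
    (hsupp : ρ (Set.Ioc (-Real.pi) Real.pi)ᶜ = 0) (θ : ℝ) :
    StrictMonoOn
      (fun r : ℝ =>
        ∫ x, (r ^ 2 - 1) / (Real.log r * (1 - 2 * r * Real.cos (θ + x) + r ^ 2)) ∂ρ)
      (Set.Ioo 0 1) := by
  intro a ha b hb hab
  have hlt := fun x : ℝ => aux_pt ha hb hab (Real.neg_one_le_cos (θ + x)) (Real.cos_le_one (θ + x))
  have hi := (aux_int ρ θ hb).sub (aux_int ρ θ ha)
  have hpos := (integral_pos_iff_support_of_nonneg (fun x => (sub_pos.2 (hlt x)).le) hi).2 (by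
    rw [Set.eq_univ_of_forall (s := Function.support _) (fun x => (sub_pos.2 (hlt x)).ne')]
    exact Measure.measure_univ_pos.2 hρ)
  rw [integral_sub (aux_int ρ θ hb) (aux_int ρ θ ha)] at hpos
  exact sub_pos.1 hpos
end

section
/- Let α ∈ ℂ with |α| = 1, let σ be a nonzero finite Borel measure on the unit circle 𝕋, and define Φ(z) = α z exp(∫_𝕋 (1+ξz)/(1−ξz) dσ(ξ)) for z in the open unit disc 𝔻. Then for every θ ∈ ℝ there is at most one r ∈ (0,1) with |Φ(re^{iθ})| = 1; that is, if r₁, r₂ ∈ (0,1) satisfy |Φ(r₁e^{iθ})| = 1 = |Φ(r₂e^{iθ})|, then r₁ = r₂. -/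
open MeasureTheory Complex Set Metric

/-- The free Lévy–Hinčin form `Φ(z) = α z exp(∫_𝕋 (1+ξz)/(1−ξz) dσ(ξ))`. -/
noncomputable def PhiLH (α : ℂ) (σ : Measure ℂ) (z : ℂ) : ℂ :=
  α * z * Complex.exp (∫ ξ, (1 + ξ * z) / (1 - ξ * z) ∂σ)

lemma aux_g : StrictMonoOn (fun r : ℝ => Real.log r * ((1 + r) / (1 - r))) (Set.Ioo 0 1) := by
  have hd : ∀ r ∈ Set.Ioo (0:ℝ) 1, HasDerivAt (fun r : ℝ => Real.log r * ((1 + r) / (1 - r)))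
      (r⁻¹ * ((1 + r) / (1 - r)) + Real.log r * ((1 * (1 - r) - (1 + r) * (-1)) / (1 - r)^2)) r := by
    intro r hr
    have h0 : r ≠ 0 := hr.1.ne'
    have h1 : 1 - r ≠ 0 := by linarith [hr.2]
    exact (Real.hasDerivAt_log h0).mul
      (((hasDerivAt_id r).const_add 1).div ((hasDerivAt_id r).const_sub 1) h1)
  apply strictMonoOn_of_deriv_pos (convex_Ioo 0 1)
  · intro r hr
    exact (hd r hr).continuousAt.continuousWithinAt
  · intro r hr
    rw [interior_Ioo] at hr
    rw [(hd r hr).deriv]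
    have h0 : 0 < r := hr.1
    have h1 : 0 < 1 - r := by linarith [hr.2]
    have hl : 0 < -Real.log r := by linarith [Real.log_neg hr.1 hr.2]
    have hs := Real.self_lt_sinh_iff.2 hl
    rw [Real.sinh_eq, neg_neg, Real.exp_neg, Real.exp_log h0] at hs
    have : r⁻¹ * ((1 + r) / (1 - r)) + Real.log r * ((1 * (1 - r) - (1 + r) * (-1)) / (1 - r)^2)
      = (r⁻¹ - r + 2 * Real.log r) / (1 - r)^2 := by
      field_simp
      ring
    rw [this]
    apply div_pos _ (by positivity)
    linarith

lemma aux_re (r : ℝ) (hr : r ∈ Set.Ioo (0:ℝ) 1) (u : ℂ) (hu : ‖u‖ = 1) :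
    ((1 + r * u) / (1 - r * u)).re = (1 - r^2) / (1 + r^2 - 2 * r * u.re) := by
  have h2 : u.re * u.re + u.im * u.im = 1 := by
    rw [← Complex.normSq_apply, Complex.normSq_eq_norm_sq, hu]; norm_num
  have hn : Complex.normSq (1 - r * u) = 1 + r^2 - 2 * r * u.re := by
    rw [Complex.normSq_apply]
    simp
    linear_combination r^2 * h2
  rw [Complex.div_re, hn, ← add_div]
  congr 1
  simp
  linear_combination (-r^2) * h2

lemma aux_den (r : ℝ) (hr : r ∈ Set.Ioo (0:ℝ) 1) (c : ℝ) (hc : c ≤ 1) :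
    0 < 1 + r^2 - 2 * r * c := by
  nlinarith [hr.1, hr.2, mul_le_mul_of_nonneg_left hc hr.1.le, sq_pos_of_pos (sub_pos.2 hr.2)]

lemma aux_mono (r s : ℝ) (hr : r ∈ Set.Ioo (0:ℝ) 1) (hs : s ∈ Set.Ioo (0:ℝ) 1) (hrs : r ≤ s)
    (c : ℝ) (hc : c ≤ 1) (hc' : -1 ≤ c) :
    (1 + r) / (1 - r) * ((1 - r^2) / (1 + r^2 - 2 * r * c)) ≤
    (1 + s) / (1 - s) * ((1 - s^2) / (1 + s^2 - 2 * s * c)) := by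
  have key : ∀ t ∈ Set.Ioo (0:ℝ) 1, (1 + t) / (1 - t) * ((1 - t^2) / (1 + t^2 - 2 * t * c))
      = (1 + t)^2 / (1 + t^2 - 2 * t * c) := by
    intro t ht
    have h1 : 1 - t ≠ 0 := by linarith [ht.2]
    have := (aux_den t ht c hc).ne'
    field_simp
    ring
  rw [key r hr, key s hs, div_le_div_iff₀ (aux_den r hr c hc) (aux_den s hs c hc)]
  have h1 : 0 ≤ (1 + c) * (s - r) := mul_nonneg (by linarith) (by linarith)
  have h2 : 0 ≤ 1 - r * s := by nlinarith [hr.1, hr.2, hs.1, hs.2]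
  nlinarith [mul_nonneg h1 h2]

lemma aux_ae (σ : Measure ℂ) (hsupp : σ (sphere (0 : ℂ) 1)ᶜ = 0) : ∀ᵐ ξ ∂σ, ‖ξ‖ = 1 := by
  have : ∀ᵐ ξ ∂σ, ξ ∈ sphere (0 : ℂ) 1 := hsupp
  filter_upwards [this] with ξ h
  simpa using h

lemma aux_int_s10 (σ : Measure ℂ) [IsFiniteMeasure σ] (hsupp : σ (sphere (0 : ℂ) 1)ᶜ = 0)
    (z : ℂ) (hz : ‖z‖ < 1) : Integrable (fun ξ => (1 + ξ * z) / (1 - ξ * z)) σ := by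
  apply Integrable.of_bound (C := 2 / (1 - ‖z‖))
  · exact Measurable.aestronglyMeasurable (by fun_prop)
  · filter_upwards [aux_ae σ hsupp] with ξ hξ
    rw [norm_div]
    have e : ‖ξ * z‖ = ‖z‖ := by rw [norm_mul, hξ, one_mul]
    have a := norm_add_le 1 (ξ * z)
    have b := norm_sub_norm_le 1 (ξ * z)
    rw [e, norm_one] at a b
    exact div_le_div₀ (by norm_num) (by linarith) (by linarith) b

lemma aux_log_s10 (α : ℂ) (hα : ‖α‖ = 1) (σ : Measure ℂ) [IsFiniteMeasure σ]
    (hsupp : σ (sphere (0 : ℂ) 1)ᶜ = 0) (θ r : ℝ) (hr : r ∈ Set.Ioo (0 : ℝ) 1)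
    (h : ‖PhiLH α σ ((r : ℂ) * Complex.exp (θ * Complex.I))‖ = 1) :
    ∃ f : ℂ → ℝ, (∀ᵐ ξ ∂σ, f ξ = (1 - r^2) /
      (1 + r^2 - 2 * r * (ξ * Complex.exp (θ * Complex.I)).re)) ∧ Integrable f σ ∧
      ∫ ξ, f ξ ∂σ = -Real.log r := by
  have hz : ‖(r : ℂ) * Complex.exp (θ * Complex.I)‖ = r := by
    rw [norm_mul, Complex.norm_exp_ofReal_mul_I, mul_one, Complex.norm_real,
      Real.norm_of_nonneg hr.1.le]
  have hi := aux_int_s10 σ hsupp _ (hz.trans_lt hr.2)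
  refine ⟨_, ?_, hi.re, ?_⟩
  · filter_upwards [aux_ae σ hsupp] with ξ hξ
    rw [← aux_re r hr _ (by rw [norm_mul, Complex.norm_exp_ofReal_mul_I, hξ, mul_one])]
    simp only [RCLike.re_eq_complex_re]
    congr 3 <;> ring
  · have e := integral_re hi
    rw [e]
    unfold PhiLH at h
    rw [norm_mul, norm_mul, hα, hz, one_mul, Complex.norm_exp] at h
    have h' := congrArg Real.log h
    rw [Real.log_mul hr.1.ne' (Real.exp_pos _).ne', Real.log_exp, Real.log_one] at h'
    simp only [RCLike.re_eq_complex_re]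
    linarith

lemma aux_lt (α : ℂ) (hα : ‖α‖ = 1)
    (σ : Measure ℂ) [IsFiniteMeasure σ]
    (hsupp : σ (sphere (0 : ℂ) 1)ᶜ = 0) (θ : ℝ)
    (r₁ r₂ : ℝ) (hr₁ : r₁ ∈ Set.Ioo (0 : ℝ) 1) (hr₂ : r₂ ∈ Set.Ioo (0 : ℝ) 1)
    (h1 : ‖PhiLH α σ ((r₁ : ℂ) * Complex.exp (θ * Complex.I))‖ = 1)
    (h2 : ‖PhiLH α σ ((r₂ : ℂ) * Complex.exp (θ * Complex.I))‖ = 1) :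
    ¬ r₁ < r₂ := by
  intro hlt
  obtain ⟨f, hf, fi, fe⟩ := aux_log_s10 α hα σ hsupp θ r₁ hr₁ h1
  obtain ⟨g, hg, gi, ge⟩ := aux_log_s10 α hα σ hsupp θ r₂ hr₂ h2
  have hm : ∫ ξ, (1 + r₁) / (1 - r₁) * f ξ ∂σ ≤ ∫ ξ, (1 + r₂) / (1 - r₂) * g ξ ∂σ := by
    apply integral_mono_ae (fi.const_mul _) (gi.const_mul _)
    filter_upwards [hf, hg, aux_ae σ hsupp] with ξ h3 h4 h5
    have hn : ‖ξ * Complex.exp (θ * Complex.I)‖ = 1 := by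
      rw [norm_mul, Complex.norm_exp_ofReal_mul_I, h5, mul_one]
    have hc := Complex.abs_re_le_norm (ξ * Complex.exp (θ * Complex.I))
    rw [hn, abs_le] at hc
    simp only [h3, h4]
    exact aux_mono r₁ r₂ hr₁ hr₂ hlt.le _ hc.2 hc.1
  rw [integral_const_mul, integral_const_mul, fe, ge] at hm
  have := aux_g hr₁ hr₂ hlt
  simp only at this
  linarith

/-- Proposition 2.4: for the free Lévy–Hinčin form `Φ` associated with `|α| = 1` and a
nonzero finite Borel measure `σ` on the unit circle, for every `θ ∈ ℝ` there is at most
one `r ∈ (0,1)` with `|Φ(re^{iθ})| = 1`. -/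
theorem radial_boundary_unique (α : ℂ) (hα : ‖α‖ = 1)
    (σ : Measure ℂ) [IsFiniteMeasure σ] (hσ : σ ≠ 0)
    (hsupp : σ (sphere (0 : ℂ) 1)ᶜ = 0) (θ : ℝ)
    (r₁ r₂ : ℝ) (hr₁ : r₁ ∈ Set.Ioo (0 : ℝ) 1) (hr₂ : r₂ ∈ Set.Ioo (0 : ℝ) 1)
    (h1 : ‖PhiLH α σ ((r₁ : ℂ) * Complex.exp (θ * Complex.I))‖ = 1)
    (h2 : ‖PhiLH α σ ((r₂ : ℂ) * Complex.exp (θ * Complex.I))‖ = 1) :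
    r₁ = r₂ := by
  exact le_antisymm (not_lt.1 (aux_lt α hα σ hsupp θ r₂ r₁ hr₂ hr₁ h2 h1))
    (not_lt.1 (aux_lt α hα σ hsupp θ r₁ r₂ hr₁ hr₂ h1 h2))
end
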